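/- arXiv:math/0601285 — 2 statements merged into one kernel-verified Lean document; each statement's English description precedes it below -/
import Mathlib

section
/- Let f : S² → ℝ be a smooth function with ∫_{S²} f dv_{g₀} = 0 and let g_t = (1+tf)²·g₀ be defined for |t| < a. If ∫_{γ(u)} f dl = 0 for every u ∈ S², then for every t with |t| < a, every great circle has g_t-length exactly 2π, and there exists a closed geodesic of g_t of length at most 2π; in particular sys(S², g_t) ≤ 2π for all |t| < a. -/
open scoped Manifold RealInnerProductSpace
open MeasureTheory Real

noncomputable section

/-- The ambient Euclidean space `ℝ³`. -/
abbrev E3 : Type := EuclideanSpace ℝ (Fin 3)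

instance : Fact (Module.finrank ℝ E3 = 2 + 1) := ⟨finrank_euclideanSpace_fin⟩

/-- The unit 2-sphere `S² ⊂ ℝ³`. -/
abbrev Sph : Type := Metric.sphere (0 : E3) 1

/-- A function on the sphere is smooth (as a map of smooth manifolds). -/
def SmoothSph (f : Sph → ℝ) : Prop := ContMDiff (𝓡 2) 𝓘(ℝ, ℝ) (⊤ : ℕ∞) f

/-- The round metric tensor `g₀` on `S²` (restriction of the ambient inner product). -/
def g0 : Sph → E3 → E3 → ℝ := fun _ u v => ⟪u, v⟫

/-- The conformal metric tensor `Φ · g₀` (length element `√Φ` times that of `g₀`). -/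
def confMetric (Φ : Sph → ℝ) : Sph → E3 → E3 → ℝ := fun x u v => Φ x * ⟪u, v⟫

/-- Velocity of a curve on the sphere, as a vector of the ambient `ℝ³`. -/
def cvel (c : ℝ → Sph) (t : ℝ) : E3 := deriv (fun s => (c s : E3)) t

/-- Speed of a curve at time `t` with respect to a metric tensor `g`. -/
def gspeed (g : Sph → E3 → E3 → ℝ) (c : ℝ → Sph) (t : ℝ) : ℝ :=
  Real.sqrt (g (c t) (cvel c t) (cvel c t))

/-- Length of the curve `c` over `[a, b]` with respect to `g`. -/
def glength (g : Sph → E3 → E3 → ℝ) (c : ℝ → Sph) (a b : ℝ) : ℝ :=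
  ∫ t in a..b, gspeed g c t

/-- A `C¹` curve on the sphere. -/
def IsC1Curve (c : ℝ → Sph) : Prop := ContDiff ℝ 1 (fun t => (c t : E3))

/-- The Riemannian distance associated with the metric tensor `g`: the infimum of
lengths of `C¹` curves joining the two points. -/
def gdist (g : Sph → E3 → E3 → ℝ) (x y : Sph) : ℝ :=
  sInf {L | ∃ c : ℝ → Sph, IsC1Curve c ∧ c 0 = x ∧ c 1 = y ∧ L = glength g c 0 1}

/-- A (complete, unit-speed) geodesic of `g`: a `C¹` curve with unit speed which is
locally distance-minimizing. -/
def IsGeodesic (g : Sph → E3 → E3 → ℝ) (c : ℝ → Sph) : Prop :=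
  IsC1Curve c ∧ (∀ t, gspeed g c t = 1) ∧
    ∀ t : ℝ, ∃ ε > 0, ∀ s₁ s₂ : ℝ, t - ε ≤ s₁ → s₁ ≤ s₂ → s₂ ≤ t + ε →
      gdist g (c s₁) (c s₂) = s₂ - s₁

/-- A closed geodesic of length `L` (not reduced to a point): a unit-speed geodesic,
periodic with period `L > 0`. -/
def IsClosedGeodesic (g : Sph → E3 → E3 → ℝ) (c : ℝ → Sph) (L : ℝ) : Prop :=
  0 < L ∧ Function.Periodic c L ∧ IsGeodesic g c

/-- The systole: the smallest length of a closed geodesic not reduced to a point. -/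
def systole (g : Sph → E3 → E3 → ℝ) : ℝ :=
  sInf {L | ∃ c : ℝ → Sph, IsClosedGeodesic g c L}

/-- Orthogonal projection of an ambient vector onto the tangent plane at `x ∈ S²`. -/
def tproj (x : Sph) (v : E3) : E3 := v - ⟪(x : E3), v⟫ • (x : E3)

/-- Auxiliary extension of `g` to all of `ℝ³`, equal to `g` on the tangent plane and to the
ambient inner product in the normal direction; its determinant computes the area density. -/
def ghat (g : Sph → E3 → E3 → ℝ) (x : Sph) (u v : E3) : ℝ :=
  g x (tproj x u) (tproj x v) + ⟪(x : E3), u⟫ * ⟪(x : E3), v⟫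

/-- The Riemannian area density of `g` with respect to the round metric:
`√det` of `g` on the tangent plane. -/
def areaDensity (g : Sph → E3 → E3 → ℝ) (x : Sph) : ℝ :=
  Real.sqrt (Matrix.det (Matrix.of fun i j : Fin 3 =>
    ghat g x (EuclideanSpace.single i 1) (EuclideanSpace.single j 1)))

/-- The Riemannian area of `(S², g)`, computed against the round area measure
(the 2-dimensional Hausdorff measure of the sphere). -/
def garea (g : Sph → E3 → E3 → ℝ) : ℝ :=
  ∫ x, areaDensity g x ∂(μH[2] : Measure Sph)

/-- The systolic area `𝔖(S², g) = Area(S², g) / sys(S², g)²`. -/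
def systolicArea (g : Sph → E3 → E3 → ℝ) : ℝ := garea g / (systole g) ^ 2

/-- `g` is a smooth Riemannian metric on `S²` (a smooth field of symmetric bilinear forms,
positive definite on tangent planes). -/
structure IsRiemannMetricS2 (g : Sph → E3 → E3 → ℝ) : Prop where
  symm : ∀ x u v, g x u v = g x v u
  add_left : ∀ x u v w, g x (u + v) w = g x u w + g x v w
  smul_left : ∀ (x : Sph) (r : ℝ) u v, g x (r • u) v = r * g x u v
  posdef : ∀ (x : Sph) (v : E3), ⟪(x : E3), v⟫ = 0 → v ≠ 0 → 0 < g x v v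
  smooth : ∀ u v : E3, ContMDiff (𝓡 2) 𝓘(ℝ, ℝ) (⊤ : ℕ∞) (fun x => g x u v)

/-- The circle `γ(u, s)`: intersection of `S²` with the plane orthogonal to `u` at distance `s`
from the origin (`s = 0` gives the great circle `γ(u)`). -/
def circleAt (u : Sph) (s : ℝ) : Set Sph := {x | ⟪(u : E3), (x : E3)⟫ = s}

/-- The great circle `γ(u)` orthogonal to `u`. -/
def greatCircle (u : Sph) : Set Sph := circleAt u 0

/-- The integral `∫_{γ(u)} h dl` of `h` along the great circle `γ(u)` with respect to
`g₀`-arc length (1-dimensional Hausdorff measure). -/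
def lineInt (h : Sph → ℝ) (u : Sph) : ℝ :=
  ∫ x in greatCircle u, h x ∂(μH[1] : Measure Sph)

/-- Length of the circle `γ(u, s)` with respect to the conformal metric `Φ · g₀`. -/
def circleLen (Φ : Sph → ℝ) (u : Sph) (s : ℝ) : ℝ :=
  ∫ x in circleAt u s, Real.sqrt (Φ x) ∂(μH[1] : Measure Sph)

/-- The antipodal map of `S²`. -/
def antip (x : Sph) : Sph :=
  ⟨-(x : E3), by
    rw [mem_sphere_zero_iff_norm, norm_neg, ← mem_sphere_zero_iff_norm]; exact x.2⟩

/-- A fundamental domain for the antipodal action on `S²` (an open hemisphere together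
with half of its boundary great circle): `ℝP²` is obtained by gluing. -/
def hemiDomain : Set Sph :=
  {x | 0 < (x : E3) 2 ∨ ((x : E3) 2 = 0 ∧ (0 < (x : E3) 1 ∨ ((x : E3) 1 = 0 ∧ 0 < (x : E3) 0)))}

/-- The area of `(ℝP², g̃)`, where `g̃` is induced by an antipodally invariant metric `g` on `S²`:
the area of a fundamental domain of the antipodal action. -/
def areaRP2 (g : Sph → E3 → E3 → ℝ) : ℝ :=
  ∫ x in hemiDomain, areaDensity g x ∂(μH[2] : Measure Sph)

/-- The systole of `(ℝP², g̃)`: the smallest length of a noncontractible closed curve of `ℝP²`,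
i.e. the infimum of `g`-lengths of curves of `S²` joining a point to its antipode
(such curves are exactly the lifts of noncontractible loops). -/
def sysRP2 (g : Sph → E3 → E3 → ℝ) : ℝ :=
  sInf {L | ∃ c : ℝ → Sph, IsC1Curve c ∧ c 1 = antip (c 0) ∧ L = glength g c 0 1}

/-- The systolic area of `(ℝP², g̃)`. -/
def systolicAreaRP2 (g : Sph → E3 → E3 → ℝ) : ℝ := areaRP2 g / (sysRP2 g) ^ 2

/-!
The great circles through the two poles form a path of closed curves, from a meridian to the same
meridian traversed backwards, and all of them have length `ℓ = 2π` for the metric `φ² g₀` with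
`φ = 1 + t f`. Approximate them by closed `N`-gons and lift parallel transport along a polygon to
unit quaternions. The sign ambiguity of a square root of the complex holonomy gives a parity for
paths of polygons ending at the reversal of their initial polygon: it is a homotopy invariant, the
path of meridians is odd, and a path of polygons with short edges and small energy, being
contractible to constant polygons, is not. Hence steepest descent of a discrete energy, applied to
the path of meridians, cannot push the energy below a positive threshold, and produces a critical
polygon with energy between this threshold and that of the meridians.

As `N → ∞`, the critical polygons converge along an ultrafilter to a periodic solution of the
geodesic equation, of length at most `ℓ` and not constant. A calibration shows that solutions of the
geodesic equation locally minimize length, so that the limit is a closed geodesic in the metric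
sense.
-/

section SquareRootLift

lemma exists_continuous_sq_eq {A : Type*} [TopologicalSpace A] [SimplyConnectedSpace A]
    [LocallyPathConnectedSpace A] {Z : A → ℂ} (hZ : Continuous Z) (hZ0 : ∀ a, Z a ≠ 0) :
    ∃ Y : A → ℂ, Continuous Y ∧ ∀ a, Y a ^ 2 = Z a := by
  obtain ⟨a₀⟩ : Nonempty A := inferInstance
  obtain ⟨y₀, hy₀⟩ := IsAlgClosed.exists_pow_nat_eq (Z a₀) (n := 2) (by norm_num)
  have hy₀' : y₀ ≠ 0 := by
    rintro rfl
    exact hZ0 a₀ (by simp [← hy₀])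
  let f : C(A, {z : ℂ // z ≠ 0}) := ⟨fun a => ⟨Z a, hZ0 a⟩, by fun_prop⟩
  obtain ⟨Y, ⟨-, hY⟩, -⟩ :=
    (isCoveringMap_npow (𝕜 := ℂ) 2 (by norm_num)).existsUnique_continuousMap_lifts f a₀
      ⟨y₀, hy₀'⟩ (Subtype.ext (by simp [f, hy₀]))
  exact ⟨fun a => (Y a).1, by fun_prop, fun a => congrArg Subtype.val (congrFun hY a)⟩

lemma mul_eq_mul_of_sq_eq_sq {A : Type*} [TopologicalSpace A] [PreconnectedSpace A]
    {Y Y' : A → ℂ} (hY : Continuous Y) (hY' : Continuous Y') (h : ∀ a, Y a ^ 2 = Y' a ^ 2)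
    (h0 : ∀ a, Y' a ≠ 0) (a b : A) : Y a * Y b = Y' a * Y' b := by
  rcases isPreconnected_univ.eq_or_eq_neg_of_sq_eq hY.continuousOn hY'.continuousOn
    (fun a _ => h a) (fun {a} _ => h0 a) with heq | heq <;>
  simp [heq (Set.mem_univ a), heq (Set.mem_univ b)]

lemma neg_of_neg_of_forall_ne_zero {A : Type*} [TopologicalSpace A] [PreconnectedSpace A]
    {g : A → ℝ} (hg : Continuous g) (h0 : ∀ a, g a ≠ 0) {a : A} (ha : g a < 0) (b : A) :
    g b < 0 := by
  by_contra! hb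
  obtain ⟨c, hc⟩ := mem_range_of_exists_le_of_exists_ge hg ⟨a, ha.le⟩ ⟨b, hb⟩
  exact h0 c hc

end SquareRootLift

/-! ### Parity of paths of spherical polygons -/

section Holonomy

open scoped Quaternion

/-- Vectors of `ℝ³` as purely imaginary quaternions. -/
def imQuaternion : E3 →ₗ[ℝ] ℍ[ℝ] where
  toFun v := ⟨0, v 0, v 1, v 2⟩
  map_add' u v := by
    apply Quaternion.ext
    exacts [(add_zero 0).symm, rfl, rfl, rfl]
  map_smul' r v := by
    apply Quaternion.ext
    exacts [(mul_zero r).symm, rfl, rfl, rfl]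

@[simp] lemma re_imQuaternion (v : E3) : (imQuaternion v).re = 0 := rfl
@[simp] lemma imI_imQuaternion (v : E3) : (imQuaternion v).imI = v 0 := rfl
@[simp] lemma imJ_imQuaternion (v : E3) : (imQuaternion v).imJ = v 1 := rfl
@[simp] lemma imK_imQuaternion (v : E3) : (imQuaternion v).imK = v 2 := rfl

@[fun_prop]
lemma continuous_imQuaternion : Continuous imQuaternion :=
  LinearMap.continuous_of_finiteDimensional _

lemma imQuaternion_injective : Function.Injective imQuaternion := fun u v h => by
  ext i
  fin_cases i
  exacts [congrArg QuaternionAlgebra.imI h, congrArg QuaternionAlgebra.imJ h,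
    congrArg QuaternionAlgebra.imK h]

lemma star_imQuaternion (v : E3) : star (imQuaternion v) = -imQuaternion v := by
  ext <;> simp

lemma sum_sq_of_norm_eq_one {a : E3} (ha : ‖a‖ = 1) : a 0 ^ 2 + a 1 ^ 2 + a 2 ^ 2 = 1 := by
  simpa [ha, Fin.sum_univ_three] using (EuclideanSpace.real_norm_sq_eq a).symm

lemma imQuaternion_mul_self {a : E3} (ha : ‖a‖ = 1) :
    imQuaternion a * imQuaternion a = -1 := by
  have := sum_sq_of_norm_eq_one ha
  ext <;> simp
  all_goals linarith

/-- A quaternion commuting with a unit imaginary quaternion `a` lies in the copy `ℝ + ℝ a`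
of `ℂ`. -/
lemma eq_re_add_inner_smul_of_commute {Q : ℍ[ℝ]} {a : E3} (ha : ‖a‖ = 1)
    (h : Commute Q (imQuaternion a)) :
    Q = (Q.re : ℍ[ℝ]) + ⟪Q, imQuaternion a⟫ • imQuaternion a := by
  have hI := congrArg QuaternionAlgebra.imI h.eq
  have hJ := congrArg QuaternionAlgebra.imJ h.eq
  have hK := congrArg QuaternionAlgebra.imK h.eq
  simp only [Quaternion.imI_mul, Quaternion.imJ_mul, Quaternion.imK_mul, re_imQuaternion,
    imI_imQuaternion, imJ_imQuaternion, imK_imQuaternion] at hI hJ hK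
  have hunit := sum_sq_of_norm_eq_one ha
  ext <;> simp [Quaternion.inner_def]
  · linear_combination (-Q.imI) * hunit + a 1 * hK / 2 - a 2 * hJ / 2
  · linear_combination (-Q.imJ) * hunit + a 2 * hI / 2 - a 0 * hK / 2
  · linear_combination (-Q.imK) * hunit + a 0 * hJ / 2 - a 1 * hI / 2

/-- The quaternion `1 - b a`; for unit vectors `a`, `b` with `b ≠ -a`, it is a positive multiple
of the unit quaternion rotating `a` to `b` along the short great circle arc. -/
def transport (a b : E3) : ℍ[ℝ] := 1 - imQuaternion b * imQuaternion a

lemma transport_mul_imQuaternion {a b : E3} (ha : ‖a‖ = 1) (hb : ‖b‖ = 1) :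
    transport a b * imQuaternion a = imQuaternion b * transport a b := by
  rw [transport, sub_mul, mul_sub, mul_assoc, imQuaternion_mul_self ha, ← mul_assoc,
    imQuaternion_mul_self hb]
  simp [add_comm]

lemma transport_self {a : E3} (ha : ‖a‖ = 1) : transport a a = 2 := by
  rw [transport, imQuaternion_mul_self ha]
  norm_num

lemma star_transport (a b : E3) : star (transport a b) = transport b a := by
  simp [transport, star_imQuaternion]

lemma transport_ne_zero {a b : E3} (ha : ‖a‖ = 1) (hab : b ≠ -a) : transport a b ≠ 0 := by
  intro h
  have hba : imQuaternion b * imQuaternion a = 1 := (sub_eq_zero.mp h).symm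
  have : imQuaternion b * (imQuaternion a * imQuaternion a) = imQuaternion a := by
    rw [← mul_assoc, hba, one_mul]
  rw [imQuaternion_mul_self ha, mul_neg_one, ← map_neg] at this
  exact hab (by rw [← imQuaternion_injective this, neg_neg])

/-- The unnormalized holonomy quaternion of the broken geodesic `x 0, x 1, …, x n`. -/
def holonomy (x : ℕ → E3) : ℕ → ℍ[ℝ]
  | 0 => 1
  | n + 1 => transport (x n) (x (n + 1)) * holonomy x n

lemma holonomy_mul_imQuaternion {x : ℕ → E3} (hx : ∀ n, ‖x n‖ = 1) (n : ℕ) :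
    holonomy x n * imQuaternion (x 0) = imQuaternion (x n) * holonomy x n := by
  induction n with
  | zero => simp [holonomy]
  | succ n ih =>
    rw [holonomy, mul_assoc, ih, ← mul_assoc, transport_mul_imQuaternion (hx n) (hx _), mul_assoc]

lemma holonomy_ne_zero {x : ℕ → E3} (hx : ∀ n, ‖x n‖ = 1) (hx' : ∀ n, x (n + 1) ≠ -x n) (n : ℕ) :
    holonomy x n ≠ 0 := by
  induction n with
  | zero => simp [holonomy]
  | succ n ih => exact mul_ne_zero (transport_ne_zero (hx n) (hx' n)) ih

lemma holonomy_succ' (x : ℕ → E3) (n : ℕ) :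
    holonomy x (n + 1) = holonomy (fun k => x (k + 1)) n * transport (x 0) (x 1) := by
  induction n with
  | zero => simp [holonomy]
  | succ n ih => rw [holonomy, ih, holonomy, mul_assoc]

lemma holonomy_reverse {x y : ℕ → E3} {n : ℕ} (h : ∀ k ≤ n, y k = x (n - k)) :
    holonomy y n = star (holonomy x n) := by
  induction n generalizing y with
  | zero => simp [holonomy]
  | succ n ih =>
    have hy0 : y 0 = x (n + 1) := h 0 (by lia)
    have hy1 : y 1 = x n := h 1 (by lia)
    rw [holonomy_succ', holonomy, star_mul, star_transport, hy0, hy1,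
      ih fun k hk => by rw [h (k + 1) (by lia), Nat.add_sub_add_right]]

lemma holonomy_const {a : E3} (ha : ‖a‖ = 1) (n : ℕ) : holonomy (fun _ => a) n = 2 ^ n := by
  induction n with
  | zero => rfl
  | succ n ih => rw [holonomy, ih, transport_self ha, pow_succ']

lemma continuous_holonomy (n : ℕ) : Continuous fun x => holonomy x n := by
  induction n with
  | zero => exact continuous_const
  | succ n ih =>
    simp only [holonomy, transport]
    fun_prop

end Holonomy

section Parity

open scoped Quaternion

variable {N : ℕ}

/-- Closed polygons with vertices on the unit sphere of `E`, indexed cyclically, whose edges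
determine short great circle arcs because consecutive vertices are not antipodal. -/
structure IsSphericalPolygon {E : Type*} [NormedAddCommGroup E] (x : ZMod N → E) : Prop where
  norm_eq_one : ∀ i, ‖x i‖ = 1
  ne_neg : ∀ i, x (i + 1) ≠ -x i

/-- The polygon `x` traversed backwards from the same initial vertex. -/
def reversePolygon {E : Type*} (x : ZMod N → E) : ZMod N → E := fun i => x (-i)

/-- The holonomy quaternion of a closed polygon commutes with its initial vertex, so it has the
form `α + β x₀`; it is recorded here as the complex number `α + β i`. -/
def complexHolonomy (x : ZMod N → E3) : ℂ :=
  ⟨(holonomy (fun n => x n) N).re, ⟪holonomy (fun n => x n) N, imQuaternion (x 0)⟫⟩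

lemma continuous_complexHolonomy : Continuous (complexHolonomy : (ZMod N → E3) → ℂ) := by
  have hcont : Continuous fun x : ZMod N → E3 => holonomy (fun n => x n) N :=
    (continuous_holonomy N).comp (by fun_prop)
  have hre := Quaternion.continuous_re.comp hcont
  have him : Continuous fun x : ZMod N → E3 =>
    ⟪holonomy (fun n => x n) N, imQuaternion (x 0)⟫ := hcont.inner (by fun_prop)
  exact Complex.equivRealProdCLM.symm.continuous.comp (hre.prodMk him)

lemma IsSphericalPolygon.complexHolonomy_ne_zero {x : ZMod N → E3} (hx : IsSphericalPolygon x) :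
    complexHolonomy x ≠ 0 := by
  intro h
  have hcomm : Commute (holonomy (fun n => x n) N) (imQuaternion (x 0)) := by
    simpa [Commute, SemiconjBy] using
      holonomy_mul_imQuaternion (x := fun n => x n) (fun n => hx.norm_eq_one _) N
  refine holonomy_ne_zero (x := fun n => x n) (fun n => hx.norm_eq_one _)
    (fun n => by simpa using hx.ne_neg n) N ?_
  rw [eq_re_add_inner_smul_of_commute (hx.norm_eq_one 0) hcomm]
  simp [show (holonomy (fun n => x n) N).re = 0 from congrArg Complex.re h,
    show ⟪holonomy (fun n => x n) N, imQuaternion (x 0)⟫ = 0 from congrArg Complex.im h]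

lemma complexHolonomy_reversePolygon (x : ZMod N → E3) :
    complexHolonomy (reversePolygon x) = starRingEnd ℂ (complexHolonomy x) := by
  have h : holonomy (fun n => reversePolygon x n) N = star (holonomy (fun n => x n) N) :=
    holonomy_reverse fun k hk => by simp [reversePolygon, Nat.cast_sub hk]
  apply Complex.ext
  · exact (congrArg QuaternionAlgebra.re h).trans (Quaternion.re_star _)
  · change ⟪holonomy (fun n => reversePolygon x n) N, imQuaternion (x (-0))⟫ =
      -⟪holonomy (fun n => x n) N, imQuaternion (x 0)⟫
    rw [h, neg_zero]
    simp [Quaternion.inner_def]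
    ring

lemma complexHolonomy_const {a : E3} (ha : ‖a‖ = 1) :
    complexHolonomy (fun _ : ZMod N => a) = 2 ^ N := by
  have hℍ : (2 : ℍ[ℝ]) ^ N = ((2 ^ N : ℝ) : ℍ[ℝ]) := by norm_cast
  have hℂ : (2 : ℂ) ^ N = ((2 ^ N : ℝ) : ℂ) := by norm_cast
  rw [complexHolonomy, holonomy_const ha, hℍ, hℂ]
  apply Complex.ext <;>
  simp only [Quaternion.inner_def, Quaternion.coe_mul_eq_smul, Quaternion.re_smul,
    Quaternion.re_coe, Complex.ofReal_re, Complex.ofReal_im, Quaternion.re_star,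
    re_imQuaternion, smul_zero]

/-- Let `p` be a path of polygons such that `p π` is `p 0` reversed. The complex holonomies at
the two ends are conjugate, so for a continuous square root `Y` of the holonomy along the path
the product `Y 0 * Y π` is plus or minus their modulus; the path is odd if it is negative.
This is the homotopy invariant that keeps a sweepout from being contracted. -/
def IsOddPath (p : ℝ → ZMod N → E3) : Prop :=
  ∃ Y : ℝ → ℂ, Continuous Y ∧ (∀ r, Y r ^ 2 = complexHolonomy (p r)) ∧ (Y 0 * Y π).re < 0

lemma IsOddPath.homotopy {H : ℝ → unitInterval → ZMod N → E3}
    (hH : Continuous fun z : ℝ × unitInterval => H z.1 z.2)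
    (hpoly : ∀ r s, IsSphericalPolygon (H r s))
    (hrev : ∀ s, H π s = reversePolygon (H 0 s))
    (h0 : IsOddPath fun r => H r 0) : IsOddPath fun r => H r 1 := by
  have hne : ∀ r s, complexHolonomy (H r s) ≠ 0 := fun r s => (hpoly r s).complexHolonomy_ne_zero
  have hH' : Continuous fun z : ℝ × ℝ => H z.1 (Set.projIcc 0 1 zero_le_one z.2) :=
    hH.comp (f := fun z : ℝ × ℝ => (z.1, Set.projIcc 0 1 zero_le_one z.2))
      (continuous_fst.prodMk (continuous_projIcc.comp continuous_snd))
  obtain ⟨Y, hY, hYsq⟩ :=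
    exists_continuous_sq_eq (continuous_complexHolonomy.comp hH') fun z => hne z.1 _
  replace hYsq (r : ℝ) (s : unitInterval) : Y (r, s) ^ 2 = complexHolonomy (H r s) := by
    simpa using hYsq (r, s)
  have hreal : ∀ s : unitInterval, (Y (0, s) * Y (π, s)).re ≠ 0 := fun s hs => by
    have hsq : (Y (0, s) * Y (π, s)) ^ 2 = (Complex.normSq (complexHolonomy (H 0 s)) : ℂ) := by
      rw [mul_pow, hYsq, hYsq, hrev, complexHolonomy_reversePolygon, Complex.mul_conj]
    have hre := congrArg Complex.re hsq
    simp only [pow_two, Complex.mul_re (Y (0, s) * Y (π, s)), hs, Complex.ofReal_re] at hre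
    nlinarith [Complex.normSq_pos.mpr (hne 0 s), mul_self_nonneg (Y (0, s) * Y (π, s)).im]
  have hcont : Continuous fun s : unitInterval => (Y (0, s) * Y (π, s)).re :=
    Complex.continuous_re.comp (by fun_prop)
  obtain ⟨Y', hY', hYsq', hneg⟩ := h0
  refine ⟨fun r => Y (r, 1), by fun_prop, fun r => hYsq r 1,
    neg_of_neg_of_forall_ne_zero hcont hreal (a := 0) ?_ 1⟩
  have hYsq₀ (r : ℝ) : Y (r, 0) ^ 2 = complexHolonomy (H r 0) := hYsq r 0
  have hprod := mul_eq_mul_of_sq_eq_sq hY' (hY.comp (Continuous.prodMk_left 0))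
    (fun r => (hYsq' r).trans (hYsq₀ r).symm)
    (fun r (h : Y (r, 0) = 0) => hne r 0 (by simp [← hYsq₀, h])) 0 π
  rwa [hprod] at hneg

lemma not_isOddPath_const {p : ℝ → E3} (hp : ∀ r, ‖p r‖ = 1) :
    ¬ IsOddPath fun r => fun _ : ZMod N => p r := by
  rintro ⟨Y, hY, hYsq, hneg⟩
  have hsqrt : (√(2 ^ N) : ℂ) ^ 2 = 2 ^ N := by
    rw [← Complex.ofReal_pow, Real.sq_sqrt (by positivity)]
    norm_num
  have hprod := mul_eq_mul_of_sq_eq_sq hY (continuous_const (y := (√(2 ^ N) : ℂ)))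
    (fun r => by rw [hYsq, complexHolonomy_const (hp r), hsqrt])
    (fun _ => by rw [Complex.ofReal_ne_zero]; positivity) 0 π
  rw [hprod, ← Complex.ofReal_mul, Complex.ofReal_re] at hneg
  exact hneg.not_ge (by positivity)

end Parity

/-! ### Steepest descent on a product of spheres -/

lemma exists_taylor_bound {V : Type*} [NormedAddCommGroup V] [NormedSpace ℝ V] {f : V → ℝ}
    (hf : ContDiff ℝ 2 f) {s : Set V} (hs : IsCompact s) (hconv : Convex ℝ s) :
    ∃ C, 0 ≤ C ∧
      ∀ x ∈ s, ∀ y ∈ s, |f y - f x - fderiv ℝ f x (y - x)| ≤ C * ‖y - x‖ ^ 2 := by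
  have hf' : ContDiff ℝ 1 (fderiv ℝ f) := hf.fderiv_right (by norm_num)
  obtain ⟨C, hC⟩ :=
    (hf'.locallyLipschitz.locallyLipschitzOn (s := s)).exists_lipschitzOnWith_of_compact hs
  refine ⟨C, C.2, fun x hx y hy => ?_⟩
  have hseg := hconv.segment_subset hx hy
  have hbound : ∀ z ∈ segment ℝ x y, ‖fderiv ℝ f z - fderiv ℝ f x‖ ≤ C * ‖y - x‖ := fun z hz => by
    rw [← dist_eq_norm]
    refine (hC.dist_le_mul z (hseg hz) x hx).trans ?_
    rw [dist_eq_norm]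
    gcongr
    exact norm_sub_le_of_mem_segment hz
  have := (convex_segment x y).norm_image_sub_le_of_norm_fderiv_le'
    (fun z _ => hf.contDiffAt.differentiableAt (by norm_num)) hbound
    (left_mem_segment ℝ x y) (right_mem_segment ℝ x y)
  rwa [mul_assoc, ← pow_two] at this

section SphereRetraction

variable {E : Type*} [NormedAddCommGroup E] [InnerProductSpace ℝ E]

/-- The radial retraction of `x + v` to the unit sphere, for a unit vector `x` and a tangent vector
`v ⟂ x`. Writing `√(1 + ‖v‖²)` for the norm of `x + v` makes it continuous everywhere. -/
def sphereRetraction (x v : E) : E := (√(1 + ‖v‖ ^ 2))⁻¹ • (x + v)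

lemma sphereRetraction_zero (x : E) : sphereRetraction x 0 = x := by
  simp [sphereRetraction]

lemma continuous_sphereRetraction {A : Type*} [TopologicalSpace A] {x v : A → E}
    (hx : Continuous x) (hv : Continuous v) :
    Continuous fun a => sphereRetraction (x a) (v a) := by
  refine Continuous.smul (Continuous.inv₀ (by fun_prop) fun a => ?_) (hx.add hv)
  positivity

variable {x v : E}

lemma norm_add_eq_sqrt_of_inner_eq_zero (hx : ‖x‖ = 1) (hxv : ⟪x, v⟫ = 0) :
    ‖x + v‖ = √(1 + ‖v‖ ^ 2) := by
  rw [(norm_add_eq_sqrt_iff_real_inner_eq_zero).2 hxv, hx, mul_one, pow_two]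

lemma norm_sphereRetraction (hx : ‖x‖ = 1) (hxv : ⟪x, v⟫ = 0) : ‖sphereRetraction x v‖ = 1 := by
  have hpos : 0 < √(1 + ‖v‖ ^ 2) := by positivity
  rw [sphereRetraction, norm_smul, norm_add_eq_sqrt_of_inner_eq_zero hx hxv, norm_inv,
    Real.norm_of_nonneg hpos.le, inv_mul_cancel₀ hpos.ne']

lemma norm_sphereRetraction_sub_add_le (hx : ‖x‖ = 1) (hxv : ⟪x, v⟫ = 0) :
    ‖sphereRetraction x v - (x + v)‖ ≤ ‖v‖ ^ 2 / 2 := by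
  have hq : 1 ≤ √(1 + ‖v‖ ^ 2) := Real.one_le_sqrt.2 (by simp)
  have hq' : √(1 + ‖v‖ ^ 2) ≤ 1 + ‖v‖ ^ 2 / 2 := Real.sqrt_one_add_le (by nlinarith [sq_nonneg ‖v‖])
  have heq : sphereRetraction x v - (x + v) = ((√(1 + ‖v‖ ^ 2))⁻¹ - 1) • (x + v) := by
    rw [sphereRetraction, sub_smul, one_smul]
  rw [heq, norm_smul, norm_add_eq_sqrt_of_inner_eq_zero hx hxv, Real.norm_eq_abs, abs_sub_comm,
    abs_of_nonneg (sub_nonneg.2 (inv_le_one_of_one_le₀ hq)), sub_mul,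
    inv_mul_cancel₀ (by positivity)]
  linarith

lemma norm_sphereRetraction_sub_le (hx : ‖x‖ = 1) (hxv : ⟪x, v⟫ = 0) :
    ‖sphereRetraction x v - x‖ ≤ ‖v‖ := by
  have hq : 1 ≤ √(1 + ‖v‖ ^ 2) := Real.one_le_sqrt.2 (by simp)
  have hsq : √(1 + ‖v‖ ^ 2) ^ 2 = 1 + ‖v‖ ^ 2 := Real.sq_sqrt (by positivity)
  have hinner : ⟪sphereRetraction x v, x⟫ = (√(1 + ‖v‖ ^ 2))⁻¹ := by
    rw [sphereRetraction, real_inner_smul_left, inner_add_left, real_inner_self_eq_norm_sq, hx,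
      real_inner_comm, hxv, one_pow, add_zero, mul_one]
  refine abs_le_of_sq_le_sq' ?_ (norm_nonneg v) |>.2
  rw [norm_sub_sq_real, norm_sphereRetraction hx hxv, hx, hinner]
  generalize √(1 + ‖v‖ ^ 2) = q at hq hsq
  have hinv : 2 - q ≤ q⁻¹ := by
    have : q⁻¹ - (2 - q) = (q - 1) ^ 2 / q := by field_simp; ring
    rw [← sub_nonneg, this]
    positivity
  nlinarith [sq_nonneg (q - 1)]

end SphereRetraction

lemma exists_iterate_lt_of_le_sub {X : Type*} [TopologicalSpace X] [T2Space X] {S : Set X}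
    (hS : IsCompact S) {f g : X → ℝ} (hf : ContinuousOn f S) (hg : ContinuousOn g S) {Φ : X → X}
    (hΦ : Set.MapsTo Φ S S) (hg₀ : ∀ x ∈ S, 0 ≤ g x) (hdesc : ∀ x ∈ S, f (Φ x) ≤ f x - g x)
    {b C : ℝ} (hpos : ∀ x ∈ S, b ≤ f x → f x ≤ C → 0 < g x) :
    ∃ k, ∀ x ∈ S, f x ≤ C → f (Φ^[k] x) < b := by
  have hT : IsCompact (S ∩ f ⁻¹' Set.Icc b C) :=
    hS.of_isClosed_subset (hf.preimage_isClosed_of_isClosed hS.isClosed isClosed_Icc)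
      Set.inter_subset_left
  obtain ⟨η, hη, hηg⟩ := hT.exists_forall_le' (hg.mono Set.inter_subset_left)
    (a := 0) fun x hx => hpos x hx.1 hx.2.1 hx.2.2
  obtain ⟨k, hk⟩ := exists_nat_gt ((C - b) / η)
  rw [div_lt_iff₀ hη] at hk
  refine ⟨k, fun x hx hxC => ?_⟩
  have hiter (n : ℕ) : f (Φ^[n] x) < b ∨ f (Φ^[n] x) ≤ C - n * η := by
    induction n with
    | zero => exact .inr (by simpa using hxC)
    | succ n ih =>
      have hmem := hΦ.iterate n hx
      rw [Function.iterate_succ_apply']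
      rcases lt_or_ge (f (Φ^[n] x)) b with hlt | hge
      · exact .inl (by linarith [hdesc _ hmem, hg₀ _ hmem])
      · have hle := ih.resolve_left hge.not_gt
        have hgη := hηg _ ⟨hmem, hge, hle.trans (by nlinarith [n.cast_nonneg (α := ℝ)])⟩
        push_cast
        exact .inr (by linarith [hdesc _ hmem])
  rcases hiter k with h | h <;> linarith

section Descent

variable {ι E : Type*} [NormedAddCommGroup E] [InnerProductSpace ℝ E]
  [FiniteDimensional ℝ E] {f : (ι → E) → ℝ}

open Classical in
/-- The gradient of a function on `ι → E` in the `i`-th variable. -/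
def partialGradient (f : (ι → E) → ℝ) (x : ι → E) (i : ι) : E :=
  (InnerProductSpace.toDual ℝ E).symm
    ((fderiv ℝ f x).comp (ContinuousLinearMap.single ℝ (fun _ => E) i))

/-- The component of the gradient at `x` tangent to the product of the spheres through `x`, for unit
vectors `x i`. -/
def tangentialGradient (f : (ι → E) → ℝ) (x : ι → E) (i : ι) : E :=
  partialGradient f x i - ⟪x i, partialGradient f x i⟫ • x i

/-- A step of length `τ` of steepest descent for `f` on a product of unit spheres. -/
def descentStep (f : (ι → E) → ℝ) (τ : ℝ) (x : ι → E) (i : ι) : E :=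
  sphereRetraction (x i) (-τ • tangentialGradient f x i)

lemma descentStep_zero (x : ι → E) : descentStep f 0 x = x := by
  ext1 i
  rw [descentStep, neg_zero, zero_smul, sphereRetraction_zero]

section UnitVectors

variable {x : ι → E} (hx : ∀ i, ‖x i‖ = 1)
include hx

lemma inner_tangentialGradient (i : ι) : ⟪x i, tangentialGradient f x i⟫ = 0 := by
  rw [tangentialGradient, inner_sub_right, real_inner_smul_right, real_inner_self_eq_norm_sq, hx,
    one_pow, mul_one, sub_self]

lemma inner_partialGradient_tangentialGradient (i : ι) :
    ⟪partialGradient f x i, tangentialGradient f x i⟫ = ‖tangentialGradient f x i‖ ^ 2 := by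
  conv_lhs => rw [← sub_add_cancel (partialGradient f x i) (⟪x i, partialGradient f x i⟫ • x i)]
  rw [inner_add_left, real_inner_smul_left, inner_tangentialGradient hx, mul_zero, add_zero,
    ← real_inner_self_eq_norm_sq]
  rfl

lemma inner_smul_tangentialGradient (τ : ℝ) (i : ι) : ⟪x i, -τ • tangentialGradient f x i⟫ = 0 := by
  rw [real_inner_smul_right, inner_tangentialGradient hx, mul_zero]

lemma norm_descentStep (τ : ℝ) (i : ι) : ‖descentStep f τ x i‖ = 1 :=
  norm_sphereRetraction (hx i) (inner_smul_tangentialGradient hx τ i)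

lemma inner_partialGradient_descentStep_sub_le (τ : ℝ) (i : ι) :
    ⟪partialGradient f x i, descentStep f τ x i - x i⟫ ≤
      (τ ^ 2 * ‖partialGradient f x i‖ / 2 - τ) * ‖tangentialGradient f x i‖ ^ 2 := by
  have horth := inner_smul_tangentialGradient (f := f) hx τ i
  have hsplit : descentStep f τ x i - x i = (descentStep f τ x i -
      (x i + -τ • tangentialGradient f x i)) + -τ • tangentialGradient f x i := by abel
  have herr := (real_inner_le_norm (partialGradient f x i) _).trans
    (mul_le_mul_of_nonneg_left (norm_sphereRetraction_sub_add_le (hx i) horth) (norm_nonneg _))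
  rw [norm_smul, mul_pow, norm_neg, Real.norm_eq_abs, sq_abs] at herr
  rw [hsplit, inner_add_right, real_inner_smul_right,
    inner_partialGradient_tangentialGradient hx]
  unfold descentStep
  linarith

variable [Fintype ι]

lemma norm_descentStep_sub_sq_le (τ : ℝ) :
    ‖descentStep f τ x - x‖ ^ 2 ≤ τ ^ 2 * ∑ i, ‖tangentialGradient f x i‖ ^ 2 := by
  have hi (i : ι) : ‖descentStep f τ x i - x i‖ ^ 2 ≤ τ ^ 2 * ‖tangentialGradient f x i‖ ^ 2 := by
    have := norm_sphereRetraction_sub_le (hx i) (inner_smul_tangentialGradient (f := f) hx τ i)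
    rw [norm_smul, norm_neg, Real.norm_eq_abs] at this
    rw [← sq_abs τ, ← mul_pow]
    exact pow_le_pow_left₀ (norm_nonneg _) this 2
  rw [Finset.mul_sum, ← Real.le_sqrt (norm_nonneg _) (by positivity), pi_norm_le_iff_of_nonneg
    (by positivity)]
  refine fun i => Real.le_sqrt_of_sq_le ((hi i).trans ?_)
  exact Finset.single_le_sum (f := fun i => τ ^ 2 * ‖tangentialGradient f x i‖ ^ 2)
    (fun j _ => by positivity) (Finset.mem_univ i)

end UnitVectors

lemma isCompact_setOf_norm_eq_one : IsCompact {x : ι → E | ∀ i, ‖x i‖ = 1} := by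
  convert isCompact_univ_pi fun _ : ι => isCompact_sphere (0 : E) 1
  simp [Set.pi]

variable [Fintype ι]

lemma fderiv_apply_eq_sum_inner (f : (ι → E) → ℝ) (x v : ι → E) :
    fderiv ℝ f x v = ∑ i, ⟪partialGradient f x i, v i⟫ := by
  classical
  conv_lhs => rw [← Finset.univ_sum_single v, map_sum]
  refine Finset.sum_congr rfl fun i _ => ?_
  rw [partialGradient, InnerProductSpace.toDual_symm_apply]
  simp only [ContinuousLinearMap.comp_apply, ContinuousLinearMap.single_apply]

lemma partialGradient_eq_of_hasFDerivAt {x D : ι → E} {f' : (ι → E) →L[ℝ] ℝ}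
    (hf : HasFDerivAt f f' x) (hD : ∀ v, f' v = ∑ i, ⟪D i, v i⟫) : partialGradient f x = D := by
  classical
  ext1 i
  refine ext_inner_right ℝ fun w => ?_
  have hsum (D : ι → E) : ∑ j, ⟪D j, (Pi.single i w : ι → E) j⟫ = ⟪D i, w⟫ := by
    rw [Finset.sum_eq_single i (fun j _ hj => by rw [Pi.single_eq_of_ne hj, inner_zero_right])
      (by simp), Pi.single_eq_same]
  rw [← hsum, ← hsum, ← fderiv_apply_eq_sum_inner, hf.fderiv, hD]

lemma continuous_partialGradient (hf : ContDiff ℝ 1 f) (i : ι) :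
    Continuous fun x => partialGradient f x i :=
  (InnerProductSpace.toDual ℝ E).symm.continuous.comp
    ((hf.continuous_fderiv one_ne_zero).clm_comp continuous_const)

lemma continuous_tangentialGradient (hf : ContDiff ℝ 1 f) (i : ι) :
    Continuous fun x => tangentialGradient f x i := by
  have := continuous_partialGradient hf i
  unfold tangentialGradient
  fun_prop

lemma continuous_descentStep (hf : ContDiff ℝ 1 f) :
    Continuous fun z : ℝ × (ι → E) => descentStep f z.1 z.2 := by
  refine continuous_pi fun i => continuous_sphereRetraction (by fun_prop) ?_
  have := (continuous_tangentialGradient hf i).comp (continuous_snd (X := ℝ))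
  fun_prop

omit [Fintype ι] in
lemma descentStep_comp_equiv [Finite ι] (hf : Differentiable ℝ f) (e : ι ≃ ι)
    (hfe : ∀ x, f (x ∘ e) = f x) (τ : ℝ) (x : ι → E) :
    descentStep f τ (x ∘ e) = descentStep f τ x ∘ e := by
  cases nonempty_fintype ι
  let L : (ι → E) →L[ℝ] (ι → E) :=
    ContinuousLinearMap.pi fun i => ContinuousLinearMap.proj (e i)
  have hfL : HasFDerivAt f ((fderiv ℝ f (x ∘ e)).comp L) x := by
    have := (hf (x ∘ e)).hasFDerivAt.comp (f := L) x L.hasFDerivAt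
    rwa [show f ∘ L = f from funext hfe] at this
  have hgrad : partialGradient f x = partialGradient f (x ∘ e) ∘ e.symm :=
    partialGradient_eq_of_hasFDerivAt hfL fun v => by
      rw [ContinuousLinearMap.comp_apply, fderiv_apply_eq_sum_inner, ← e.symm.sum_comp]
      simp [L]
  ext1 i
  simp [descentStep, tangentialGradient, hgrad]

lemma exists_norm_partialGradient_le (hf : ContDiff ℝ 1 f) :
    ∃ B, 0 ≤ B ∧ ∀ x : ι → E, (∀ i, ‖x i‖ = 1) → ∀ i, ‖partialGradient f x i‖ ≤ B := by
  have hcont : Continuous fun x => partialGradient f x :=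
    continuous_pi fun i => continuous_partialGradient hf i
  obtain ⟨B, hB⟩ := isCompact_setOf_norm_eq_one.exists_bound_of_continuousOn hcont.continuousOn
  refine ⟨max B 0, le_max_right .., fun x hx i => (norm_le_pi_norm _ i).trans ?_⟩
  exact (hB x hx).trans (le_max_left ..)

lemma exists_descentStep_le (hf : ContDiff ℝ 2 f) :
    ∃ τ₀ > 0, ∀ τ ∈ Set.Icc 0 τ₀, ∀ x : ι → E, (∀ i, ‖x i‖ = 1) →
      f (descentStep f τ x) ≤ f x - τ / 2 * ∑ i, ‖tangentialGradient f x i‖ ^ 2 := by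
  obtain ⟨B, hB0, hB⟩ := exists_norm_partialGradient_le (hf.of_le one_le_two)
  obtain ⟨C, hC0, hC⟩ := exists_taylor_bound hf (isCompact_closedBall 0 1) (convex_closedBall 0 1)
  have hmem {x : ι → E} (hx : ∀ i, ‖x i‖ = 1) : x ∈ Metric.closedBall (0 : ι → E) 1 := by
    rw [mem_closedBall_zero_iff, pi_norm_le_iff_of_nonneg zero_le_one]
    exact fun i => (hx i).le
  refine ⟨(B + 2 * C + 1)⁻¹, by positivity, fun τ hτ x hx => ?_⟩
  have hτB : τ * (B + 2 * C + 1) ≤ 1 := by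
    rw [← le_div_iff₀ (by positivity), one_div]
    exact hτ.2
  have htaylor := (abs_le.1 (hC x (hmem hx) _ (hmem (norm_descentStep (f := f) hx τ)))).2
  have hstep := mul_le_mul_of_nonneg_left (norm_descentStep_sub_sq_le (f := f) hx τ) hC0
  have hlinear : fderiv ℝ f x (descentStep f τ x - x) ≤
      (τ ^ 2 * B / 2 - τ) * ∑ i, ‖tangentialGradient f x i‖ ^ 2 := by
    rw [fderiv_apply_eq_sum_inner, Finset.mul_sum]
    refine Finset.sum_le_sum fun i _ =>
      (inner_partialGradient_descentStep_sub_le hx τ i).trans ?_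
    gcongr
    exact hB x hx i
  have hS : 0 ≤ ∑ i, ‖tangentialGradient f x i‖ ^ 2 := by positivity
  nlinarith [mul_nonneg hτ.1 hS, mul_nonneg (mul_nonneg hτ.1 hS) (sub_nonneg.2 hτB)]

lemma exists_iterate_descentStep_lt (hf : ContDiff ℝ 2 f) {b C : ℝ}
    (hno : ∀ x, (∀ i, ‖x i‖ = 1) → b ≤ f x → f x ≤ C → tangentialGradient f x ≠ 0) :
    ∃ τ > 0, (∀ σ ∈ Set.Icc 0 τ, ∀ x, (∀ i, ‖x i‖ = 1) → f (descentStep f σ x) ≤ f x) ∧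
      ∃ k, ∀ x, (∀ i, ‖x i‖ = 1) → f x ≤ C → f ((descentStep f τ)^[k] x) < b := by
  obtain ⟨τ, hτ, hdesc⟩ := exists_descentStep_le hf
  refine ⟨τ, hτ, fun σ hσ x hx => (hdesc σ hσ x hx).trans
    (sub_le_self _ (mul_nonneg (div_nonneg hσ.1 zero_le_two) (by positivity))), ?_⟩
  refine exists_iterate_lt_of_le_sub (g := fun x => τ / 2 * ∑ i, ‖tangentialGradient f x i‖ ^ 2)
    isCompact_setOf_norm_eq_one hf.continuous.continuousOn
    (continuous_const.mul (continuous_finsetSum _ fun i _ =>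
      (continuous_tangentialGradient (hf.of_le one_le_two) i).norm.pow 2)).continuousOn
    (fun x hx => norm_descentStep hx τ) (fun x _ => by positivity)
    (fun x hx => hdesc τ (Set.right_mem_Icc.2 hτ.le) x hx) fun x hx hbx hxC => ?_
  refine mul_pos (half_pos hτ) ((Finset.sum_nonneg fun _ _ => by positivity).lt_of_ne' fun h0 => ?_)
  simp only [Finset.sum_eq_zero_iff_of_nonneg (fun _ _ => sq_nonneg _), Finset.mem_univ,
    true_imp_iff, sq_eq_zero_iff, norm_eq_zero] at h0
  exact hno x hx hbx hxC (funext h0)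

end Descent

/-! ### The discrete energy and its minimax critical polygons -/

open scoped Gradient

section Polygons

variable {E : Type*} [NormedAddCommGroup E] {N : ℕ}

/-- The edge vectors of a closed polygon. -/
def polygonEdge (x : ZMod N → E) (i : ZMod N) : E := x (i + 1) - x i

section NormedSpace

variable [NormedSpace ℝ E]

/-- The momentum of an edge, in the weighted metric; it corresponds to `2 F(c) c'` for a curve. -/
def edgeMomentum (F : E → ℝ) (x : ZMod N → E) (i : ZMod N) : E :=
  (F (x i) + F (x (i + 1))) • polygonEdge x i

end NormedSpace

variable [NeZero N]

/-- The discrete energy of a closed polygon, with respect to the metric with weight `2 F`. -/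
def polygonEnergy (F : E → ℝ) (x : ZMod N → E) : ℝ :=
  ∑ i, (F (x i) + F (x (i + 1))) * ‖polygonEdge x i‖ ^ 2

lemma sum_add_one_eq {A : Type*} [AddCommMonoid A] (g : ZMod N → A) :
    ∑ i, g (i + 1) = ∑ i, g i :=
  Equiv.sum_comp (Equiv.addRight (1 : ZMod N)) g

lemma polygonEnergy_reversePolygon (F : E → ℝ) (x : ZMod N → E) :
    polygonEnergy F (reversePolygon x) = polygonEnergy F x := by
  let g (i : ZMod N) : ℝ := (F (x i) + F (x (i + 1))) * ‖polygonEdge x i‖ ^ 2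
  refine Eq.trans (Finset.sum_congr rfl fun i _ => ?_)
    (((Equiv.addRight (1 : ZMod N)).trans (Equiv.neg _)).sum_comp g)
  have hi : -(i + 1) + 1 = -i := by ring
  simp only [g, polygonEdge, reversePolygon, Equiv.trans_apply, Equiv.coe_addRight, Equiv.neg_apply,
    hi, norm_sub_rev (x (-i)), add_comm (F (x (-i)))]

lemma norm_sub_le_sum_norm_polygonEdge (x : ZMod N → E) (i j : ZMod N) :
    ‖x i - x j‖ ≤ ∑ k, ‖polygonEdge x k‖ := by
  have hinj : Set.InjOn (fun k : ℕ => j + (k : ZMod N)) (Finset.range (i - j).val) :=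
    fun a ha b hb hab => by
      have hlt := ZMod.val_lt (i - j)
      simp only [Finset.coe_range, Set.mem_Iio] at ha hb
      have := (ZMod.natCast_eq_natCast_iff' a b N).mp (add_left_cancel hab)
      rwa [Nat.mod_eq_of_lt (by omega), Nat.mod_eq_of_lt (by omega)] at this
  have hpath := dist_le_range_sum_dist (fun k : ℕ => x (j + k)) (i - j).val
  simp only [Nat.cast_zero, add_zero, ZMod.natCast_zmod_val, add_sub_cancel, dist_eq_norm_sub']
    at hpath
  refine hpath.trans ?_
  calc ∑ k ∈ Finset.range (i - j).val, ‖x (j + (k + 1 : ℕ)) - x (j + k)‖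
      = ∑ k ∈ (Finset.range (i - j).val).image fun n : ℕ => j + (n : ZMod N),
          ‖polygonEdge x k‖ := by
        rw [Finset.sum_image hinj]
        simp only [polygonEdge, Nat.cast_add, Nat.cast_one, add_assoc]
    _ ≤ ∑ k, ‖polygonEdge x k‖ := Finset.sum_le_univ_sum_of_nonneg fun _ => norm_nonneg _

end Polygons

section PolygonEnergy

variable {E : Type*} [NormedAddCommGroup E] [InnerProductSpace ℝ E] {F : E → ℝ} {m K : ℝ} {N : ℕ}

lemma contDiff_polygonEnergy [NeZero N] {n : WithTop ℕ∞} (hF : ContDiff ℝ n F) :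
    ContDiff ℝ n (polygonEnergy (N := N) F) := by
  have hproj (i : ZMod N) : ContDiff ℝ n fun x : ZMod N → E => x i := contDiff_apply ℝ E i
  unfold polygonEnergy polygonEdge
  exact ContDiff.sum fun i _ => ((hF.comp (hproj i)).add (hF.comp (hproj (i + 1)))).mul
    (((hproj (i + 1)).sub (hproj i)).norm_sq ℝ)

variable [FiniteDimensional ℝ E]

/-- `F` is the square of a conformal factor on the unit sphere, extended to a `C²` function on `E`;
`m` and `K` are bounds for `F` and its gradient on the sphere. -/
structure IsConformalWeight (F : E → ℝ) (m K : ℝ) : Prop where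
  contDiff : ContDiff ℝ 2 F
  pos : 0 < m
  le_apply : ∀ x, ‖x‖ = 1 → m ≤ F x
  apply_le : ∀ x, ‖x‖ = 1 → F x ≤ K
  norm_gradient_le : ∀ x, ‖x‖ = 1 → ‖∇ F x‖ ≤ K

lemma exists_isConformalWeight (hF : ContDiff ℝ 2 F) (hpos : ∀ x, ‖x‖ = 1 → 0 < F x) :
    ∃ m K, IsConformalWeight F m K := by
  have hS : IsCompact (Metric.sphere (0 : E) 1) := isCompact_sphere 0 1
  have hgrad : Continuous fun x => ∇ F x :=
    (InnerProductSpace.toDual ℝ E).symm.continuous.comp (hF.continuous_fderiv two_ne_zero)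
  obtain ⟨m, hm, hle⟩ := hS.exists_forall_le' hF.continuous.continuousOn (a := 0)
    fun x hx => hpos x (mem_sphere_zero_iff_norm.1 hx)
  obtain ⟨K₁, hK₁⟩ := hS.exists_bound_of_continuousOn hF.continuous.continuousOn
  obtain ⟨K₂, hK₂⟩ := hS.exists_bound_of_continuousOn hgrad.continuousOn
  simp only [mem_sphere_zero_iff_norm] at hle hK₁ hK₂
  exact ⟨m, max K₁ K₂, hF, hm, hle,
    fun x hx => (le_abs_self _).trans ((hK₁ x hx).trans (le_max_left ..)),
    fun x hx => (hK₂ x hx).trans (le_max_right ..)⟩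

namespace IsConformalWeight

variable (h : IsConformalWeight F m K)
include h

lemma hasFDerivAt (x : E) : HasFDerivAt F (innerSL ℝ (∇ F x)) x := by
  have := (h.contDiff.differentiable two_ne_zero x).hasGradientAt.hasFDerivAt
  rwa [show (InnerProductSpace.toDual ℝ E (∇ F x) : E →L[ℝ] ℝ) = innerSL ℝ (∇ F x) from rfl] at this

lemma hasDerivAt_comp {c : ℝ → E} {w : E} {t : ℝ} (hw : HasDerivAt c w t) :
    HasDerivAt (fun s => F (c s)) ⟪∇ F (c t), w⟫ t :=
  (h.hasFDerivAt (c t)).comp_hasDerivAt t hw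

lemma continuous_gradient : Continuous fun x => ∇ F x :=
  (InnerProductSpace.toDual ℝ E).symm.continuous.comp (h.contDiff.continuous_fderiv two_ne_zero)

lemma bound_nonneg {x : E} (hx : ‖x‖ = 1) : 0 ≤ K := (norm_nonneg _).trans (h.norm_gradient_le x hx)

end IsConformalWeight

lemma fderiv_polygonEnergy_apply [NeZero N] (h : IsConformalWeight F m K) (x v : ZMod N → E) :
    fderiv ℝ (polygonEnergy F) x v = ∑ i,
      (2 * ⟪edgeMomentum F x i, v (i + 1) - v i⟫ +
        ‖polygonEdge x i‖ ^ 2 * (⟪∇ F (x i), v i⟫ + ⟪∇ F (x (i + 1)), v (i + 1)⟫)) := by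
  have hproj (i : ZMod N) : HasFDerivAt (fun y : ZMod N → E => y i)
      (ContinuousLinearMap.proj (R := ℝ) (φ := fun _ => E) i) x := hasFDerivAt_apply i x
  have hF (i : ZMod N) := (h.hasFDerivAt (x i)).comp x (hproj i)
  have hsum := HasFDerivAt.fun_sum (u := Finset.univ) fun i _ =>
    ((hF i).add (hF (i + 1))).mul ((hproj (i + 1)).sub (hproj i)).norm_sq
  rw [HasFDerivAt.fderiv (f := polygonEnergy F) hsum, sum_apply]
  refine Finset.sum_congr rfl fun i _ => ?_
  simp [edgeMomentum, polygonEdge, real_inner_smul_left, inner_sub_left, inner_sub_right]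
  ring

lemma partialGradient_polygonEnergy [NeZero N] (h : IsConformalWeight F m K) (x : ZMod N → E)
    (i : ZMod N) :
    partialGradient (polygonEnergy F) x (i + 1) =
      (‖polygonEdge x (i + 1)‖ ^ 2 + ‖polygonEdge x i‖ ^ 2) • ∇ F (x (i + 1)) -
        (2 : ℝ) • (edgeMomentum F x (i + 1) - edgeMomentum F x i) := by
  let D (j : ZMod N) : E := (‖polygonEdge x j‖ ^ 2 + ‖polygonEdge x (j - 1)‖ ^ 2) • ∇ F (x j) -
    (2 : ℝ) • (edgeMomentum F x j - edgeMomentum F x (j - 1))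
  have hdiff := ((contDiff_polygonEnergy h.contDiff).differentiable two_ne_zero x).hasFDerivAt
  have hgrad : partialGradient (polygonEnergy F) x = D :=
    partialGradient_eq_of_hasFDerivAt hdiff fun v => by
      have hp := sum_add_one_eq fun i => ⟪edgeMomentum F x i, v i⟫
      have hG := sum_add_one_eq fun i => ‖polygonEdge x i‖ ^ 2 * ⟪∇ F (x i), v i⟫
      rw [fderiv_polygonEnergy_apply h, ← sum_add_one_eq fun i => ⟪D i, v i⟫]
      simp only [D, add_sub_cancel_right, inner_sub_left, inner_sub_right, real_inner_smul_left,
        mul_add, mul_sub, add_mul, Finset.sum_add_distrib, Finset.sum_sub_distrib,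
        ← Finset.mul_sum, hp, hG]
      ring
  rw [hgrad]
  simp only [D, add_sub_cancel_right]

section Bounds

variable (h : IsConformalWeight F m K) {x : ZMod N → E} (hx : ∀ i, ‖x i‖ = 1)
include h hx

lemma two_mul_le_weight (i : ZMod N) : 2 * m ≤ F (x i) + F (x (i + 1)) := by
  linarith [h.le_apply _ (hx i), h.le_apply _ (hx (i + 1))]

lemma two_mul_sum_norm_polygonEdge_sq_le [NeZero N] :
    2 * m * ∑ i, ‖polygonEdge x i‖ ^ 2 ≤ polygonEnergy F x := by
  rw [polygonEnergy, Finset.mul_sum]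
  gcongr with i
  exact two_mul_le_weight h hx i

lemma isSphericalPolygon_of_polygonEnergy_lt [NeZero N] (hlt : polygonEnergy F x < 8 * m) :
    IsSphericalPolygon x := by
  refine ⟨hx, fun i hi => hlt.not_ge ?_⟩
  have hedge : ‖polygonEdge x i‖ = 2 := by
    rw [polygonEdge, hi, show -x i - x i = (-2 : ℝ) • x i by module, norm_smul, hx]
    norm_num
  have hle := Finset.single_le_sum (f := fun i => ‖polygonEdge x i‖ ^ 2)
    (fun _ _ => by positivity) (Finset.mem_univ i)
  rw [hedge] at hle
  nlinarith [two_mul_sum_norm_polygonEdge_sq_le h hx, h.pos]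

end Bounds

lemma norm_sub_le_one_of_polygonEnergy_lt [NeZero N] (h : IsConformalWeight F m K)
    {x : ZMod N → E} (hx : ∀ i, ‖x i‖ = 1) (hlt : polygonEnergy F x < 2 * m / N) (i j : ZMod N) :
    ‖x i - x j‖ ≤ 1 := by
  have hN : (0 : ℝ) < N := by exact_mod_cast Nat.pos_of_ne_zero (NeZero.ne N)
  have hsum : N * ∑ k, ‖polygonEdge x k‖ ^ 2 ≤ 1 := by
    have := (two_mul_sum_norm_polygonEdge_sq_le h hx).trans hlt.le
    rw [le_div_iff₀ hN] at this
    nlinarith [h.pos]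
  have hCS : (∑ k, ‖polygonEdge x k‖) ^ 2 ≤ N * ∑ k, ‖polygonEdge x k‖ ^ 2 := by
    simpa using sq_sum_le_card_mul_sum_sq (s := Finset.univ) (f := fun k => ‖polygonEdge x k‖)
  refine (norm_sub_le_sum_norm_polygonEdge x i j).trans ?_
  exact (sq_le_one_iff₀ (by positivity)).1 (hCS.trans hsum)

end PolygonEnergy

section Minimax

variable {N : ℕ}

lemma isSphericalPolygon_of_inner_pos {E : Type*} [NormedAddCommGroup E] [InnerProductSpace ℝ E]
    {x : ZMod N → E} (hx : ∀ i, ‖x i‖ = 1) {a : E} (ha : ∀ i, 0 < ⟪x i, a⟫) :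
    IsSphericalPolygon x where
  norm_eq_one := hx
  ne_neg i hi := by
    have := ha (i + 1)
    rw [hi, inner_neg_left] at this
    linarith [ha i]

/-- Such a path can be contracted along minor arcs to a path of constant polygons. -/
lemma not_isOddPath_of_norm_sub_le_one {p : ℝ → ZMod N → E3} (hp : Continuous p)
    (hu : ∀ r i, ‖p r i‖ = 1) (hrev : p π = reversePolygon (p 0))
    (hsmall : ∀ r i, ‖p r i - p r 0‖ ≤ 1) : ¬ IsOddPath p := by
  intro hodd
  let W (r : ℝ) (s : unitInterval) (i : ZMod N) : E3 := AffineMap.lineMap (p r i) (p r 0) (s : ℝ)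
  have hinner (r : ℝ) (s : unitInterval) (i : ZMod N) : 0 < ⟪W r s i, p r 0⟫ := by
    have hsq := norm_sub_sq_real (p r i) (p r 0)
    rw [hu, hu] at hsq
    have := pow_le_one₀ (n := 2) (norm_nonneg _) (hsmall r i)
    simp only [W, AffineMap.lineMap_apply_module, inner_add_left, real_inner_smul_left,
      real_inner_self_eq_norm_sq, hu]
    nlinarith [s.2.1, s.2.2]
  have hW (r : ℝ) (s : unitInterval) (i : ZMod N) : W r s i ≠ 0 := fun h0 => by
    simpa [h0] using hinner r s i
  have hcont : Continuous fun z : ℝ × unitInterval => W z.1 z.2 := by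
    refine continuous_pi fun i => ?_
    simp only [W, AffineMap.lineMap_apply_module]
    fun_prop
  have hhomotopy := IsOddPath.homotopy (H := fun r s i => NormedSpace.normalize (W r s i))
    (continuous_pi fun i => ((continuous_apply i).comp hcont).norm.inv₀
      (fun z => norm_ne_zero_iff.2 (hW z.1 z.2 i)) |>.smul ((continuous_apply i).comp hcont))
    (fun r s => isSphericalPolygon_of_inner_pos (fun i => NormedSpace.norm_normalize (hW r s i))
      (a := p r 0) fun i => by
        rw [NormedSpace.normalize, real_inner_smul_left]
        exact mul_pos (inv_pos.2 (norm_pos_iff.2 (hW r s i))) (hinner r s i))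
    (fun s => by ext1 i; simp only [W, hrev, reversePolygon, neg_zero])
    (by simpa [W, NormedSpace.normalize_eq_self_of_norm_eq_one, hu] using hodd)
  refine not_isOddPath_const (p := fun r => p r 0) (N := N) (fun r => hu r 0) ?_
  simpa [W, NormedSpace.normalize_eq_self_of_norm_eq_one, hu] using hhomotopy

section ReversalInvariant

variable [NeZero N] {f : (ZMod N → E3) → ℝ} {p : ℝ → ZMod N → E3}

lemma descentStep_reversePolygon (hf : Differentiable ℝ f)
    (hfrev : ∀ x, f (reversePolygon x) = f x) (τ : ℝ) (x : ZMod N → E3) :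
    descentStep f τ (reversePolygon x) = reversePolygon (descentStep f τ x) :=
  descentStep_comp_equiv hf (Equiv.neg (ZMod N)) hfrev τ x

lemma IsOddPath.descentStep (hp : Continuous p) (hrev : p π = reversePolygon (p 0))
    (hodd : IsOddPath p) (hf : ContDiff ℝ 1 f) (hfrev : ∀ x, f (reversePolygon x) = f x)
    {τ : ℝ} (hτ : 0 ≤ τ)
    (hpoly : ∀ σ ∈ Set.Icc 0 τ, ∀ r, IsSphericalPolygon (_root_.descentStep f σ (p r))) :
    IsOddPath fun r => _root_.descentStep f τ (p r) := by
  have hhomotopy := IsOddPath.homotopy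
    (H := fun r (s : unitInterval) => _root_.descentStep f (s * τ) (p r))
    ((continuous_descentStep hf).comp
      (f := fun z : ℝ × unitInterval => ((z.2 : ℝ) * τ, p z.1)) (by fun_prop))
    (fun r s => hpoly _ ⟨mul_nonneg s.2.1 hτ, mul_le_of_le_one_left hτ s.2.2⟩ r)
    (fun s => by
      rw [hrev, descentStep_reversePolygon (hf.differentiable one_ne_zero) hfrev])
    (by simpa [descentStep_zero] using hodd)
  simpa using hhomotopy

lemma iterate_descentStep_isOddPath {C τ : ℝ} (hf : ContDiff ℝ 1 f)
    (hfrev : ∀ x, f (reversePolygon x) = f x)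
    (hpoly : ∀ x, (∀ i, ‖x i‖ = 1) → f x ≤ C → IsSphericalPolygon x) (hτ : 0 ≤ τ)
    (hdesc : ∀ σ ∈ Set.Icc 0 τ, ∀ x, (∀ i, ‖x i‖ = 1) → f (_root_.descentStep f σ x) ≤ f x)
    (hp : Continuous p) (hu : ∀ r i, ‖p r i‖ = 1) (hpC : ∀ r, f (p r) ≤ C)
    (hrev : p π = reversePolygon (p 0)) (hodd : IsOddPath p) (k : ℕ) :
    (∀ r i, ‖(descentStep f τ)^[k] (p r) i‖ = 1) ∧
      (descentStep f τ)^[k] (p π) = reversePolygon ((descentStep f τ)^[k] (p 0)) ∧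
      IsOddPath fun r => (descentStep f τ)^[k] (p r) := by
  induction k generalizing p with
  | zero => exact ⟨hu, hrev, hodd⟩
  | succ _ ih =>
    have hdesc' (σ) (hσ : σ ∈ Set.Icc 0 τ) (r : ℝ) : f (_root_.descentStep f σ (p r)) ≤ C :=
      (hdesc σ hσ _ (hu r)).trans (hpC r)
    exact ih (p := fun r => _root_.descentStep f τ (p r))
      ((continuous_descentStep hf).comp (f := fun r => (τ, p r)) (by fun_prop))
      (fun r => norm_descentStep (hu r) τ) (hdesc' τ (Set.right_mem_Icc.2 hτ))
      (by rw [hrev, descentStep_reversePolygon (hf.differentiable one_ne_zero) hfrev])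
      (hodd.descentStep hp hrev hf hfrev hτ fun σ hσ r =>
        hpoly _ (norm_descentStep (hu r) σ) (hdesc' σ hσ r))

end ReversalInvariant

lemma exists_critical_polygon [NeZero N] {F : E3 → ℝ} {m K C : ℝ}
    (h : IsConformalWeight F m K) (hC : C < 8 * m) {p : ℝ → ZMod N → E3} (hp : Continuous p)
    (hu : ∀ r i, ‖p r i‖ = 1) (hrev : p π = reversePolygon (p 0))
    (hpC : ∀ r, polygonEnergy F (p r) ≤ C) (hodd : IsOddPath p) :
    ∃ x : ZMod N → E3, (∀ i, ‖x i‖ = 1) ∧ tangentialGradient (polygonEnergy F) x = 0 ∧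
      2 * m / N ≤ polygonEnergy F x ∧ polygonEnergy F x ≤ C := by
  by_contra! hno
  have hf : ContDiff ℝ 2 (polygonEnergy (N := N) F) := contDiff_polygonEnergy h.contDiff
  obtain ⟨τ, hτ, hdesc, k, hk⟩ := exists_iterate_descentStep_lt (b := 2 * m / N) (C := C) hf
    fun x hx hbx hxC h0 => (hno x hx h0 hbx).not_ge hxC
  obtain ⟨hu', hrev', hodd'⟩ := iterate_descentStep_isOddPath (hf.of_le one_le_two)
    (polygonEnergy_reversePolygon F)
    (fun x hx hxC => isSphericalPolygon_of_polygonEnergy_lt h hx (hxC.trans_lt hC)) hτ.le hdesc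
    hp hu hpC hrev hodd k
  have hΦ : Continuous (descentStep (polygonEnergy (N := N) F) τ) :=
    (continuous_descentStep (hf.of_le one_le_two)).comp (f := fun x => (τ, x)) (by fun_prop)
  refine not_isOddPath_of_norm_sub_le_one ((hΦ.iterate k).comp hp) hu' hrev' (fun r i => ?_) hodd'
  exact norm_sub_le_one_of_polygonEnergy_lt h (hu' r) (hk _ (hu r) (hpC r)) i 0

end Minimax

/-! ### Estimates for critical polygons -/

section CriticalPolygons

variable {E : Type*} [NormedAddCommGroup E] [InnerProductSpace ℝ E]

lemma inner_sub_eq_neg_norm_sq_div_two {a b : E} (ha : ‖a‖ = 1) (hb : ‖b‖ = 1) :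
    ⟪a, b - a⟫ = -(‖b - a‖ ^ 2 / 2) := by
  rw [norm_sub_sq_real, inner_sub_right, real_inner_self_eq_norm_sq, ha, hb, real_inner_comm]
  ring

variable [FiniteDimensional ℝ E] {F : E → ℝ} {m K : ℝ} {N : ℕ} {x : ZMod N → E}
  (h : IsConformalWeight F m K) (hx : ∀ i, ‖x i‖ = 1)
include h hx

lemma norm_edgeMomentum (i : ZMod N) :
    ‖edgeMomentum F x i‖ = (F (x i) + F (x (i + 1))) * ‖polygonEdge x i‖ := by
  rw [edgeMomentum, norm_smul, Real.norm_of_nonneg (by linarith [two_mul_le_weight h hx i, h.pos])]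

lemma two_mul_norm_polygonEdge_le (i : ZMod N) :
    2 * m * ‖polygonEdge x i‖ ≤ ‖edgeMomentum F x i‖ := by
  rw [norm_edgeMomentum h hx]
  gcongr
  exact two_mul_le_weight h hx i

lemma norm_edgeMomentum_le (i : ZMod N) :
    ‖edgeMomentum F x i‖ ≤ 2 * K * ‖polygonEdge x i‖ := by
  rw [norm_edgeMomentum h hx]
  gcongr
  linarith [h.apply_le _ (hx i), h.apply_le _ (hx (i + 1))]

variable [NeZero N] (hcrit : tangentialGradient (polygonEnergy F) x = 0)
include hcrit

lemma edgeMomentum_sub_eq (i : ZMod N) :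
    edgeMomentum F x (i + 1) - edgeMomentum F x i = (1 / 2 : ℝ) •
      ((‖polygonEdge x (i + 1)‖ ^ 2 + ‖polygonEdge x i‖ ^ 2) • ∇ F (x (i + 1)) -
        ((‖polygonEdge x (i + 1)‖ ^ 2 + ‖polygonEdge x i‖ ^ 2) * ⟪x (i + 1), ∇ F (x (i + 1))⟫ +
          (F (x (i + 1)) + F (x (i + 1 + 1))) * ‖polygonEdge x (i + 1)‖ ^ 2 +
          (F (x i) + F (x (i + 1))) * ‖polygonEdge x i‖ ^ 2) • x (i + 1)) := by
  have hnext := inner_sub_eq_neg_norm_sq_div_two (hx (i + 1)) (hx (i + 1 + 1))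
  have hprev := inner_sub_eq_neg_norm_sq_div_two (hx (i + 1)) (hx i)
  rw [← neg_sub, inner_neg_right, norm_neg] at hprev
  have hgrad := sub_eq_zero.1 (congrFun hcrit (i + 1))
  have hnormal : ⟪x (i + 1), partialGradient (polygonEnergy F) x (i + 1)⟫ =
      (‖polygonEdge x (i + 1)‖ ^ 2 + ‖polygonEdge x i‖ ^ 2) * ⟪x (i + 1), ∇ F (x (i + 1))⟫ +
        (F (x (i + 1)) + F (x (i + 1 + 1))) * ‖polygonEdge x (i + 1)‖ ^ 2 +
        (F (x i) + F (x (i + 1))) * ‖polygonEdge x i‖ ^ 2 := by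
    simp only [partialGradient_polygonEnergy h, edgeMomentum, inner_sub_right,
      real_inner_smul_right, polygonEdge] at hnext hprev ⊢
    linear_combination (-2 * (F (x (i + 1)) + F (x (i + 1 + 1)))) * hnext +
      (-2 * (F (x i) + F (x (i + 1)))) * hprev
  rw [← hnormal, ← hgrad, partialGradient_polygonEnergy h]
  module

lemma norm_edgeMomentum_sub_le (i : ZMod N) :
    ‖edgeMomentum F x (i + 1) - edgeMomentum F x i‖ ≤
      2 * K * (‖polygonEdge x (i + 1)‖ ^ 2 + ‖polygonEdge x i‖ ^ 2) := by
  rw [edgeMomentum_sub_eq h hx hcrit]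
  set a := ‖polygonEdge x (i + 1)‖ ^ 2
  set b := ‖polygonEdge x i‖ ^ 2
  have ha : 0 ≤ a := by positivity
  have hb : 0 ≤ b := by positivity
  have hgrad := h.norm_gradient_le _ (hx (i + 1))
  have hinner : |⟪x (i + 1), ∇ F (x (i + 1))⟫| ≤ K := by
    refine (abs_real_inner_le_norm _ _).trans ?_
    rwa [hx, one_mul]
  have htan : ‖(a + b) • ∇ F (x (i + 1))‖ ≤ (a + b) * K := by
    rw [norm_smul, Real.norm_of_nonneg (by positivity)]
    gcongr
  have hnor : ‖((a + b) * ⟪x (i + 1), ∇ F (x (i + 1))⟫ + (F (x (i + 1)) + F (x (i + 1 + 1))) * a +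
      (F (x i) + F (x (i + 1))) * b) • x (i + 1)‖ ≤ (a + b) * (3 * K) := by
    have := two_mul_le_weight h hx i
    have := two_mul_le_weight h hx (i + 1)
    rw [norm_smul, hx, mul_one, Real.norm_eq_abs, abs_le]
    rw [abs_le] at hinner
    constructor <;>
      nlinarith [h.pos, h.apply_le _ (hx i), h.apply_le _ (hx (i + 1)),
        h.apply_le _ (hx (i + 1 + 1))]
  rw [norm_smul, show ‖(1 / 2 : ℝ)‖ = 1 / 2 by norm_num]
  linarith [norm_sub_le ((a + b) • ∇ F (x (i + 1))) (((a + b) * ⟪x (i + 1), ∇ F (x (i + 1))⟫ +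
    (F (x (i + 1)) + F (x (i + 1 + 1))) * a + (F (x i) + F (x (i + 1))) * b) • x (i + 1))]

lemma norm_edgeMomentum_sub_le_sum (i j : ZMod N) :
    ‖edgeMomentum F x i - edgeMomentum F x j‖ ≤ 4 * K * ∑ k, ‖polygonEdge x k‖ ^ 2 :=
  calc ‖edgeMomentum F x i - edgeMomentum F x j‖
      ≤ ∑ k, ‖edgeMomentum F x (k + 1) - edgeMomentum F x k‖ :=
        norm_sub_le_sum_norm_polygonEdge (edgeMomentum F x) i j
    _ ≤ ∑ k, 2 * K * (‖polygonEdge x (k + 1)‖ ^ 2 + ‖polygonEdge x k‖ ^ 2) :=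
        Finset.sum_le_sum fun k _ => norm_edgeMomentum_sub_le h hx hcrit k
    _ = 4 * K * ∑ k, ‖polygonEdge x k‖ ^ 2 := by
        rw [← Finset.mul_sum, Finset.sum_add_distrib, sum_add_one_eq fun k => ‖polygonEdge x k‖ ^ 2]
        ring

/-- One edge has length at most `√B / N`; the momentum varies by at most `4 K B / N` from there. -/
lemma norm_edgeMomentum_le_div {B : ℝ} (hB : N * ∑ k, ‖polygonEdge x k‖ ^ 2 ≤ B) (i : ZMod N) :
    ‖edgeMomentum F x i‖ ≤ (2 * K * √B + 4 * K * B) / N := by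
  have hN : (0 : ℝ) < N := by exact_mod_cast Nat.pos_of_ne_zero (NeZero.ne N)
  have hK : 0 ≤ K := h.bound_nonneg (hx i)
  have hB0 : 0 ≤ B := le_trans (by positivity) hB
  have hsum : ∑ k, ‖polygonEdge x k‖ ^ 2 ≤ B / N := by rwa [le_div_iff₀' hN]
  obtain ⟨j, -, hj⟩ := Finset.exists_le_of_sum_le (s := Finset.univ)
    (f := fun k => ‖polygonEdge x k‖ ^ 2) (g := fun _ => B / N ^ 2) Finset.univ_nonempty (by
      rw [Finset.sum_const, Finset.card_univ, ZMod.card, nsmul_eq_mul]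
      exact hsum.trans_eq (by field_simp))
  have hedge : ‖polygonEdge x j‖ ≤ √B / N := by
    rw [← Real.sqrt_sq hN.le, ← Real.sqrt_div hB0]
    exact Real.le_sqrt_of_sq_le hj
  calc ‖edgeMomentum F x i‖
      ≤ ‖edgeMomentum F x j‖ + ‖edgeMomentum F x i - edgeMomentum F x j‖ :=
        norm_le_norm_add_norm_sub' _ _
    _ ≤ 2 * K * ‖polygonEdge x j‖ + 4 * K * ∑ k, ‖polygonEdge x k‖ ^ 2 :=
        add_le_add (norm_edgeMomentum_le h hx j) (norm_edgeMomentum_sub_le_sum h hx hcrit i j)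
    _ ≤ 2 * K * (√B / N) + 4 * K * (B / N) := by gcongr
    _ = (2 * K * √B + 4 * K * B) / N := by ring

omit hx hcrit [NeZero N] in
lemma exists_critical_polygon_bound (D : ℝ) :
    ∃ L : ℝ, ∀ (N : ℕ) [NeZero N] (x : ZMod N → E), (∀ i, ‖x i‖ = 1) →
      tangentialGradient (polygonEnergy F) x = 0 → N * polygonEnergy F x ≤ D → ∀ i,
        ‖edgeMomentum F x i‖ ≤ L / N ∧ ‖polygonEdge x i‖ ≤ L / N ∧
          ‖edgeMomentum F x (i + 1) - edgeMomentum F x i‖ ≤ L / N ^ 2 := by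
  have hm := h.pos
  set B := D / (2 * m) with hB
  set P := 2 * K * √B + 4 * K * B
  set R := P / (2 * m) with hR
  refine ⟨max P (max R (4 * K * R ^ 2)), fun N _ x hx hcrit hD i => ?_⟩
  have hN : (0 : ℝ) < N := by exact_mod_cast Nat.pos_of_ne_zero (NeZero.ne N)
  have hK : 0 ≤ K := h.bound_nonneg (hx i)
  have hsum : N * ∑ k, ‖polygonEdge x k‖ ^ 2 ≤ B := by
    rw [hB, le_div_iff₀ (by positivity)]
    nlinarith [two_mul_sum_norm_polygonEdge_sq_le h hx]
  have hmom := norm_edgeMomentum_le_div h hx hcrit hsum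
  have hedge (k : ZMod N) : ‖polygonEdge x k‖ ≤ R / N := by
    rw [hR, div_right_comm, le_div_iff₀' (by positivity)]
    exact (two_mul_norm_polygonEdge_le h hx k).trans (hmom k)
  have hdiff : ‖edgeMomentum F x (i + 1) - edgeMomentum F x i‖ ≤ 4 * K * R ^ 2 / N ^ 2 :=
    calc _ ≤ 2 * K * (‖polygonEdge x (i + 1)‖ ^ 2 + ‖polygonEdge x i‖ ^ 2) :=
          norm_edgeMomentum_sub_le h hx hcrit i
      _ ≤ 2 * K * ((R / N) ^ 2 + (R / N) ^ 2) := by gcongr <;> exact hedge _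
      _ = 4 * K * R ^ 2 / N ^ 2 := by ring
  refine ⟨(hmom i).trans ?_, (hedge i).trans ?_, hdiff.trans ?_⟩ <;> gcongr
  exacts [le_max_left .., (le_max_left ..).trans (le_max_right ..),
    (le_max_right ..).trans (le_max_right ..)]

end CriticalPolygons

/-! ### Limits of discrete curves with mesh tending to zero -/

open Filter Topology

section MeshLimit

/-- The filter of pairs `(N, k)` with `N → ∞` along a fixed ultrafilter and `k / N → t`; limits
along it are values at time `t` of limits of discrete curves `k ↦ b N k` with mesh `1 / N`. -/
def meshLimit (t : ℝ) : Filter (ℕ+ × ℤ) :=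
  ((hyperfilter ℕ+ : Filter ℕ+) ×ˢ (⊤ : Filter ℤ)) ⊓ comap (fun q : ℕ+ × ℤ => (q.2 : ℝ) / q.1) (𝓝 t)

lemma tendsto_meshLimit_iff {A : Type*} {l : Filter A} {g : A → ℕ+ × ℤ} {t : ℝ} :
    Tendsto g l (meshLimit t) ↔ Tendsto (fun a => (g a).1) l (hyperfilter ℕ+) ∧
      Tendsto (fun a => ((g a).2 : ℝ) / (g a).1) l (𝓝 t) := by
  rw [meshLimit, tendsto_inf, tendsto_comap_iff, tendsto_prod_iff']
  simp [Function.comp_def]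

lemma tendsto_fst_meshLimit (t : ℝ) :
    Tendsto (fun q : ℕ+ × ℤ => q.1) (meshLimit t) (hyperfilter ℕ+) :=
  (tendsto_meshLimit_iff.1 tendsto_id).1

lemma tendsto_div_meshLimit (t : ℝ) :
    Tendsto (fun q : ℕ+ × ℤ => (q.2 : ℝ) / q.1) (meshLimit t) (𝓝 t) :=
  (tendsto_meshLimit_iff.1 tendsto_id).2

lemma tendsto_natCast_hyperfilter :
    Tendsto (fun N : ℕ+ => (N : ℕ)) (hyperfilter ℕ+) atTop :=
  Nat.cofinite_eq_atTop ▸ PNat.coe_injective.tendsto_cofinite.mono_left hyperfilter_le_cofinite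

lemma tendsto_inv_meshLimit (t : ℝ) :
    Tendsto (fun q : ℕ+ × ℤ => (q.1 : ℝ)⁻¹) (meshLimit t) (𝓝 0) :=
  tendsto_inv_atTop_nhds_zero_nat.comp
    (tendsto_natCast_hyperfilter.comp (tendsto_fst_meshLimit t))

lemma tendsto_add_one_meshLimit (t : ℝ) :
    Tendsto (fun q : ℕ+ × ℤ => (q.1, q.2 + 1)) (meshLimit t) (meshLimit t) := by
  refine tendsto_meshLimit_iff.2 ⟨tendsto_fst_meshLimit t, ?_⟩
  simpa [add_div] using (tendsto_div_meshLimit t).add (tendsto_inv_meshLimit t)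

lemma tendsto_add_period_meshLimit (t : ℝ) :
    Tendsto (fun q : ℕ+ × ℤ => (q.1, q.2 + q.1)) (meshLimit t) (meshLimit (t + 1)) := by
  refine tendsto_meshLimit_iff.2 ⟨tendsto_fst_meshLimit t, ?_⟩
  refine ((tendsto_div_meshLimit t).add_const 1).congr fun q => ?_
  push_cast
  field_simp

lemma tendsto_intFloor_mul_div_atTop (t : ℝ) :
    Tendsto (fun N : ℕ => (⌊t * N⌋ : ℝ) / N) atTop (𝓝 t) := by
  refine tendsto_iff_norm_sub_tendsto_zero.2
    (squeeze_zero' (.of_forall fun _ => norm_nonneg _) ?_ tendsto_inv_atTop_nhds_zero_nat)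
  filter_upwards [eventually_gt_atTop 0] with N hN
  have hN' : (0 : ℝ) < N := by exact_mod_cast hN
  rw [div_sub' hN'.ne', Real.norm_eq_abs, abs_div, Nat.abs_cast, ← one_div]
  gcongr
  exact abs_le.2 ⟨by linarith [Int.lt_floor_add_one (t * N)], by linarith [Int.floor_le (t * N)]⟩

lemma tendsto_floor_meshLimit (t : ℝ) :
    Tendsto (fun N : ℕ+ => (N, ⌊t * N⌋)) (hyperfilter ℕ+) (meshLimit t) :=
  tendsto_meshLimit_iff.2
    ⟨tendsto_id, (tendsto_intFloor_mul_div_atTop t).comp tendsto_natCast_hyperfilter⟩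

instance neBot_meshLimit (t : ℝ) : (meshLimit t).NeBot := (tendsto_floor_meshLimit t).neBot

lemma exists_pos_of_eventually_meshLimit {t : ℝ} {P : ℕ+ × ℤ → Prop}
    (hP : ∀ᶠ q in meshLimit t, P q) :
    ∃ δ > 0, ∀ᶠ N : ℕ+ in hyperfilter ℕ+, ∀ k : ℤ,
      |(k : ℝ) / (N : ℕ+) - t| < δ → P (N, k) := by
  obtain ⟨s, hs, w, hw, hsw⟩ := eventually_inf.1 hP
  obtain ⟨S, hS, hSs⟩ := mem_comap.1 (prod_top (f := (hyperfilter ℕ+ : Filter ℕ+)) ▸ hs)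
  obtain ⟨W, hW, hWw⟩ := mem_comap.1 hw
  obtain ⟨δ, hδ, hδW⟩ := Metric.mem_nhds_iff.1 hW
  refine ⟨δ, hδ, ?_⟩
  filter_upwards [hS] with N hN k hk
  exact hsw (N, k) ⟨hSs hN, hWw (hδW (by rwa [Metric.mem_ball, Real.dist_eq]))⟩

variable {E : Type*} [NormedAddCommGroup E]

lemma norm_sub_le_abs_sub_mul {b : ℤ → E} {e : ℝ} (hb : ∀ k, ‖b (k + 1) - b k‖ ≤ e) (k j : ℤ) :
    ‖b k - b j‖ ≤ |(k : ℝ) - j| * e := by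
  have hle (j : ℤ) (n : ℕ) : ‖b (j + n) - b j‖ ≤ n * e := by
    have := dist_le_range_sum_of_dist_le (f := fun i : ℕ => b (j + i)) (d := fun _ => e) n
      fun {i} _ => by
        rw [dist_eq_norm', Nat.cast_succ, ← add_assoc]
        exact hb _
    simpa [dist_eq_norm'] using this
  wlog hjk : j ≤ k generalizing k j
  · rw [norm_sub_rev, abs_sub_comm]
    exact this j k (le_of_not_ge hjk)
  obtain ⟨n, rfl⟩ := Int.le.dest hjk
  simpa using hle j n

lemma exists_tendsto_meshLimit [NormedSpace ℝ E] [FiniteDimensional ℝ E] {b : ℕ+ → ℤ → E} {B L : ℝ}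
    (hB : ∀ᶠ N : ℕ+ in hyperfilter ℕ+, ∀ k, ‖b N k‖ ≤ B)
    (hL : ∀ᶠ N : ℕ+ in hyperfilter ℕ+, ∀ k, ‖b N (k + 1) - b N k‖ ≤ L / N) :
    ∃ β : ℝ → E, ∀ t, Tendsto (fun q : ℕ+ × ℤ => b q.1 q.2) (meshLimit t) (𝓝 (β t)) := by
  have hfloor (t : ℝ) : ∃ y, Tendsto (fun N : ℕ+ => b N ⌊t * N⌋) (hyperfilter ℕ+) (𝓝 y) := by
    obtain ⟨y, -, hy⟩ := (isCompact_closedBall (0 : E) B).ultrafilter_le_nhds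
      ((hyperfilter ℕ+).map fun N : ℕ+ => b N ⌊t * N⌋) (by
        rw [le_principal_iff, Ultrafilter.mem_coe, Ultrafilter.mem_map, ← Ultrafilter.mem_coe]
        filter_upwards [hB] with N hN
        simpa using hN _)
    exact ⟨y, hy⟩
  choose β hβ using hfloor
  refine ⟨β, fun t => ?_⟩
  have hdist : Tendsto (fun q : ℕ+ × ℤ => b q.1 q.2 - b q.1 ⌊t * q.1⌋) (meshLimit t) (𝓝 0) := by
    have hq := (((tendsto_div_meshLimit t).sub ((tendsto_meshLimit_iff.1
      (tendsto_floor_meshLimit t)).2.comp (tendsto_fst_meshLimit t))).abs).mul_const L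
    rw [sub_self, abs_zero, zero_mul] at hq
    refine squeeze_zero_norm' ?_ hq
    filter_upwards [(tendsto_fst_meshLimit t).eventually hL] with q hq
    refine (norm_sub_le_abs_sub_mul hq _ _).trans_eq ?_
    simp only [Function.comp]
    rw [← sub_div, abs_div, Nat.abs_cast, mul_div_assoc', div_mul_eq_mul_div]
  simpa using hdist.add ((hβ t).comp (tendsto_fst_meshLimit t))

variable [NormedSpace ℝ E]

lemma norm_sub_sub_smul_le {u : ℕ → E} {b : E} {e : ℝ} {n : ℕ}
    (hu : ∀ j < n, ‖u (j + 1) - u j - b‖ ≤ e) : ‖u n - u 0 - (n : ℝ) • b‖ ≤ n * e := by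
  have := dist_le_range_sum_of_dist_le (f := fun j : ℕ => u j - (j : ℝ) • b) (d := fun _ => e) n
    fun {j} hj => by
      rw [dist_eq_norm']
      convert hu j hj using 1
      congr 1
      push_cast
      module
  simpa [dist_eq_norm', sub_right_comm] using this

lemma norm_sub_sub_div_smul_le {a : ℤ → E} {B : E} {ε δ t : ℝ} {N : ℕ+}
    (ha : ∀ k : ℤ, |(k : ℝ) / N - t| < δ → ‖(N : ℝ) • (a (k + 1) - a k) - B‖ ≤ ε) {k l : ℤ}
    (hkl : k ≤ l) (hk : |(k : ℝ) / N - t| < δ) (hl : |(l : ℝ) / N - t| < δ) :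
    ‖a l - a k - ((l : ℝ) / N - (k : ℝ) / N) • B‖ ≤ ε * ((l : ℝ) / N - (k : ℝ) / N) := by
  obtain ⟨n, rfl⟩ := Int.le.dest hkl
  have hN : (0 : ℝ) < N := by exact_mod_cast N.pos
  have hstep (j : ℕ) (hj : j < n) :
      ‖a (k + (j + 1 : ℕ)) - a (k + j) - (1 / N : ℝ) • B‖ ≤ ε / N := by
    have hmem : |((k + j : ℤ) : ℝ) / N - t| < δ := by
      have hk' : (k : ℝ) / N ≤ (k + j : ℤ) / N := by gcongr; simp
      have hl' : ((k + j : ℤ) : ℝ) / N ≤ (k + n : ℤ) / N := by gcongr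
      rw [abs_lt] at hk hl ⊢
      constructor <;> linarith
    have hscale : a (k + (j + 1 : ℕ)) - a (k + j) - (1 / N : ℝ) • B =
        (1 / N : ℝ) • ((N : ℝ) • (a (k + j + 1) - a (k + j)) - B) := by
      rw [smul_sub _ _ B, smul_smul, one_div_mul_cancel hN.ne', one_smul, Nat.cast_succ, add_assoc]
    rw [hscale, norm_smul, Real.norm_of_nonneg (by positivity), div_mul_eq_mul_div, one_mul]
    gcongr
    exact ha _ hmem
  convert norm_sub_sub_smul_le (u := fun j : ℕ => a (k + j)) hstep using 1
  · rw [smul_smul]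
    push_cast
    congr 3
    · simp
    · ring
  · push_cast
    ring

lemma hasDerivAt_of_forall_norm_sub_sub_smul_le {α : ℝ → E} {B : E} {t : ℝ}
    (h : ∀ ε > 0, ∃ δ > 0, ∀ r s, r ≤ s → |r - t| < δ → |s - t| < δ →
      ‖α s - α r - (s - r) • B‖ ≤ ε * (s - r)) : HasDerivAt α B t := by
  rw [hasDerivAt_iff_isLittleO, Asymptotics.isLittleO_iff]
  intro ε hε
  obtain ⟨δ, hδ, hle⟩ := h ε hε
  filter_upwards [Metric.ball_mem_nhds t hδ] with s hs
  rw [Metric.mem_ball, Real.dist_eq] at hs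
  have ht : |t - t| < δ := by simpa using hδ
  rcases le_total t s with hts | hst
  · rw [Real.norm_of_nonneg (sub_nonneg.2 hts)]
    exact hle t s hts ht hs
  · rw [Real.norm_of_nonpos (sub_nonpos.2 hst), neg_sub, ← norm_neg]
    convert hle s t hst hs ht using 1
    congr 1
    module

lemma hasDerivAt_of_tendsto_meshLimit {a : ℕ+ → ℤ → E} {α : ℝ → E} {B : E} {t : ℝ}
    (ha : ∀ t, Tendsto (fun q : ℕ+ × ℤ => a q.1 q.2) (meshLimit t) (𝓝 (α t)))
    (hB : Tendsto (fun q : ℕ+ × ℤ => (q.1 : ℝ) • (a q.1 (q.2 + 1) - a q.1 q.2))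
      (meshLimit t) (𝓝 B)) : HasDerivAt α B t := by
  refine hasDerivAt_of_forall_norm_sub_sub_smul_le fun ε hε => ?_
  obtain ⟨δ, hδ, hstep⟩ := exists_pos_of_eventually_meshLimit
    ((tendsto_iff_norm_sub_tendsto_zero.1 hB).eventually_le_const hε)
  refine ⟨δ, hδ, fun r s hrs hr hs => ?_⟩
  have hmesh (u : ℝ) := (tendsto_meshLimit_iff.1 (tendsto_floor_meshLimit u)).2
  have hvalue (u : ℝ) := (ha u).comp (tendsto_floor_meshLimit u)
  refine le_of_tendsto_of_tendsto
    (((hvalue s).sub (hvalue r)).sub (((hmesh s).sub (hmesh r)).smul_const B)).norm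
    (((hmesh s).sub (hmesh r)).const_mul ε) ?_
  filter_upwards [(((hmesh r).sub_const t).abs).eventually (gt_mem_nhds hr),
    (((hmesh s).sub_const t).abs).eventually (gt_mem_nhds hs), hstep] with N hrN hsN hN
  exact norm_sub_sub_div_smul_le hN (Int.floor_mono (by gcongr)) hrN hsN

end MeshLimit

/-! ### Closed geodesics as limits of critical polygons -/

section Geodesic

variable {E : Type*} [NormedAddCommGroup E] [InnerProductSpace ℝ E] {F : E → ℝ} {m K : ℝ}
  {c v : ℝ → E}

lemma inner_eq_zero_of_hasDerivAt_of_norm_eq_one (hc : ∀ t, ‖c t‖ = 1) {w : E} {t : ℝ}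
    (hw : HasDerivAt c w t) : ⟪c t, w⟫ = 0 := by
  have hsq := hw.norm_sq
  simp only [hc] at hsq
  linarith [hsq.unique (hasDerivAt_const t _)]

/-- The curve `c`, with velocity `v`, is the limit of the closed `N`-gons `X N`, parametrized over
the unit interval, as `N → ∞` along the ultrafilter of `meshLimit`. -/
structure IsPolygonLimit (X : ∀ N : ℕ+, ZMod N → E) (c v : ℝ → E) : Prop where
  tendsto_vertex : ∀ t, Tendsto (fun q : ℕ+ × ℤ => X q.1 q.2) (meshLimit t) (𝓝 (c t))
  tendsto_edge : ∀ t, Tendsto (fun q : ℕ+ × ℤ => (q.1 : ℝ) • polygonEdge (X q.1) q.2)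
    (meshLimit t) (𝓝 (v t))

variable {X : ∀ N : ℕ+, ZMod N → E}

namespace IsPolygonLimit

variable (hX : IsPolygonLimit X c v)
include hX

lemma hasDerivAt (t : ℝ) : HasDerivAt c (v t) t := by
  refine hasDerivAt_of_tendsto_meshLimit (a := fun N k => X N k) hX.tendsto_vertex
    ((hX.tendsto_edge t).congr fun q => ?_)
  simp [polygonEdge]

lemma periodic : Function.Periodic c 1 := fun t => by
  refine tendsto_nhds_unique
    ((hX.tendsto_vertex (t + 1)).comp (tendsto_add_period_meshLimit t)) ?_
  refine (hX.tendsto_vertex t).congr fun q => ?_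
  simp

lemma tendsto_vertex_add_one (t : ℝ) :
    Tendsto (fun q : ℕ+ × ℤ => X q.1 (q.2 + 1)) (meshLimit t) (𝓝 (c t)) :=
  ((hX.tendsto_vertex t).comp (tendsto_add_one_meshLimit t)).congr fun q => by simp

lemma tendsto_edge_add_one (t : ℝ) :
    Tendsto (fun q : ℕ+ × ℤ => (q.1 : ℝ) • polygonEdge (X q.1) (q.2 + 1)) (meshLimit t)
      (𝓝 (v t)) :=
  ((hX.tendsto_edge t).comp (tendsto_add_one_meshLimit t)).congr fun q => by simp

lemma tendsto_weight_add_weight (hF : Continuous F) (t : ℝ) :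
    Tendsto (fun q : ℕ+ × ℤ => F (X q.1 q.2) + F (X q.1 (q.2 + 1))) (meshLimit t)
      (𝓝 (2 * F (c t))) := by
  rw [two_mul]
  exact ((hF.tendsto _).comp (hX.tendsto_vertex t)).add
    ((hF.tendsto _).comp (hX.tendsto_vertex_add_one t))

lemma tendsto_edgeMomentum (hF : Continuous F) (t : ℝ) :
    Tendsto (fun q : ℕ+ × ℤ => (q.1 : ℝ) • edgeMomentum F (X q.1) q.2) (meshLimit t)
      (𝓝 ((2 * F (c t)) • v t)) :=
  ((hX.tendsto_weight_add_weight hF t).smul (hX.tendsto_edge t)).congr fun _ =>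
    smul_comm _ _ _

lemma norm_eq_one (hunit : ∀ᶠ N : ℕ+ in hyperfilter ℕ+, ∀ i, ‖X N i‖ = 1) (t : ℝ) :
    ‖c t‖ = 1 :=
  tendsto_nhds_unique ((hX.tendsto_vertex t).norm.congr'
    (((tendsto_fst_meshLimit t).eventually hunit).mono fun _ hq => hq _)) tendsto_const_nhds

end IsPolygonLimit

variable [FiniteDimensional ℝ E]

/-- The derivative of the momentum `F(c) c'` along a geodesic of `F` times the round metric of the
unit sphere, at a point `c` with velocity `v`. The tangential part is that of the Euler–Lagrange
equation of the energy `∫ F(c) ‖c'‖² / 2`, the radial part is determined by `‖c‖ = 1`. -/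
def geodesicForce (F : E → ℝ) (c v : E) : E :=
  (‖v‖ ^ 2 / 2) • (∇ F c - ⟪c, ∇ F c⟫ • c) - (F c * ‖v‖ ^ 2) • c

/-- `c` is a geodesic, with velocity `v`, of `F` times the round metric of the unit sphere. -/
structure IsConformalGeodesic (F : E → ℝ) (c v : ℝ → E) : Prop where
  norm_eq_one : ∀ t, ‖c t‖ = 1
  hasDerivAt : ∀ t, HasDerivAt c (v t) t
  hasDerivAt_momentum : ∀ t, HasDerivAt (fun s => F (c s) • v s) (geodesicForce F (c t) (v t)) t

namespace IsConformalGeodesic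

variable (hF : IsConformalWeight F m K) (hc : IsConformalGeodesic F c v)
include hF hc

lemma energy_eq (t s : ℝ) : F (c t) * ‖v t‖ ^ 2 = F (c s) * ‖v s‖ ^ 2 := by
  have hpos (t : ℝ) : 0 < F (c t) := hF.pos.trans_le (hF.le_apply _ (hc.norm_eq_one t))
  have henergy (t : ℝ) : F (c t) * ‖v t‖ ^ 2 = ‖F (c t) • v t‖ ^ 2 / F (c t) := by
    rw [norm_smul, Real.norm_of_nonneg (hpos t).le]
    field_simp [(hpos t).ne']
  have hderiv (t : ℝ) : HasDerivAt (fun s => ‖F (c s) • v s‖ ^ 2 / F (c s)) 0 t := by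
    have hperp : ⟪v t, c t⟫ = 0 := by
      rw [real_inner_comm]
      exact inner_eq_zero_of_hasDerivAt_of_norm_eq_one hc.norm_eq_one (hc.hasDerivAt t)
    have hquot := (hc.hasDerivAt_momentum t).norm_sq.div (hF.hasDerivAt_comp (hc.hasDerivAt t))
      (hpos t).ne'
    refine hquot.congr_deriv ?_
    simp only [geodesicForce, inner_sub_right, real_inner_smul_right, real_inner_smul_left, hperp,
      norm_smul, Real.norm_of_nonneg (hpos t).le, real_inner_comm (v t) (∇ F (c t))]
    field_simp [(hpos t).ne']
    ring
  rw [henergy, henergy]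
  exact is_const_of_deriv_eq_zero (fun t => (hderiv t).differentiableAt) (fun t => (hderiv t).deriv)
    t s

end IsConformalGeodesic

namespace IsPolygonLimit

variable (hX : IsPolygonLimit X c v) (hF : IsConformalWeight F m K)
include hX hF

lemma isConformalGeodesic
    (hcrit : ∀ᶠ N : ℕ+ in hyperfilter ℕ+, (∀ i, ‖X N i‖ = 1) ∧
      tangentialGradient (polygonEnergy F) (X N) = 0) : IsConformalGeodesic F c v := by
  refine ⟨hX.norm_eq_one (hcrit.mono fun _ h => h.1), hX.hasDerivAt, fun t => ?_⟩
  have hcont := hF.contDiff.continuous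
  have hvertex := hX.tendsto_vertex_add_one t
  have hgrad := (hF.continuous_gradient.tendsto _).comp hvertex
  have hnext := (hX.tendsto_edge_add_one t).norm.pow 2
  have hprev := (hX.tendsto_edge t).norm.pow 2
  have hweight := (hX.tendsto_weight_add_weight hcont t).comp (tendsto_add_one_meshLimit t)
  have hlim := (((hnext.add hprev).smul hgrad).sub (((((hnext.add hprev).mul
    (hvertex.inner (𝕜 := ℝ) hgrad)).add (hweight.mul hnext)).add
      ((hX.tendsto_weight_add_weight hcont t).mul hprev)).smul hvertex)).const_smul (1 / 2 : ℝ)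
  have hderiv := hasDerivAt_of_tendsto_meshLimit
    (a := fun N k => (N : ℝ) • edgeMomentum F (X N) k) (hX.tendsto_edgeMomentum hcont)
    (hlim.congr' <| by
      filter_upwards [(tendsto_fst_meshLimit t).eventually hcrit] with q ⟨hunit, hq⟩
      rw [Int.cast_add, Int.cast_one, ← smul_sub, edgeMomentum_sub_eq hF hunit hq]
      simp only [norm_smul, mul_pow, Real.norm_natCast, Function.comp, Int.cast_add, Int.cast_one]
      module)
  refine (hderiv.const_smul (1 / 2 : ℝ)).congr_of_eventuallyEq (.of_forall fun s => ?_)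
    |>.congr_deriv ?_
  · simp only [Pi.smul_apply]
    module
  · rw [geodesicForce]
    module

variable (hc : IsConformalGeodesic F c v)
include hc

lemma tendsto_edge_energy (I : ∀ N : ℕ+, ZMod N) :
    Tendsto (fun N => (F (X N (I N)) + F (X N (I N + 1))) *
      ‖(N : ℝ) • polygonEdge (X N) (I N)‖ ^ 2) (hyperfilter ℕ+)
      (𝓝 (2 * (F (c 0) * ‖v 0‖ ^ 2))) := by
  obtain ⟨t, -, ht⟩ := (isCompact_Icc (a := (0 : ℝ)) (b := 1)).ultrafilter_le_nhds
    ((hyperfilter ℕ+).map fun N : ℕ+ => ((I N).val : ℝ) / N) (by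
      rw [le_principal_iff, Ultrafilter.mem_coe, Ultrafilter.mem_map]
      refine univ_mem' fun N => ?_
      have hN : (0 : ℝ) < N := by exact_mod_cast N.pos
      have hlt : ((I N).val : ℝ) ≤ N := by exact_mod_cast (ZMod.val_lt (I N)).le
      exact ⟨by positivity, (div_le_one hN).2 hlt⟩)
  have hI : Tendsto (fun N : ℕ+ => (N, ((I N).val : ℤ))) (hyperfilter ℕ+) (meshLimit t) :=
    tendsto_meshLimit_iff.2 ⟨tendsto_id, by simpa only [Int.cast_natCast] using! ht⟩
  have hlim := ((hX.tendsto_weight_add_weight hF.contDiff.continuous t).mul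
    ((hX.tendsto_edge t).norm.pow 2)).comp hI
  rw [mul_assoc, hc.energy_eq hF t 0] at hlim
  refine hlim.congr fun N => ?_
  simp

/-- Each edge has asymptotically the same energy, and the energy of `X N` is `N` times an average
of these. -/
lemma tendsto_polygonEnergy :
    Tendsto (fun N : ℕ+ => N * polygonEnergy F (X N)) (hyperfilter ℕ+)
      (𝓝 (2 * (F (c 0) * ‖v 0‖ ^ 2))) := by
  let g (N : ℕ+) (i : ZMod N) : ℝ :=
    (F (X N i) + F (X N (i + 1))) * ‖(N : ℝ) • polygonEdge (X N) i‖ ^ 2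
  have hsum (N : ℕ+) : ∑ i, g N i = ∑ _i : ZMod N, N * polygonEnergy F (X N) := by
    simp only [g, Finset.sum_const, Finset.card_univ, ZMod.card, nsmul_eq_mul, polygonEnergy,
      Finset.mul_sum, norm_smul, Real.norm_natCast, mul_pow]
    exact Finset.sum_congr rfl fun i _ => by ring
  choose I _ hI using fun N => Finset.exists_le_of_sum_le Finset.univ_nonempty (hsum N).le
  choose J _ hJ using fun N => Finset.exists_le_of_sum_le Finset.univ_nonempty (hsum N).ge
  exact tendsto_of_tendsto_of_tendsto_of_le_of_le (hX.tendsto_edge_energy hF hc I)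
    (hX.tendsto_edge_energy hF hc J) hI hJ

end IsPolygonLimit

lemma exists_isPolygonLimit (hF : IsConformalWeight F m K) {D : ℝ}
    (hcrit : ∀ᶠ N : ℕ+ in hyperfilter ℕ+, (∀ i, ‖X N i‖ = 1) ∧
      tangentialGradient (polygonEnergy F) (X N) = 0 ∧ N * polygonEnergy F (X N) ≤ D) :
    ∃ c v, IsPolygonLimit X c v := by
  obtain ⟨L, hL⟩ := exists_critical_polygon_bound hF D
  have hbound := hcrit.mono fun N h => hL N (X N) h.1 h.2.1 h.2.2
  obtain ⟨c, hc⟩ := exists_tendsto_meshLimit (b := fun N k => X N k)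
    (hcrit.mono fun N h k => (h.1 k).le) (hbound.mono fun N h k => by
      simpa [polygonEdge] using (h k).2.1)
  obtain ⟨w, hw⟩ := exists_tendsto_meshLimit
    (b := fun N k => (N : ℝ) • edgeMomentum F (X N) k) (B := L) (L := L)
    (hbound.mono fun N h k => by
      have hN : (0 : ℝ) < N := by exact_mod_cast N.pos
      rw [norm_smul, Real.norm_natCast, ← le_div_iff₀' hN]
      exact (h k).1)
    (hbound.mono fun N h k => by
      have hN : (0 : ℝ) < N := by exact_mod_cast N.pos
      rw [← smul_sub, norm_smul, Real.norm_natCast, ← le_div_iff₀' hN, div_div, ← sq]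
      simpa using (h k).2.2)
  refine ⟨c, fun t => (F (c t) + F (c t))⁻¹ • w t, hc, fun t => ?_⟩
  have hFc : Tendsto (fun q : ℕ+ × ℤ => F (X q.1 q.2)) (meshLimit t) (𝓝 (F (c t))) :=
    (hF.contDiff.continuous.tendsto _).comp (hc t)
  have hunit : ∀ᶠ q : ℕ+ × ℤ in meshLimit t, ∀ i, ‖X q.1 i‖ = 1 :=
    (tendsto_fst_meshLimit t).eventually (hcrit.mono fun _ h => h.1)
  have hpos : m ≤ F (c t) := ge_of_tendsto hFc (hunit.mono fun q h => hF.le_apply _ (h _))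
  have hinv := (hFc.add (hFc.comp (tendsto_add_one_meshLimit t))).inv₀ (by linarith [hF.pos])
  refine (hinv.smul (hw t)).congr' (hunit.mono fun q h => ?_)
  have hne := two_mul_le_weight hF h q.2
  simp only [Function.comp, Int.cast_add, Int.cast_one, edgeMomentum]
  rw [smul_comm (q.1 : ℝ), smul_smul, inv_mul_cancel₀ (by linarith [hF.pos]), one_smul]

lemma exists_isConformalGeodesic_of_critical_polygons (hF : IsConformalWeight F m K) {D : ℕ+ → ℝ}
    {D₀ : ℝ} (hD : Tendsto D (hyperfilter ℕ+) (𝓝 D₀))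
    (hcrit : ∀ᶠ N : ℕ+ in hyperfilter ℕ+, ∃ x : ZMod N → E, (∀ i, ‖x i‖ = 1) ∧
      tangentialGradient (polygonEnergy F) x = 0 ∧ 2 * m ≤ N * polygonEnergy F x ∧
        N * polygonEnergy F x ≤ D N) :
    ∃ c v, IsConformalGeodesic F c v ∧ Function.Periodic c 1 ∧
      m ≤ F (c 0) * ‖v 0‖ ^ 2 ∧ 2 * (F (c 0) * ‖v 0‖ ^ 2) ≤ D₀ := by
  classical
  choose! X hX using fun (N : ℕ+) (hN : ∃ x : ZMod N → E, (∀ i, ‖x i‖ = 1) ∧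
      tangentialGradient (polygonEnergy F) x = 0 ∧ 2 * m ≤ N * polygonEnergy F x ∧
        N * polygonEnergy F x ≤ D N) => hN
  replace hX := hcrit.mono hX
  have hD₁ : ∀ᶠ N : ℕ+ in hyperfilter ℕ+, D N ≤ D₀ + 1 :=
    hD.eventually_le_const (lt_add_one D₀)
  obtain ⟨c, v, hlim⟩ := exists_isPolygonLimit hF
    ((hX.and hD₁).mono fun N h => ⟨h.1.1, h.1.2.1, h.1.2.2.2.trans h.2⟩)
  have hc := hlim.isConformalGeodesic hF (hX.mono fun N h => ⟨h.1, h.2.1⟩)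
  have henergy := hlim.tendsto_polygonEnergy hF hc
  have hlower := ge_of_tendsto henergy (hX.mono fun N h => h.2.2.1)
  exact ⟨c, v, hc, hlim.periodic, by linarith,
    le_of_tendsto_of_tendsto henergy hD (hX.mono fun N h => h.2.2.2)⟩

end Geodesic

/-! ### The sweepout by meridians -/

section ArcLength

/-- The function `g` is a possible speed for a curve: bounded below by `m > 0` and `L`-Lipschitz. -/
structure IsSpeed (g : ℝ → ℝ) (m : ℝ) (L : NNReal) : Prop where
  pos : 0 < m
  le_apply : ∀ u, m ≤ g u
  lipschitz : LipschitzWith L g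

/-- The arc length from parameter `0` of a curve with speed `g`. -/
def arcLength (g : ℝ → ℝ) (θ : ℝ) : ℝ := ∫ u in 0..θ, g u

/-- The parameter at which a curve with speed `g` has a given arc length. -/
def arcLengthInv (g : ℝ → ℝ) : ℝ → ℝ := Function.invFun (arcLength g)

lemma arcLength_zero (g : ℝ → ℝ) : arcLength g 0 = 0 := intervalIntegral.integral_same

lemma arcLength_comp_neg (g : ℝ → ℝ) (θ : ℝ) :
    arcLength (fun u => g (-u)) θ = -arcLength g (-θ) := by
  rw [arcLength, arcLength, intervalIntegral.integral_comp_neg, neg_zero,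
    intervalIntegral.integral_symm]

namespace IsSpeed

variable {g : ℝ → ℝ} {m : ℝ} {L : NNReal} (h : IsSpeed g m L)
include h

lemma comp_neg : IsSpeed (fun u => g (-u)) m L :=
  ⟨h.pos, fun u => h.le_apply (-u), LipschitzWith.of_dist_le_mul fun u v => by
    simpa only [dist_neg_neg] using h.lipschitz.dist_le_mul (-u) (-v)⟩

lemma intervalIntegrable (a b : ℝ) : IntervalIntegrable g volume a b :=
  h.lipschitz.continuous.intervalIntegrable a b

lemma arcLength_sub (a b : ℝ) : arcLength g b - arcLength g a = ∫ u in a..b, g u :=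
  intervalIntegral.integral_interval_sub_left (h.intervalIntegrable _ _) (h.intervalIntegrable _ _)

lemma mul_sub_le_arcLength_sub {a b : ℝ} (hab : a ≤ b) :
    m * (b - a) ≤ arcLength g b - arcLength g a := by
  rw [h.arcLength_sub, mul_comm, ← smul_eq_mul, ← intervalIntegral.integral_const]
  exact intervalIntegral.integral_mono_on hab (by simp) (h.intervalIntegrable _ _)
    fun u _ => h.le_apply u

lemma mul_abs_sub_le_abs_arcLength_sub (a b : ℝ) :
    m * |b - a| ≤ |arcLength g b - arcLength g a| := by
  rcases le_total a b with hab | hab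
  · rw [abs_of_nonneg (sub_nonneg.2 hab)]
    exact (h.mul_sub_le_arcLength_sub hab).trans (le_abs_self _)
  · rw [abs_sub_comm, abs_of_nonneg (sub_nonneg.2 hab), abs_sub_comm]
    exact (h.mul_sub_le_arcLength_sub hab).trans (le_abs_self _)

lemma arcLength_strictMono : StrictMono (arcLength g) := fun a b hab => by
  have := h.mul_sub_le_arcLength_sub hab.le
  have := mul_pos h.pos (sub_pos.2 hab)
  linarith

lemma arcLength_surjective : Function.Surjective (arcLength g) := by
  refine Continuous.surjective (intervalIntegral.continuous_primitive h.intervalIntegrable 0)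
    (tendsto_atTop_mono' _ ?_ (tendsto_id.const_mul_atTop h.pos))
    (tendsto_atBot_mono' _ ?_ (tendsto_id.const_mul_atBot h.pos))
  · filter_upwards [eventually_ge_atTop 0] with θ hθ
    simpa [arcLength_zero] using h.mul_sub_le_arcLength_sub hθ
  · filter_upwards [eventually_le_atBot 0] with θ hθ
    simpa [arcLength_zero] using h.mul_sub_le_arcLength_sub hθ

lemma arcLength_arcLengthInv (s : ℝ) : arcLength g (arcLengthInv g s) = s :=
  Function.rightInverse_invFun h.arcLength_surjective s

lemma arcLengthInv_eq_of_arcLength_eq {θ s : ℝ} (hθ : arcLength g θ = s) : arcLengthInv g s = θ :=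
  h.arcLength_strictMono.injective ((h.arcLength_arcLengthInv s).trans hθ.symm)

lemma arcLengthInv_comp_neg (s : ℝ) :
    arcLengthInv (fun u => g (-u)) s = -arcLengthInv g (-s) :=
  h.comp_neg.arcLengthInv_eq_of_arcLength_eq <| by
    rw [arcLength_comp_neg, neg_neg, h.arcLength_arcLengthInv, neg_neg]

lemma arcLengthInv_add_of_periodic {P : ℝ} (hP : Function.Periodic g P) (s : ℝ) :
    arcLengthInv g (s + arcLength g P) = arcLengthInv g s + P := by
  refine h.arcLengthInv_eq_of_arcLength_eq ?_
  have hint := h.arcLength_sub (arcLengthInv g s) (arcLengthInv g s + P)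
  rw [hP.intervalIntegral_add_eq _ 0, zero_add, h.arcLength_arcLengthInv] at hint
  linarith [show arcLength g P = ∫ u in 0..P, g u from rfl]

lemma mul_abs_arcLengthInv_sub_le (s θ : ℝ) : m * |arcLengthInv g s - θ| ≤ |s - arcLength g θ| := by
  simpa only [h.arcLength_arcLengthInv] using
    h.mul_abs_sub_le_abs_arcLength_sub θ (arcLengthInv g s)

lemma arcLengthInv_mono : Monotone (arcLengthInv g) := fun s s' hs => by
  rwa [← h.arcLength_strictMono.le_iff_le, h.arcLength_arcLengthInv, h.arcLength_arcLengthInv]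

lemma arcLengthInv_add_sub_nonneg (s : ℝ) {δ : ℝ} (hδ : 0 ≤ δ) :
    0 ≤ arcLengthInv g (s + δ) - arcLengthInv g s :=
  sub_nonneg.2 (h.arcLengthInv_mono (le_add_of_nonneg_right hδ))

lemma mul_arcLengthInv_add_sub_le (s : ℝ) {δ : ℝ} (hδ : 0 ≤ δ) :
    m * (arcLengthInv g (s + δ) - arcLengthInv g s) ≤ δ := by
  simpa only [h.arcLength_arcLengthInv, abs_of_nonneg (h.arcLengthInv_add_sub_nonneg s hδ),
    add_sub_cancel_left, abs_of_nonneg hδ] using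
    h.mul_abs_arcLengthInv_sub_le (s + δ) (arcLengthInv g s)

lemma apply_mul_arcLengthInv_add_sub_le {s δ u : ℝ} (hδ : 0 ≤ δ)
    (hu : u ∈ Set.Icc (arcLengthInv g s) (arcLengthInv g (s + δ))) :
    g u * (arcLengthInv g (s + δ) - arcLengthInv g s) ≤ δ + L / m ^ 2 * δ ^ 2 := by
  have hm := h.pos
  have hd0 := h.arcLengthInv_add_sub_nonneg s hδ
  have hd : arcLengthInv g (s + δ) - arcLengthInv g s ≤ δ / m := by
    rw [le_div_iff₀' hm]
    exact h.mul_arcLengthInv_add_sub_le s hδ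
  have hsub := h.arcLength_sub (arcLengthInv g s) (arcLengthInv g (s + δ))
  rw [h.arcLength_arcLengthInv, h.arcLength_arcLengthInv, add_sub_cancel_left] at hsub
  set a := arcLengthInv g s
  set b := arcLengthInv g (s + δ)
  have hint : (b - a) * (g u - L * (b - a)) ≤ δ := by
    rw [hsub, ← smul_eq_mul, ← intervalIntegral.integral_const]
    refine intervalIntegral.integral_mono_on (hu.1.trans hu.2) (by simp)
      (h.intervalIntegrable _ _) fun w hw => ?_
    have hdist := h.lipschitz.dist_le_mul u w
    have hle : L * dist u w ≤ L * (b - a) := by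
      gcongr
      exact Real.dist_le_of_mem_Icc hu hw
    rw [Real.dist_eq] at hdist
    linarith [le_abs_self (g u - g w)]
  have hsq : L * (b - a) ^ 2 ≤ L / m ^ 2 * δ ^ 2 := by
    calc L * (b - a) ^ 2 ≤ L * (δ / m) ^ 2 := by gcongr
      _ = L / m ^ 2 * δ ^ 2 := by ring
  linarith

end IsSpeed

lemma continuous_arcLengthInv {A : Type*} [TopologicalSpace A] {g : A → ℝ → ℝ} {m : ℝ} {L : NNReal}
    (hg : Continuous (Function.uncurry g)) (h : ∀ r, IsSpeed (g r) m L) (s : ℝ) :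
    Continuous fun r => arcLengthInv (g r) s := by
  refine continuous_iff_continuousAt.2 fun r₀ => ?_
  set θ₀ := arcLengthInv (g r₀) s
  have hlen : Continuous fun r => arcLength (g r) θ₀ :=
    intervalIntegral.continuous_parametric_intervalIntegral_of_continuous' hg 0 θ₀
  have hcont : Continuous fun r => |s - arcLength (g r) θ₀| / m := by fun_prop
  have hlim : Tendsto (fun r => |s - arcLength (g r) θ₀| / m) (𝓝 r₀) (𝓝 0) := by
    simpa [θ₀, (h r₀).arcLength_arcLengthInv] using hcont.tendsto r₀
  refine tendsto_iff_dist_tendsto_zero.2 (squeeze_zero (fun _ => dist_nonneg) (fun r => ?_) hlim)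
  rw [le_div_iff₀' (h r).pos]
  exact (h r).mul_abs_arcLengthInv_sub_le s θ₀

end ArcLength

section GreatCircles

variable {E : Type*} [NormedAddCommGroup E] [InnerProductSpace ℝ E]

/-- The curve `γ` is a parametrization of a great circle of the unit sphere by arc length. -/
def IsGreatCircleParam (γ : ℝ → E) : Prop := ∀ a b, ⟪γ a, γ b⟫ = cos (a - b)

namespace IsGreatCircleParam

variable {γ : ℝ → E} (hγ : IsGreatCircleParam γ)
include hγ

lemma norm_eq_one (a : ℝ) : ‖γ a‖ = 1 := by
  rw [norm_eq_sqrt_real_inner, hγ, sub_self, cos_zero, sqrt_one]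

lemma dist_eq (a b : ℝ) : dist (γ a) (γ b) = 2 * |sin ((a - b) / 2)| := by
  have hcos := cos_two_mul ((a - b) / 2)
  rw [mul_div_cancel₀ _ two_ne_zero] at hcos
  rw [dist_eq_norm, ← sq_eq_sq₀ (norm_nonneg _) (by positivity), norm_sub_sq_real, hγ.norm_eq_one,
    hγ.norm_eq_one, hγ, mul_pow, sq_abs, hcos]
  linear_combination -4 * sin_sq_add_cos_sq ((a - b) / 2)

lemma lipschitzWith : LipschitzWith 1 γ := LipschitzWith.of_dist_le_mul fun a b => by
  have hsin := abs_sin_le_abs (x := (a - b) / 2)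
  rw [abs_div, abs_two] at hsin
  rw [hγ.dist_eq, NNReal.coe_one, one_mul, Real.dist_eq]
  linarith

lemma periodic : Function.Periodic γ (2 * π) := fun a => dist_eq_zero.1 <| by
  rw [hγ.dist_eq, add_sub_cancel_left, mul_div_cancel_left₀ _ two_ne_zero, sin_pi, abs_zero,
    mul_zero]

end IsGreatCircleParam

end GreatCircles

section Meridians

open scoped Quaternion

/-- The great circle through the poles formed by the meridians of longitudes `r` and `r + π`. -/
def meridian (r θ : ℝ) : E3 := !₂[sin θ * cos r, sin θ * sin r, cos θ]

lemma continuous_meridian : Continuous fun z : ℝ × ℝ => meridian z.1 z.2 := by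
  refine (PiLp.continuous_toLp 2 _).comp (continuous_pi fun i => ?_)
  fin_cases i <;> dsimp <;> fun_prop

lemma isGreatCircleParam_meridian (r : ℝ) : IsGreatCircleParam (meridian r) := fun θ θ' => by
  simp only [meridian, PiLp.inner_apply, Fin.sum_univ_three, cos_sub]
  simp
  linear_combination sin θ * sin θ' * sin_sq_add_cos_sq r

lemma norm_meridian (r θ : ℝ) : ‖meridian r θ‖ = 1 := (isGreatCircleParam_meridian r).norm_eq_one θ

lemma meridian_pi (θ : ℝ) : meridian π θ = meridian 0 (-θ) := by
  ext i; fin_cases i <;> simp [meridian]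

lemma transport_meridian (r θ θ' : ℝ) : transport (meridian r θ) (meridian r θ') =
    ⟨1 + cos (θ' - θ), -(sin (θ' - θ) * sin r), sin (θ' - θ) * cos r, 0⟩ := by
  ext <;> simp [transport, meridian, cos_sub, sin_sub]
  · linear_combination sin θ * sin θ' * sin_sq_add_cos_sq r
  all_goals ring

/-- Along a meridian all factors of the holonomy lie in a copy of `ℂ`, where the factor of an arc of
length `d` is a positive multiple of `exp (i d / 2)`. -/
lemma exists_holonomy_meridian_eq (r : ℝ) {θ : ℕ → ℝ}
    (hθ : ∀ k, 0 ≤ θ (k + 1) - θ k ∧ θ (k + 1) - θ k < π) (n : ℕ) :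
    ∃ ρ > 0, holonomy (fun k => meridian r (θ k)) n = ⟨ρ * cos ((θ n - θ 0) / 2),
      -(ρ * sin ((θ n - θ 0) / 2) * sin r), ρ * sin ((θ n - θ 0) / 2) * cos r, 0⟩ := by
  induction n with
  | zero => exact ⟨1, one_pos, by ext <;> simp [holonomy]⟩
  | succ n ih =>
    obtain ⟨ρ, hρ, hQ⟩ := ih
    obtain ⟨d, hd⟩ : ∃ d, θ (n + 1) - θ n = 2 * d := ⟨(θ (n + 1) - θ n) / 2, by ring⟩
    have hcos : 0 < cos d :=
      cos_pos_of_mem_Ioo ⟨by linarith [pi_pos, hθ n], by linarith [hθ n]⟩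
    refine ⟨2 * cos d * ρ, by positivity, ?_⟩
    have hsum : (θ (n + 1) - θ 0) / 2 = d + (θ n - θ 0) / 2 := by linarith
    rw [holonomy, hQ, transport_meridian, hd, hsum, cos_two_mul, sin_two_mul, cos_add, sin_add]
    ext
    · refine (Quaternion.re_mul _ _).trans ?_
      linear_combination
        (-2 * sin d * cos d * ρ * sin ((θ n - θ 0) / 2)) * sin_sq_add_cos_sq r
    · refine (Quaternion.imI_mul _ _).trans ?_; ring
    · refine (Quaternion.imJ_mul _ _).trans ?_; ring
    · refine (Quaternion.imK_mul _ _).trans ?_; ring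

end Meridians

section MeridianSweepout

open scoped Quaternion

/-- The positive function `φ` on the unit sphere is the factor of a conformal change of metric for
which all the great circles through the poles have the same length `ℓ`. -/
structure IsMeridianFactor (φ : E3 → ℝ) (m : ℝ) (L : NNReal) (ℓ : ℝ) : Prop where
  pos : 0 < m
  le_apply : ∀ x, ‖x‖ = 1 → m ≤ φ x
  lipschitz : LipschitzOnWith L φ (Metric.sphere 0 1)
  length_eq : ∀ r, ∫ θ in 0..2 * π, φ (meridian r θ) = ℓ

/-- The meridian `r`, parametrized by arc length for the conformal factor `φ`. -/
def meridianPoint (φ : E3 → ℝ) (r s : ℝ) : E3 :=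
  meridian r (arcLengthInv (fun θ => φ (meridian r θ)) s)

/-- The polygon dividing the meridian `r` of length `ℓ` into `N` arcs of equal length. -/
def meridianPolygon (φ : E3 → ℝ) (ℓ : ℝ) (N : ℕ) (r : ℝ) (i : ZMod N) : E3 :=
  meridianPoint φ r (ℓ * i.val / N)

lemma norm_meridianPoint (φ : E3 → ℝ) (r s : ℝ) : ‖meridianPoint φ r s‖ = 1 := norm_meridian _ _

namespace IsMeridianFactor

variable {φ : E3 → ℝ} {m : ℝ} {L : NNReal} {ℓ : ℝ} (h : IsMeridianFactor φ m L ℓ)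
include h

lemma isSpeed (r : ℝ) : IsSpeed (fun θ => φ (meridian r θ)) m L where
  pos := h.pos
  le_apply _ := h.le_apply _ (norm_meridian _ _)
  lipschitz := LipschitzWith.of_dist_le_mul fun θ θ' =>
    (h.lipschitz.dist_le_mul _ (by simp [norm_meridian]) _ (by simp [norm_meridian])).trans <| by
      gcongr
      simpa using (isGreatCircleParam_meridian r).lipschitzWith.dist_le_mul θ θ'

lemma arcLength_two_pi (r : ℝ) : arcLength (fun θ => φ (meridian r θ)) (2 * π) = ℓ := h.length_eq r

lemma length_nonneg : 0 ≤ ℓ := by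
  have hmono := (h.isSpeed 0).arcLength_strictMono.monotone two_pi_pos.le
  rwa [arcLength_zero, h.arcLength_two_pi] at hmono

lemma continuous_meridianPoint (s : ℝ) : Continuous fun r => meridianPoint φ r s := by
  have hφ : Continuous fun z : ℝ × ℝ => φ (meridian z.1 z.2) :=
    h.lipschitz.continuousOn.comp_continuous continuous_meridian
      fun z => by simp [norm_meridian]
  have hinv := continuous_arcLengthInv (g := fun r θ => φ (meridian r θ)) hφ h.isSpeed s
  exact continuous_meridian.comp (f := fun r => (r, arcLengthInv (fun θ => φ (meridian r θ)) s))
    (continuous_id.prodMk hinv)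

lemma arcLengthInv_add_length (r s : ℝ) :
    arcLengthInv (fun θ => φ (meridian r θ)) (s + ℓ) =
      arcLengthInv (fun θ => φ (meridian r θ)) s + 2 * π := by
  rw [← h.arcLength_two_pi r]
  exact (h.isSpeed r).arcLengthInv_add_of_periodic
    ((isGreatCircleParam_meridian r).periodic.comp φ) s

lemma periodic_meridianPoint (r : ℝ) : Function.Periodic (meridianPoint φ r) ℓ := fun s => by
  rw [meridianPoint, h.arcLengthInv_add_length, (isGreatCircleParam_meridian r).periodic,
    meridianPoint]

lemma meridianPoint_pi (s : ℝ) : meridianPoint φ π s = meridianPoint φ 0 (-s) := by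
  have hinv : arcLengthInv (fun θ => φ (meridian π θ)) s =
      -arcLengthInv (fun θ => φ (meridian 0 θ)) (-s) := by
    simp only [meridian_pi]
    exact (h.isSpeed 0).arcLengthInv_comp_neg s
  rw [meridianPoint, meridian_pi, hinv, neg_neg, meridianPoint]

lemma add_sq_mul_norm_meridianPoint_sub_sq_le (r s : ℝ) {δ : ℝ} (hδ : 0 ≤ δ) :
    (φ (meridianPoint φ r s) ^ 2 + φ (meridianPoint φ r (s + δ)) ^ 2) *
      ‖meridianPoint φ r (s + δ) - meridianPoint φ r s‖ ^ 2 ≤ 2 * (δ + L / m ^ 2 * δ ^ 2) ^ 2 := by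
  have hmono := (h.isSpeed r).arcLengthInv_mono (le_add_of_nonneg_right (a := s) hδ)
  have hd0 := (h.isSpeed r).arcLengthInv_add_sub_nonneg s hδ
  have hstart := (h.isSpeed r).apply_mul_arcLengthInv_add_sub_le hδ ⟨le_rfl, hmono⟩
  have hend := (h.isSpeed r).apply_mul_arcLengthInv_add_sub_le hδ ⟨hmono, le_rfl⟩
  have hnorm : ‖meridianPoint φ r (s + δ) - meridianPoint φ r s‖ ≤
      arcLengthInv (fun θ => φ (meridian r θ)) (s + δ) -
        arcLengthInv (fun θ => φ (meridian r θ)) s := by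
    simpa [dist_eq_norm, abs_of_nonneg hd0, meridianPoint] using
      (isGreatCircleParam_meridian r).lipschitzWith.dist_le_mul
        (arcLengthInv (fun θ => φ (meridian r θ)) (s + δ))
        (arcLengthInv (fun θ => φ (meridian r θ)) s)
  have hφ (s : ℝ) : 0 ≤ φ (meridianPoint φ r s) :=
    h.pos.le.trans (h.le_apply _ (norm_meridianPoint _ _ _))
  set d := arcLengthInv (fun θ => φ (meridian r θ)) (s + δ) -
    arcLengthInv (fun θ => φ (meridian r θ)) s
  set w := δ + L / m ^ 2 * δ ^ 2
  calc _ ≤ (φ (meridianPoint φ r s) ^ 2 + φ (meridianPoint φ r (s + δ)) ^ 2) * d ^ 2 := by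
        gcongr
    _ = (φ (meridianPoint φ r s) * d) ^ 2 + (φ (meridianPoint φ r (s + δ)) * d) ^ 2 := by ring
    _ ≤ w ^ 2 + w ^ 2 := add_le_add (pow_le_pow_left₀ (mul_nonneg (hφ _) hd0) hstart 2)
        (pow_le_pow_left₀ (mul_nonneg (hφ _) hd0) hend 2)
    _ = 2 * w ^ 2 := by ring

variable {N : ℕ}

lemma continuous_meridianPolygon : Continuous (meridianPolygon φ ℓ N) :=
  continuous_pi fun _ => h.continuous_meridianPoint _

variable [NeZero N]

lemma meridianPolygon_intCast (r : ℝ) (k : ℤ) :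
    meridianPolygon φ ℓ N r k = meridianPoint φ r (ℓ * k / N) := by
  have hN : (N : ℝ) ≠ 0 := NeZero.ne _
  have hk : ((k : ZMod N).val : ℝ) + N * (k / N : ℤ) = k := by
    have := Int.emod_add_mul_ediv k N
    rw [← ZMod.val_intCast] at this
    exact_mod_cast this
  have harg : ℓ * k / N = ℓ * (k : ZMod N).val / N + (k / N : ℤ) * ℓ := by
    rw [← hk]
    field_simp
  rw [harg, (h.periodic_meridianPoint r).int_mul, meridianPolygon]

lemma meridianPolygon_pi :
    meridianPolygon φ ℓ N π = reversePolygon (meridianPolygon φ ℓ N 0) := by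
  funext i
  obtain ⟨k, rfl⟩ := ZMod.intCast_surjective i
  rw [reversePolygon, ← Int.cast_neg, h.meridianPolygon_intCast, h.meridianPolygon_intCast,
    h.meridianPoint_pi]
  congr 1
  push_cast
  ring

lemma mul_polygonEnergy_meridianPolygon_le {F : E3 → ℝ} (hF : ∀ x, ‖x‖ = 1 → F x = φ x ^ 2)
    (r : ℝ) :
    N * polygonEnergy F (meridianPolygon φ ℓ N r) ≤ 2 * (ℓ + L / m ^ 2 * ℓ ^ 2 / N) ^ 2 := by
  have hN : (0 : ℝ) < N := by exact_mod_cast NeZero.pos N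
  set w := ℓ / N + L / m ^ 2 * (ℓ / N) ^ 2
  have hedge (i : ZMod N) : (F (meridianPolygon φ ℓ N r i) + F (meridianPolygon φ ℓ N r (i + 1))) *
      ‖polygonEdge (meridianPolygon φ ℓ N r) i‖ ^ 2 ≤ 2 * w ^ 2 := by
    obtain ⟨k, rfl⟩ := ZMod.intCast_surjective i
    have hk : ℓ * (k + 1 : ℤ) / N = ℓ * k / N + ℓ / N := by
      push_cast
      ring
    rw [polygonEdge, show (k : ZMod N) + 1 = (k + 1 : ℤ) by push_cast; rfl,
      h.meridianPolygon_intCast, h.meridianPolygon_intCast, hF _ (norm_meridianPoint _ _ _),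
      hF _ (norm_meridianPoint _ _ _), hk]
    exact h.add_sq_mul_norm_meridianPoint_sub_sq_le r _ (div_nonneg h.length_nonneg hN.le)
  calc N * polygonEnergy F (meridianPolygon φ ℓ N r) ≤ N * (N * (2 * w ^ 2)) := by
        gcongr
        simpa [polygonEnergy] using Finset.sum_le_card_nsmul Finset.univ _ _ fun i _ => hedge i
    _ = 2 * (ℓ + L / m ^ 2 * ℓ ^ 2 / N) ^ 2 := by
        simp only [w]
        field_simp

lemma exists_complexHolonomy_meridianPolygon_eq (hN : ℓ / N < m * π) (r : ℝ) :
    ∃ ρ : ℝ, 0 < ρ ∧ complexHolonomy (meridianPolygon φ ℓ N r) = (-ρ : ℝ) := by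
  have hN0 : (N : ℝ) ≠ 0 := NeZero.ne _
  have hδ : 0 ≤ ℓ / N := div_nonneg h.length_nonneg (Nat.cast_nonneg N)
  let θ (k : ℕ) : ℝ := arcLengthInv (fun θ => φ (meridian r θ)) (ℓ * k / N)
  have hθ (k : ℕ) : 0 ≤ θ (k + 1) - θ k ∧ θ (k + 1) - θ k < π := by
    have hk : ℓ * (k + 1 : ℕ) / N = ℓ * k / N + ℓ / N := by
      push_cast
      ring
    simp only [θ, hk]
    exact ⟨(h.isSpeed r).arcLengthInv_add_sub_nonneg _ hδ,
      lt_of_mul_lt_mul_left (((h.isSpeed r).mul_arcLengthInv_add_sub_le _ hδ).trans_lt hN) h.pos.le⟩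
  have htotal : (θ N - θ 0) / 2 = π := by
    have hlast := h.arcLengthInv_add_length r 0
    rw [zero_add] at hlast
    simp [θ, mul_div_cancel_right₀ ℓ hN0, hlast]
  have hvertex : (fun k : ℕ => meridianPolygon φ ℓ N r k) = fun k => meridian r (θ k) := by
    funext k
    exact_mod_cast h.meridianPolygon_intCast r k
  obtain ⟨ρ, hρ, hQ⟩ := exists_holonomy_meridian_eq r hθ N
  rw [htotal, cos_pi, sin_pi] at hQ
  have hreal : holonomy (fun k : ℕ => meridianPolygon φ ℓ N r k) N = ((-ρ : ℝ) : ℍ[ℝ]) := by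
    rw [hvertex, hQ]
    ext <;> simp
  refine ⟨ρ, hρ, ?_⟩
  rw [complexHolonomy, hreal]
  apply Complex.ext <;> simp [Quaternion.inner_def]

lemma isOddPath_meridianPolygon (hN : ℓ / N < m * π) : IsOddPath (meridianPolygon φ ℓ N) := by
  choose ρ hρ hZ using h.exists_complexHolonomy_meridianPolygon_eq hN
  have hρ_eq (r : ℝ) : ρ r = -(complexHolonomy (meridianPolygon φ ℓ N r)).re := by simp [hZ]
  have hcont : Continuous ρ := by
    simp only [funext hρ_eq]
    exact (Complex.continuous_re.comp
      (continuous_complexHolonomy.comp h.continuous_meridianPolygon)).neg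
  refine ⟨fun r => Complex.I * (√(ρ r) : ℝ), by fun_prop, fun r => ?_, ?_⟩
  · rw [mul_pow, Complex.I_sq, ← Complex.ofReal_pow, sq_sqrt (hρ r).le, hZ]
    push_cast
    ring
  · have hprod := mul_pos (sqrt_pos.2 (hρ 0)) (sqrt_pos.2 (hρ π))
    simpa using hprod

end IsMeridianFactor

theorem exists_isConformalGeodesic_of_isMeridianFactor {F φ : E3 → ℝ} {m K m₀ ℓ : ℝ} {L : NNReal}
    (hF : IsConformalWeight F m K) (h : IsMeridianFactor φ m₀ L ℓ)
    (hFφ : ∀ x, ‖x‖ = 1 → F x = φ x ^ 2) :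
    ∃ c v, IsConformalGeodesic F c v ∧ Function.Periodic c 1 ∧
      0 < F (c 0) * ‖v 0‖ ^ 2 ∧ F (c 0) * ‖v 0‖ ^ 2 ≤ ℓ ^ 2 := by
  let D (N : ℕ+) : ℝ := 2 * (ℓ + L / m₀ ^ 2 * ℓ ^ 2 / (N : ℕ)) ^ 2
  have hdiv (a : ℝ) : Tendsto (fun N : ℕ+ => a / (N : ℕ)) (hyperfilter ℕ+) (𝓝 0) :=
    (tendsto_const_div_atTop_nhds_zero_nat a).comp tendsto_natCast_hyperfilter
  have hD : Tendsto D (hyperfilter ℕ+) (𝓝 (2 * ℓ ^ 2)) := by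
    simpa using (((hdiv (L / m₀ ^ 2 * ℓ ^ 2)).const_add ℓ).pow 2).const_mul 2
  have hDdiv : Tendsto (fun N => D N / (N : ℕ)) (hyperfilter ℕ+) (𝓝 0) :=
    hD.div_atTop (tendsto_natCast_atTop_atTop.comp tendsto_natCast_hyperfilter)
  obtain ⟨c, v, hc, hper, hlow, hup⟩ := exists_isConformalGeodesic_of_critical_polygons hF hD (by
    filter_upwards [hDdiv.eventually_lt_const (mul_pos (by norm_num : (0 : ℝ) < 8) hF.pos),
      (hdiv ℓ).eventually_lt_const (mul_pos h.pos pi_pos)] with N hN hN'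
    have hN0 : (0 : ℝ) < (N : ℕ) := by exact_mod_cast N.pos
    obtain ⟨x, hx, hcrit, hxm, hxD⟩ := exists_critical_polygon hF hN h.continuous_meridianPolygon
      (fun _ _ => norm_meridianPoint _ _ _) h.meridianPolygon_pi
      (fun r => (le_div_iff₀' hN0).2 (h.mul_polygonEnergy_meridianPolygon_le hFφ r))
      (h.isOddPath_meridianPolygon hN')
    exact ⟨x, hx, hcrit, (div_le_iff₀' hN0).1 hxm, (le_div_iff₀' hN0).1 hxD⟩)
  exact ⟨c, v, hc, hper, hF.pos.trans_le hlow, by linarith⟩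

end MeridianSweepout

/-! ### Geodesics are locally minimizing -/

section Calibration

variable {E : Type*} [NormedAddCommGroup E] [InnerProductSpace ℝ E] {m K : ℝ}

lemma add_one_mul_mul_le {B V : ℝ} (hm : 0 < m) (hV : V ^ 2 ≤ 1 / m) (H A : ℝ) :
    (B * V + 1) * (H * A) ≤ m * A ^ 2 / 2 + (B ^ 2 / m + 1) / m * H ^ 2 := by
  have hBV : (B * V + 1) ^ 2 ≤ 2 * (B ^ 2 / m + 1) := by
    have : B ^ 2 * V ^ 2 ≤ B ^ 2 / m := by
      rw [div_eq_mul_one_div]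
      gcongr
    nlinarith [sq_nonneg (B * V - 1)]
  calc (B * V + 1) * (H * A)
      ≤ m * A ^ 2 / 2 + (B * V + 1) ^ 2 * H ^ 2 / (2 * m) := by
        rw [← sub_nonneg]
        have : 0 ≤ (m * A - (B * V + 1) * H) ^ 2 / (2 * m) := by positivity
        convert this using 1
        field_simp
        ring
    _ ≤ m * A ^ 2 / 2 + 2 * (B ^ 2 / m + 1) * H ^ 2 / (2 * m) := by gcongr
    _ = m * A ^ 2 / 2 + (B ^ 2 / m + 1) / m * H ^ 2 := by
        field_simp

lemma abs_mul_inner_sub_mul_inner_le {η v a : E} {B d κ : ℝ} (hm : 0 < m) (hV : ‖v‖ ^ 2 ≤ 1 / m)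
    (hd : |d| ≤ B * ‖η‖) (hκ : |κ| ≤ 1) :
    |d * ⟪v, a⟫ - κ * ⟪η, a⟫| ≤ m * ‖a‖ ^ 2 / 2 + (B ^ 2 / m + 1) / m * ‖η‖ ^ 2 :=
  calc |d * ⟪v, a⟫ - κ * ⟪η, a⟫| ≤ |d| * |⟪v, a⟫| + |κ| * |⟪η, a⟫| := by
        rw [← abs_mul, ← abs_mul]
        exact abs_sub _ _
    _ ≤ B * ‖η‖ * (‖v‖ * ‖a‖) + 1 * (‖η‖ * ‖a‖) := by
        gcongr
        · exact (abs_nonneg _).trans hd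
        · exact abs_real_inner_le_norm v a
        · exact abs_real_inner_le_norm η a
    _ = (B * ‖v‖ + 1) * (‖η‖ * ‖a‖) := by ring
    _ ≤ _ := add_one_mul_mul_le hm hV ‖η‖ ‖a‖

variable [FiniteDimensional ℝ E] {F : E → ℝ}

/-- The constant `M` makes the functions `⟪F(c) v, y - c⟫ - M (t - t₀) ‖y - c‖² / 2` calibrate the
geodesics `c` of unit energy near `t₀`: their derivative along any curve `y` is at most
`(F(y) ‖y'‖² - 1) / 2`, where `w` stands for `y'` and `κ` for `M (t₀ - t)`. -/
def IsCalibrationBound (F : E → ℝ) (M : ℝ) : Prop :=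
  ∀ ⦃c v y w : E⦄, ‖c‖ = 1 → ‖y‖ = 1 → F c * ‖v‖ ^ 2 = 1 → ∀ ⦃κ : ℝ⦄, |κ| ≤ 1 →
    ⟪geodesicForce F c v, y - c⟫ + ⟪F c • v, w - v⟫ - M / 2 * ‖y - c‖ ^ 2 + κ * ⟪y - c, w - v⟫ ≤
      (F y * ‖w‖ ^ 2 - 1) / 2

lemma IsConformalWeight.exists_taylor_bound_of_norm_eq_one (hF : IsConformalWeight F m K) :
    ∃ C, 0 ≤ C ∧ ∀ c η, ‖c‖ = 1 → ‖c + η‖ = 1 →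
      |F (c + η) - F c - ⟪∇ F c, η⟫| ≤ C * ‖η‖ ^ 2 ∧ |F (c + η) - F c| ≤ (K + 2 * C) * ‖η‖ := by
  obtain ⟨C, hC, htaylor⟩ := exists_taylor_bound hF.contDiff
    (isCompact_closedBall (0 : E) 1) (convex_closedBall 0 1)
  refine ⟨C, hC, fun c η hc hy => ?_⟩
  have hR := htaylor c (mem_closedBall_zero_iff.2 hc.le) (c + η) (mem_closedBall_zero_iff.2 hy.le)
  rw [add_sub_cancel_left, (hF.hasFDerivAt c).fderiv, innerSL_apply_apply] at hR
  have hη : ‖η‖ ≤ 2 := by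
    have := norm_sub_le (c + η) c
    rw [add_sub_cancel_left, hc, hy] at this
    linarith
  have hlinear : |⟪∇ F c, η⟫| ≤ K * ‖η‖ := (abs_real_inner_le_norm _ _).trans
    (mul_le_mul_of_nonneg_right (hF.norm_gradient_le c hc) (norm_nonneg _))
  have hquadratic : C * ‖η‖ ^ 2 ≤ 2 * C * ‖η‖ := by nlinarith [mul_nonneg hC (norm_nonneg η)]
  have := abs_add_le (F (c + η) - F c - ⟪∇ F c, η⟫) ⟪∇ F c, η⟫
  rw [sub_add_cancel] at this
  exact ⟨hR, by linarith⟩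

lemma IsConformalWeight.abs_sub_inner_gradient_mul_le (hF : IsConformalWeight F m K)
    {c v : E} (hc : ‖c‖ = 1) (hV : ‖v‖ ^ 2 ≤ 1 / m) {C H R : ℝ} (hR : |R| ≤ C * H ^ 2) :
    |(R - ⟪c, ∇ F c⟫ * (H ^ 2 / 2)) * ‖v‖ ^ 2| ≤ (C + |K|) / m * H ^ 2 := by
  have hradial : |⟪c, ∇ F c⟫| ≤ |K| := (abs_real_inner_le_norm _ _).trans <| by
    rw [hc, one_mul]
    exact (hF.norm_gradient_le c hc).trans (le_abs_self K)
  have hsub : |R - ⟪c, ∇ F c⟫ * (H ^ 2 / 2)| ≤ (C + |K|) * H ^ 2 :=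
    calc |R - ⟪c, ∇ F c⟫ * (H ^ 2 / 2)| ≤ |R| + |⟪c, ∇ F c⟫| * (H ^ 2 / 2) := by
          rw [← abs_of_nonneg (show 0 ≤ H ^ 2 / 2 by positivity), ← abs_mul,
            abs_of_nonneg (show 0 ≤ H ^ 2 / 2 by positivity)]
          exact abs_sub _ _
      _ ≤ C * H ^ 2 + |K| * H ^ 2 := by
          gcongr
          linarith [sq_nonneg H]
      _ = (C + |K|) * H ^ 2 := by ring
  calc |(R - ⟪c, ∇ F c⟫ * (H ^ 2 / 2)) * ‖v‖ ^ 2| ≤ (C + |K|) * H ^ 2 * (1 / m) := by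
        rw [abs_mul, abs_of_nonneg (sq_nonneg ‖v‖)]
        exact mul_le_mul hsub hV (sq_nonneg _) ((abs_nonneg _).trans hsub)
    _ = (C + |K|) / m * H ^ 2 := by ring

lemma exists_isCalibrationBound (hF : IsConformalWeight F m K) :
    ∃ M, 0 < M ∧ IsCalibrationBound F M := by
  obtain ⟨C, hC, htaylor⟩ := hF.exists_taylor_bound_of_norm_eq_one
  have hm := hF.pos
  refine ⟨2 * (((K + 2 * C) ^ 2 / m + 1) / m) + (C + |K|) / m + 1, by positivity,
    fun c v y w hc hy hv κ hκ => ?_⟩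
  obtain ⟨η, rfl⟩ : ∃ η, y = c + η := ⟨y - c, by abel⟩
  obtain ⟨a, rfl⟩ : ∃ a, w = v + a := ⟨w - v, by abel⟩
  obtain ⟨hR, hdiff⟩ := htaylor c η hc hy
  have hcη := inner_sub_eq_neg_norm_sq_div_two hc hy
  have hV : ‖v‖ ^ 2 ≤ 1 / m := by
    rw [le_div_iff₀ hm, ← hv, mul_comm]
    gcongr
    exact hF.le_apply c hc
  have hmixed := neg_le_of_abs_le (abs_mul_inner_sub_mul_inner_le (a := a) hm hV hdiff hκ)
  have hradial := neg_le_of_abs_le (hF.abs_sub_inner_gradient_mul_le hc hV hR)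
  have hFy : m * ‖a‖ ^ 2 ≤ F (c + η) * ‖a‖ ^ 2 :=
    mul_le_mul_of_nonneg_right (hF.le_apply _ hy) (sq_nonneg _)
  rw [add_sub_cancel_left] at hcη
  rw [geodesicForce, hv, norm_add_sq_real]
  simp only [add_sub_cancel_left, inner_sub_left, real_inner_smul_left, hcη]
  linarith

lemma exists_strictMono_hasDerivAt_add {q : ℝ → ℝ} (hq : Continuous q) (hq₀ : ∀ u, 0 ≤ q u)
    {a b : ℝ} (hab : ∫ u in 0..1, q u < b - a) :
    ∃ δ > 0, ∃ T : ℝ → ℝ, StrictMono T ∧ (∀ u, HasDerivAt T (q u + δ) u) ∧ T 0 = a ∧ T 1 = b := by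
  have hδ := sub_pos.2 hab
  set δ := b - a - ∫ u in 0..1, q u with hδdef
  have hcont : Continuous fun u => q u + δ := by fun_prop
  have hderiv (u : ℝ) : HasDerivAt (fun u => a + ∫ x in 0..u, (q x + δ)) (q u + δ) u :=
    (hcont.integral_hasStrictDerivAt 0 u).hasDerivAt.const_add a
  refine ⟨δ, hδ, _, strictMono_of_hasDerivAt_pos hderiv fun u => by linarith [hq₀ u],
    hderiv, by simp, ?_⟩
  rw [intervalIntegral.integral_add (hq.intervalIntegrable _ _) (by simp)]
  simp [hδdef]

/-- A calibration, near time `t₀`, of the geodesic `c` with velocity `v`, as a function of the time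
`t` and the endpoint `y` of a competing curve. -/
def calibration (F : E → ℝ) (c v : ℝ → E) (M t₀ t : ℝ) (y : E) : ℝ :=
  ⟪F (c t) • v t, y - c t⟫ - M * (t - t₀) / 2 * ‖y - c t‖ ^ 2

namespace IsConformalGeodesic

variable {c v : ℝ → E} (hc : IsConformalGeodesic F c v)
include hc

lemma hasDerivAt_calibration {M t₀ τ u : ℝ} {T : ℝ → ℝ} {y : ℝ → E} {w : E}
    (hT : HasDerivAt T τ u) (hy : HasDerivAt y (τ • w) u) :
    HasDerivAt (fun u => calibration F c v M t₀ (T u) (y u))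
      (τ * (⟪geodesicForce F (c (T u)) (v (T u)), y u - c (T u)⟫ +
        ⟪F (c (T u)) • v (T u), w - v (T u)⟫ - M / 2 * ‖y u - c (T u)‖ ^ 2 +
          M * (t₀ - T u) * ⟪y u - c (T u), w - v (T u)⟫)) u := by
  have hη := hy.sub ((hc.hasDerivAt (T u)).scomp u hT)
  have hmomentum := (hc.hasDerivAt_momentum (T u)).scomp u hT
  refine ((hmomentum.inner ℝ hη).sub
    ((((hT.sub_const t₀).const_mul M).div_const 2).mul hη.norm_sq)).congr_deriv ?_
  simp only [Pi.sub_apply, Function.comp, ← smul_sub, real_inner_smul_right]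
  rw [real_inner_smul_left (geodesicForce F (c (T u)) (v (T u)))]
  ring

lemma sub_le_integral_of_isCalibrationBound (hF : IsConformalWeight F m K) {M : ℝ} (hM : 0 < M)
    (hcal : IsCalibrationBound F M) (henergy : ∀ t, F (c t) * ‖v t‖ ^ 2 = 1) {t₀ s₁ s₂ : ℝ}
    (hs₁ : t₀ - M⁻¹ ≤ s₁) (hs₂ : s₂ ≤ t₀ + M⁻¹) {y : ℝ → E} (hy : ContDiff ℝ 1 y)
    (hunit : ∀ u, ‖y u‖ = 1) (hy₀ : y 0 = c s₁) (hy₁ : y 1 = c s₂) :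
    s₂ - s₁ ≤ ∫ u in 0..1, √(F (y u) * ‖deriv y u‖ ^ 2) := by
  by_contra! hlt
  have hcont : Continuous fun u => √(F (y u) * ‖deriv y u‖ ^ 2) :=
    ((hF.contDiff.continuous.comp hy.continuous).mul ((hy.continuous_deriv le_rfl).norm.pow 2)).sqrt
  obtain ⟨δ, hδ, T, hTmono, hT, hT₀, hT₁⟩ := exists_strictMono_hasDerivAt_add hcont
    (fun _ => Real.sqrt_nonneg _) hlt
  set τ : ℝ → ℝ := fun u => √(F (y u) * ‖deriv y u‖ ^ 2) + δ
  have hτ_pos (u : ℝ) : 0 < τ u := add_pos_of_nonneg_of_pos (Real.sqrt_nonneg _) hδ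
  have hderiv (u : ℝ) := hc.hasDerivAt_calibration (M := M) (t₀ := t₀)
    (w := (τ u)⁻¹ • deriv y u) (hT u) (by
      rw [smul_inv_smul₀ (hτ_pos u).ne']
      exact (hy.differentiable one_ne_zero u).hasDerivAt)
  obtain ⟨u, hu, hzero⟩ := exists_hasDerivAt_eq_zero zero_lt_one
    (fun u _ => (hderiv u).continuousAt.continuousWithinAt)
    (by simp [calibration, hT₀, hT₁, hy₀, hy₁]) fun u _ => hderiv u
  have hκ : |M * (t₀ - T u)| ≤ 1 := by
    have h₀ := hTmono hu.1
    have h₁ := hTmono hu.2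
    rw [abs_mul, abs_of_pos hM, ← le_inv_mul_iff₀ hM, mul_one, abs_le]
    constructor <;> linarith
  have hspeed : F (y u) * ‖(τ u)⁻¹ • deriv y u‖ ^ 2 < 1 := by
    rw [norm_smul, norm_inv, Real.norm_of_nonneg (hτ_pos u).le, mul_pow, mul_left_comm, inv_pow,
      inv_mul_lt_one₀ (pow_pos (hτ_pos u) 2), ← Real.sqrt_lt' (hτ_pos u)]
    exact lt_add_of_pos_right _ hδ
  have hle := hcal (w := (τ u)⁻¹ • deriv y u) (hc.norm_eq_one (T u)) (hunit u) (henergy (T u)) hκ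
  have := (mul_eq_zero.1 hzero).resolve_left (hτ_pos u).ne'
  linarith

end IsConformalGeodesic

end Calibration

/-! ### Closed geodesics of a conformal metric on the sphere -/

namespace IsConformalGeodesic

section Reparametrization

variable {E : Type*} [NormedAddCommGroup E] [InnerProductSpace ℝ E] [FiniteDimensional ℝ E]
  {F : E → ℝ} {c v : ℝ → E} (hc : IsConformalGeodesic F c v)
include hc

lemma comp_add_mul (a κ : ℝ) :
    IsConformalGeodesic F (fun s => c (a + κ * s)) fun s => κ • v (a + κ * s) := by
  have haffine (t : ℝ) : HasDerivAt (fun s => a + κ * s) κ t := by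
    simpa using ((hasDerivAt_id t).const_mul κ).const_add a
  refine ⟨fun _ => hc.norm_eq_one _, fun t => (hc.hasDerivAt _).scomp t (haffine t), fun t => ?_⟩
  have hmomentum := ((hc.hasDerivAt_momentum _).scomp t (haffine t)).const_smul κ
  refine (hmomentum.congr_of_eventuallyEq (.of_forall fun s => smul_comm _ _ _)).congr_deriv ?_
  rw [geodesicForce, geodesicForce, norm_smul, mul_pow, Real.norm_eq_abs, sq_abs]
  module

lemma continuous_velocity {m K : ℝ} (hF : IsConformalWeight F m K) : Continuous v := by
  have hcont : Continuous c := continuous_iff_continuousAt.2 fun t => (hc.hasDerivAt t).continuousAt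
  have hmomentum : Continuous fun s => F (c s) • v s :=
    continuous_iff_continuousAt.2 fun t => (hc.hasDerivAt_momentum t).continuousAt
  have hne (t : ℝ) : F (c t) ≠ 0 := (hF.pos.trans_le (hF.le_apply _ (hc.norm_eq_one t))).ne'
  refine (((hF.contDiff.continuous.comp hcont).inv₀ hne).smul hmomentum).congr fun s => ?_
  exact inv_smul_smul₀ (hne s) _

lemma contDiff_one {m K : ℝ} (hF : IsConformalWeight F m K) : ContDiff ℝ 1 c :=
  contDiff_one_iff_deriv.2 ⟨fun t => (hc.hasDerivAt t).differentiableAt,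
    (hc.continuous_velocity hF).congr fun t => (hc.hasDerivAt t).deriv.symm⟩

end Reparametrization

end IsConformalGeodesic

lemma gspeed_confMetric {F : E3 → ℝ} {c : ℝ → Sph} {w : E3} {t : ℝ}
    (hw : HasDerivAt (fun s => (c s : E3)) w t) :
    gspeed (confMetric fun x => F x) c t = √(F (c t) * ‖w‖ ^ 2) := by
  rw [gspeed, confMetric, cvel, hw.deriv, real_inner_self_eq_norm_sq]

lemma gdist_eq_of_forall_le {g : Sph → E3 → E3 → ℝ} {x y : Sph} {L : ℝ} {c : ℝ → Sph}
    (hc : IsC1Curve c) (hx : c 0 = x) (hy : c 1 = y) (hL : glength g c 0 1 = L)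
    (hle : ∀ c' : ℝ → Sph, IsC1Curve c' → c' 0 = x → c' 1 = y → L ≤ glength g c' 0 1) :
    gdist g x y = L := by
  have hleast : IsLeast {L | ∃ c : ℝ → Sph, IsC1Curve c ∧ c 0 = x ∧ c 1 = y ∧
      L = glength g c 0 1} L := by
    refine ⟨⟨c, hc, hx, hy, hL.symm⟩, ?_⟩
    rintro _ ⟨c', hc', hx', hy', rfl⟩
    exact hle c' hc' hx' hy'
  exact hleast.csInf_eq

lemma systole_le_of_isClosedGeodesic {g : Sph → E3 → E3 → ℝ} {c : ℝ → Sph} {L : ℝ}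
    (h : IsClosedGeodesic g c L) : systole g ≤ L :=
  csInf_le ⟨0, fun _ ⟨_, h⟩ => h.1.le⟩ ⟨c, h⟩

namespace IsConformalGeodesic

variable {F : E3 → ℝ} {m K : ℝ} {v : ℝ → E3}

lemma glength_comp_add_mul {c : ℝ → Sph} (hc : IsConformalGeodesic F (fun s => (c s : E3)) v)
    (henergy : ∀ t, F (c t) * ‖v t‖ ^ 2 = 1) (a : ℝ) {κ : ℝ} (hκ : 0 ≤ κ) :
    glength (confMetric fun x => F x) (fun s => c (a + κ * s)) 0 1 = κ := by
  have hspeed (t : ℝ) : gspeed (confMetric fun x => F x) (fun s => c (a + κ * s)) t = κ := by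
    rw [gspeed_confMetric ((hc.comp_add_mul a κ).hasDerivAt t), norm_smul, mul_pow, mul_left_comm,
      henergy, mul_one, Real.sqrt_sq (norm_nonneg _), Real.norm_of_nonneg hκ]
  simp [glength, hspeed]

lemma isGeodesic {c : ℝ → Sph} (hF : IsConformalWeight F m K)
    (hc : IsConformalGeodesic F (fun s => (c s : E3)) v)
    (henergy : ∀ t, F (c t) * ‖v t‖ ^ 2 = 1) : IsGeodesic (confMetric fun x => F x) c := by
  obtain ⟨M, hM, hcal⟩ := exists_isCalibrationBound hF
  refine ⟨hc.contDiff_one hF, fun t => ?_, fun t => ⟨M⁻¹, inv_pos.2 hM, fun s₁ s₂ h₁ h₁₂ h₂ => ?_⟩⟩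
  · rw [gspeed_confMetric (hc.hasDerivAt t), henergy, Real.sqrt_one]
  refine gdist_eq_of_forall_le (c := fun u => c (s₁ + (s₂ - s₁) * u))
    ((hc.comp_add_mul s₁ (s₂ - s₁)).contDiff_one hF) (by simp) (by simp)
    (hc.glength_comp_add_mul henergy s₁ (sub_nonneg.2 h₁₂)) fun y hy hy₀ hy₁ => ?_
  have hle := hc.sub_le_integral_of_isCalibrationBound hF hM hcal henergy h₁ h₂ hy
    (fun u => mem_sphere_zero_iff_norm.1 (y u).2) (by rw [hy₀]) (by rw [hy₁])
  refine hle.trans_eq (intervalIntegral.integral_congr fun u _ => ?_)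
  exact (gspeed_confMetric ((hy.differentiable one_ne_zero u).hasDerivAt)).symm

lemma exists_isClosedGeodesic {c : ℝ → E3} (hF : IsConformalWeight F m K)
    (hc : IsConformalGeodesic F c v) (hper : Function.Periodic c 1)
    (hpos : 0 < F (c 0) * ‖v 0‖ ^ 2) :
    ∃ γ, IsClosedGeodesic (confMetric fun x => F x) γ √(F (c 0) * ‖v 0‖ ^ 2) := by
  have henergy (t : ℝ) := hc.energy_eq hF t 0
  set e := F (c 0) * ‖v 0‖ ^ 2
  have he : 0 < √e := Real.sqrt_pos.2 hpos
  have hunit := hc.comp_add_mul 0 (√e)⁻¹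
  refine ⟨fun s => ⟨c (0 + (√e)⁻¹ * s), mem_sphere_zero_iff_norm.2 (hc.norm_eq_one _)⟩, he,
    fun s => ?_, isGeodesic hF hunit fun t => ?_⟩
  · ext1
    simp only
    rw [mul_add, inv_mul_cancel₀ he.ne', ← add_assoc, hper]
  · rw [norm_smul, mul_pow, mul_left_comm, henergy, Real.norm_eq_abs, sq_abs, inv_pow,
      Real.sq_sqrt hpos.le, inv_mul_cancel₀ hpos.ne']

end IsConformalGeodesic

theorem exists_isClosedGeodesic_of_isMeridianFactor {F φ : E3 → ℝ} {m K m₀ ℓ : ℝ} {L : NNReal}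
    (hF : IsConformalWeight F m K) (h : IsMeridianFactor φ m₀ L ℓ)
    (hFφ : ∀ x, ‖x‖ = 1 → F x = φ x ^ 2) :
    ∃ c, ∃ l ≤ ℓ, IsClosedGeodesic (confMetric fun x => F x) c l := by
  obtain ⟨c, v, hc, hper, hpos, hle⟩ := exists_isConformalGeodesic_of_isMeridianFactor hF h hFφ
  obtain ⟨γ, hγ⟩ := hc.exists_isClosedGeodesic hF hper hpos
  exact ⟨γ, _, Real.sqrt_le_iff.2 ⟨h.length_nonneg, hle⟩, hγ⟩

/-! ### The length of great circles -/

section HausdorffMeasure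

variable {X : Type*} [MetricSpace X] [MeasurableSpace X] [BorelSpace X] {γ : ℝ → X}

lemma volume_le_mul_hausdorffMeasure_image {K : NNReal} {A : Set ℝ}
    (h : ∀ a ∈ A, ∀ b ∈ A, dist a b ≤ K * dist (γ a) (γ b)) :
    volume A ≤ K * (μH[1] : Measure X) (γ '' A) := by
  have hanti : AntilipschitzWith K (A.domRestrict γ) :=
    AntilipschitzWith.of_le_mul_dist fun a b => h a a.2 b b.2
  calc volume A = (μH[1] : Measure A) Set.univ := by
        rw [← isometry_subtype_coe.hausdorffMeasure_image (.inl zero_le_one), Set.image_univ,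
          Subtype.range_coe, hausdorffMeasure_real]
    _ ≤ K * (μH[1] : Measure X) (γ '' A) := by
        simpa [Set.image_univ, Set.range_domRestrict] using
          hanti.le_hausdorffMeasure_image zero_le_one Set.univ

/-- The curve `γ` in a metric space is parametrized by arc length in a strong sense: it does not
increase distances, and short chords are uniformly comparable to the corresponding arcs. -/
structure IsUniformUnitSpeed (γ : ℝ → X) : Prop where
  lipschitz : LipschitzWith 1 γ
  dist_le_mul : ∀ K : NNReal, 1 < K →
    ∃ ε > 0, ∀ a b, dist a b ≤ ε → dist a b ≤ K * dist (γ a) (γ b)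

namespace IsUniformUnitSpeed

variable (hγ : IsUniformUnitSpeed γ) {A : Set ℝ}
include hγ

lemma measurableSet_image (hA : MeasurableSet A) (hinj : Set.InjOn γ A) :
    MeasurableSet (γ '' A) :=
  hA.image_of_continuousOn_injOn hγ.lipschitz.continuous.continuousOn hinj

lemma volume_le_mul_hausdorffMeasure_image (hA : MeasurableSet A) (hinj : Set.InjOn γ A)
    {K : NNReal} (hK : 1 < K) : volume A ≤ K * (μH[1] : Measure X) (γ '' A) := by
  obtain ⟨ε, hε, hdist⟩ := hγ.dist_le_mul K hK
  let T (k : ℤ) : Set ℝ := A ∩ Set.Ioc (k • ε) ((k + 1) • ε)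
  have hT (k : ℤ) : MeasurableSet (T k) := hA.inter measurableSet_Ioc
  have hdisj : Pairwise (Function.onFun Disjoint T) := fun i j hij =>
    (Set.pairwise_disjoint_Ioc_zsmul ε hij).mono Set.inter_subset_right Set.inter_subset_right
  have hunion : ⋃ k, T k = A := by
    rw [← Set.inter_iUnion, iUnion_Ioc_zsmul hε, Set.inter_univ]
  have hinjT (k : ℤ) : Set.InjOn γ (T k) := hinj.mono Set.inter_subset_left
  have hdisj_image : Pairwise (Function.onFun Disjoint fun k => γ '' T k) := fun i j hij =>
    (hdisj hij).image hinj Set.inter_subset_left Set.inter_subset_left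
  have hpiece (k : ℤ) : volume (T k) ≤ K * (μH[1] : Measure X) (γ '' T k) := by
    refine _root_.volume_le_mul_hausdorffMeasure_image fun a ha b hb => hdist a b ?_
    have ha' := ha.2
    have hb' := hb.2
    rw [add_smul, one_smul] at ha' hb'
    rw [Real.dist_eq, abs_le]
    constructor <;> linarith [ha'.1, ha'.2, hb'.1, hb'.2]
  calc volume A = ∑' k, volume (T k) := by rw [← measure_iUnion hdisj hT, hunion]
    _ ≤ ∑' k, K * (μH[1] : Measure X) (γ '' T k) := ENNReal.tsum_le_tsum hpiece
    _ = K * (μH[1] : Measure X) (γ '' A) := by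
        rw [ENNReal.tsum_mul_left, ← measure_iUnion hdisj_image fun k =>
          hγ.measurableSet_image (hT k) (hinjT k), ← Set.image_iUnion, hunion]

lemma hausdorffMeasure_image (hA : MeasurableSet A) (hinj : Set.InjOn γ A) :
    (μH[1] : Measure X) (γ '' A) = volume A := by
  refine le_antisymm ?_ ?_
  · simpa [hausdorffMeasure_real] using hγ.lipschitz.hausdorffMeasure_image_le zero_le_one A
  · have hlim : Tendsto (fun K : NNReal => K * (μH[1] : Measure X) (γ '' A)) (𝓝[>] 1)
        (𝓝 (((1 : NNReal) : ENNReal) * (μH[1] : Measure X) (γ '' A))) :=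
      ENNReal.Tendsto.mul_const
        (ENNReal.tendsto_coe.2 (tendsto_id.mono_left nhdsWithin_le_nhds)) (.inl (by simp))
    rw [ENNReal.coe_one, one_mul] at hlim
    exact ge_of_tendsto hlim <| eventually_mem_nhdsWithin.mono fun K hK =>
      hγ.volume_le_mul_hausdorffMeasure_image hA hinj hK

lemma hausdorffMeasure_restrict_image (hA : MeasurableSet A) (hinj : Set.InjOn γ A) :
    (μH[1] : Measure X).restrict (γ '' A) = (volume.restrict A).map γ := by
  have hmeas : Measurable γ := hγ.lipschitz.continuous.measurable
  ext B hB
  rw [Measure.restrict_apply hB, Measure.map_apply hmeas hB, Measure.restrict_apply (hmeas hB),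
    ← hγ.hausdorffMeasure_image ((hmeas hB).inter hA) (hinj.mono Set.inter_subset_right),
    Set.inter_comm, Set.inter_comm (γ ⁻¹' B), Set.image_inter_preimage]

end IsUniformUnitSpeed

end HausdorffMeasure

section GreatCircles

namespace IsGreatCircleParam

variable {E : Type*} [NormedAddCommGroup E] [InnerProductSpace ℝ E] {γ : ℝ → E}
  (hγ : IsGreatCircleParam γ)
include hγ

lemma isUniformUnitSpeed : IsUniformUnitSpeed γ where
  lipschitz := hγ.lipschitzWith
  dist_le_mul K hK := by
    have hK' : (0 : ℝ) < 1 - (K : ℝ)⁻¹ := sub_pos.2 (inv_lt_one_of_one_lt₀ (by exact_mod_cast hK))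
    have hK0 : (0 : ℝ) < K := by exact_mod_cast one_pos.trans hK
    obtain ⟨ε, hε, hball⟩ := Metric.eventually_nhds_iff.1 (isEquivalent_sin.isLittleO.def hK')
    refine ⟨ε, hε, fun a b hab => ?_⟩
    have hlt : dist ((a - b) / 2) 0 < ε := by
      rw [Real.dist_eq] at hab
      rw [dist_zero_right, Real.norm_eq_abs, abs_div, abs_two]
      linarith
    have hsin := hball hlt
    have htri := abs_sub_abs_le_abs_sub ((a - b) / 2) (sin ((a - b) / 2))
    simp only [Pi.sub_apply, id, Real.norm_eq_abs, abs_sub_comm (sin _)] at hsin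
    have hle : (K : ℝ)⁻¹ * |(a - b) / 2| ≤ |sin ((a - b) / 2)| := by linarith
    rw [inv_mul_le_iff₀ hK0, abs_div, abs_two] at hle
    rw [hγ.dist_eq, Real.dist_eq]
    linarith

lemma injOn_Ioc : Set.InjOn γ (Set.Ioc 0 (2 * π)) := fun a ha b hb hab => by
  have hsin : sin ((a - b) / 2) = 0 := by simpa [hab] using hγ.dist_eq a b
  rw [sin_eq_zero_iff_of_lt_of_lt (by linarith [ha.1, hb.2]) (by linarith [ha.2, hb.1])] at hsin
  linarith

end IsGreatCircleParam

lemma isGreatCircleParam_cos_smul_add_sin_smul {E : Type*} [NormedAddCommGroup E]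
    [InnerProductSpace ℝ E] {v : Fin 2 → E} (hv : Orthonormal ℝ v) :
    IsGreatCircleParam fun θ => cos θ • v 0 + sin θ • v 1 := fun a b => by
  have hinner (i j : Fin 2) := orthonormal_iff_ite.1 hv i j
  simp only [inner_add_left, inner_add_right, real_inner_smul_left, real_inner_smul_right, hinner,
    cos_sub]
  simp [mul_comm]

/-- The curve `γ` in the sphere is a parametrization of the great circle `γ(u)` by arc length. -/
structure ParametrizesGreatCircle (γ : ℝ → Sph) (u : Sph) : Prop where
  isGreatCircleParam : IsGreatCircleParam fun θ => (γ θ : E3)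
  inner_eq_zero : ∀ θ, ⟪(u : E3), (γ θ : E3)⟫ = 0

lemma exists_parametrizesGreatCircle (u : Sph) : ∃ γ, ParametrizesGreatCircle γ u := by
  have hfinrank : Module.finrank ℝ (ℝ ∙ (u : E3))ᗮ = 2 :=
    Submodule.finrank_orthogonal_span_singleton (ne_zero_of_mem_unit_sphere u)
  let b := (stdOrthonormalBasis ℝ (ℝ ∙ (u : E3))ᗮ).reindex (finCongr hfinrank)
  have hb : Orthonormal ℝ fun i => (b i : E3) := b.orthonormal.comp_linearIsometry
    (Submodule.subtypeₗᵢ _)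
  have hparam := isGreatCircleParam_cos_smul_add_sin_smul hb
  refine ⟨fun θ => ⟨_, mem_sphere_zero_iff_norm.2 (hparam.norm_eq_one θ)⟩, hparam, fun θ => ?_⟩
  have horth (i : Fin 2) : ⟪(u : E3), (b i : E3)⟫ = 0 :=
    Submodule.mem_orthogonal_singleton_iff_inner_right.1 (b i).2
  simp [inner_add_right, real_inner_smul_right, horth]

lemma exists_cos_eq_sin_eq {α β : ℝ} (h : α ^ 2 + β ^ 2 = 1) : ∃ θ, cos θ = α ∧ sin θ = β := by
  obtain ⟨θ, hθ⟩ := (Complex.norm_eq_one_iff ⟨α, β⟩).1 <| by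
    rw [Complex.norm_eq_sqrt_sq_add_sq, h, sqrt_one]
  exact ⟨θ, by simpa [Complex.exp_ofReal_mul_I_re] using congrArg Complex.re hθ,
    by simpa [Complex.exp_ofReal_mul_I_im] using congrArg Complex.im hθ⟩

namespace ParametrizesGreatCircle

variable {γ : ℝ → Sph} {u : Sph} (h : ParametrizesGreatCircle γ u)
include h

lemma isUniformUnitSpeed : IsUniformUnitSpeed γ :=
  ⟨h.isGreatCircleParam.isUniformUnitSpeed.lipschitz,
    h.isGreatCircleParam.isUniformUnitSpeed.dist_le_mul⟩

lemma continuous : Continuous γ := h.isUniformUnitSpeed.lipschitz.continuous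

lemma exists_orthonormalBasis :
    ∃ b : OrthonormalBasis (Fin 3) ℝ E3, ⇑b = ![(u : E3), γ 0, γ (π / 2)] := by
  have hon : Orthonormal ℝ ![(u : E3), γ 0, γ (π / 2)] := by
    refine ⟨fun i => ?_, fun i j hij => ?_⟩
    · fin_cases i <;> simp
    · fin_cases i <;> fin_cases j <;>
        simp [h.inner_eq_zero, real_inner_comm (u : E3), h.isGreatCircleParam _ _] at hij ⊢
  have hcard : Fintype.card (Fin 3) = Module.finrank ℝ E3 := by simp
  exact ⟨(basisOfOrthonormalOfCardEqFinrank hon hcard).toOrthonormalBasis (by simpa using hon),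
    by simp⟩

lemma range_eq : Set.range γ = greatCircle u := by
  refine Set.Subset.antisymm (Set.range_subset_iff.2 h.inner_eq_zero) fun x hx => ?_
  obtain ⟨b, hb⟩ := h.exists_orthonormalBasis
  set α := ⟪(γ 0 : E3), (x : E3)⟫
  set β := ⟪(γ (π / 2) : E3), (x : E3)⟫
  have hux : ⟪(u : E3), (x : E3)⟫ = 0 := hx
  have hx_eq : α • (γ 0 : E3) + β • (γ (π / 2) : E3) = x := by
    simpa [Fin.sum_univ_three, hb, hux] using b.sum_repr' (x : E3)
  have hnorm : α ^ 2 + β ^ 2 = 1 := by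
    simpa [Fin.sum_univ_three, hb, hux] using b.sum_sq_norm_inner_right (x : E3)
  obtain ⟨θ, hα, hβ⟩ := exists_cos_eq_sin_eq hnorm
  refine ⟨θ, Subtype.ext ((inner_eq_one_iff_of_norm_eq_one (𝕜 := ℝ) (by simp) (by simp)).1 ?_)⟩
  rw [← hx_eq, inner_add_right, real_inner_smul_right, real_inner_smul_right,
    h.isGreatCircleParam, h.isGreatCircleParam, cos_sub_pi_div_two, sub_zero, hα, hβ]
  linear_combination hnorm

lemma setIntegral_greatCircle {k : Sph → ℝ} (hk : Continuous k) :
    ∫ x in greatCircle u, k x ∂(μH[1] : Measure Sph) = ∫ θ in 0..2 * π, k (γ θ) := by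
  have himage : γ '' Set.Ioc 0 (2 * π) = greatCircle u := by
    have hper : Function.Periodic γ (2 * π) := fun θ =>
      Subtype.ext (h.isGreatCircleParam.periodic θ)
    rw [← h.range_eq, ← hper.image_Ioc two_pi_pos 0, zero_add]
  have hinj : Set.InjOn γ (Set.Ioc 0 (2 * π)) := fun a ha b hb hab =>
    h.isGreatCircleParam.injOn_Ioc ha hb (congrArg Subtype.val hab)
  rw [← himage, h.isUniformUnitSpeed.hausdorffMeasure_restrict_image measurableSet_Ioc hinj,
    integral_map h.continuous.measurable.aemeasurable hk.aestronglyMeasurable,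
    intervalIntegral.integral_of_le two_pi_pos.le]

end ParametrizesGreatCircle

lemma integral_meridian_eq_lineInt {k : E3 → ℝ} (hk : Continuous k) (r : ℝ) :
    ∃ u : Sph, ∫ θ in 0..2 * π, k (meridian r θ) = lineInt (fun x => k x) u := by
  have hu : (!₂[-sin r, cos r, 0] : E3) ∈ Metric.sphere 0 1 := by
    simp [EuclideanSpace.norm_eq, Fin.sum_univ_three]
  let γ (θ : ℝ) : Sph := ⟨meridian r θ, mem_sphere_zero_iff_norm.2 (norm_meridian r θ)⟩
  have hγ : ParametrizesGreatCircle γ ⟨_, hu⟩ := ⟨isGreatCircleParam_meridian r, fun θ => by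
    simp [γ, meridian, PiLp.inner_apply, Fin.sum_univ_three]
    ring⟩
  exact ⟨⟨_, hu⟩, (hγ.setIntegral_greatCircle (hk.comp continuous_subtype_val)).symm⟩

lemma lineInt_one_add_const_mul {f : Sph → ℝ} (hf : Continuous f) (t : ℝ) (u : Sph) :
    lineInt (fun x => 1 + t * f x) u = 2 * π + t * lineInt f u := by
  obtain ⟨γ, hγ⟩ := exists_parametrizesGreatCircle u
  have hfγ : Continuous fun θ => f (γ θ) := hf.comp hγ.continuous
  rw [lineInt, lineInt, hγ.setIntegral_greatCircle (by fun_prop), hγ.setIntegral_greatCircle hf,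
    intervalIntegral.integral_add (by simp) ((hfγ.const_mul t).intervalIntegrable _ _),
    intervalIntegral.integral_const_mul]
  simp

lemma circleLen_sq_zero {φ : Sph → ℝ} (hφ : ∀ x, 0 ≤ φ x) (u : Sph) :
    circleLen (fun x => φ x ^ 2) u 0 = lineInt φ u := by
  simp only [circleLen, sqrt_sq (hφ _)]
  rfl

end GreatCircles

/-! ### Extension to the ambient space -/

section SphereExtension

variable {E : Type*} [NormedAddCommGroup E] [InnerProductSpace ℝ E]

lemma inv_norm_smul_mem_unitSphere {x : E} (hx : x ≠ 0) : ‖x‖⁻¹ • x ∈ Metric.sphere (0 : E) 1 := by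
  rw [mem_sphere_zero_iff_norm, norm_smul, norm_inv, norm_norm,
    inv_mul_cancel₀ (norm_ne_zero_iff.2 hx)]

/-- The extension of a function on the unit sphere which is constant along rays, with value `0` at
the origin. -/
def radialExtension (f : Metric.sphere (0 : E) 1 → ℝ) (x : E) : ℝ :=
  open Classical in
  if hx : x = 0 then 0 else f ⟨‖x‖⁻¹ • x, inv_norm_smul_mem_unitSphere hx⟩

lemma radialExtension_coe (f : Metric.sphere (0 : E) 1 → ℝ) (x : Metric.sphere (0 : E) 1) :
    radialExtension f x = f x := by
  simp [radialExtension, ne_zero_of_mem_unit_sphere x]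

variable {n : ℕ} [Fact (Module.finrank ℝ E = n + 1)] {f : Metric.sphere (0 : E) 1 → ℝ}

lemma contDiffAt_radialExtension (hf : ContMDiff (𝓡 n) 𝓘(ℝ, ℝ) (⊤ : ℕ∞) f) {x : E} (hx : x ≠ 0) :
    ContDiffAt ℝ (⊤ : ℕ∞) (radialExtension f) x := by
  let U : TopologicalSpace.Opens E := ⟨{0}ᶜ, isOpen_compl_singleton⟩
  have hproj : ContMDiff 𝓘(ℝ, E) 𝓘(ℝ, E) (⊤ : ℕ∞) fun y : U => ‖(y : E)‖⁻¹ • (y : E) := fun y =>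
    (contMDiffAt_subtype_iff (f := fun z : E => ‖z‖⁻¹ • z)).2 <| ContDiffAt.contMDiffAt <|
      ((contDiffAt_norm ℝ y.2).inv (norm_ne_zero_iff.2 y.2)).smul contDiffAt_id
  have hcomp := hf.comp (hproj.codRestrict_sphere fun y => inv_norm_smul_mem_unitSphere y.2)
  have hext : ContMDiffAt 𝓘(ℝ, E) 𝓘(ℝ, ℝ) (⊤ : ℕ∞) (fun y : U => radialExtension f y) ⟨x, hx⟩ := by
    refine (hcomp ⟨x, hx⟩).congr_of_eventuallyEq (.of_forall fun y => ?_)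
    exact dif_neg y.2
  exact (contMDiffAt_subtype_iff.1 hext).contDiffAt

theorem exists_contDiff_extension (hf : ContMDiff (𝓡 n) 𝓘(ℝ, ℝ) (⊤ : ℕ∞) f) :
    ∃ h : E → ℝ, ContDiff ℝ (⊤ : ℕ∞) h ∧ ∀ x : Metric.sphere (0 : E) 1, h x = f x := by
  refine ⟨fun x => smoothTransition (2 * ‖x‖ ^ 2 - 1) * radialExtension f x,
    contDiff_iff_contDiffAt.2 fun x => ?_, fun x => ?_⟩
  · rcases eq_or_ne x 0 with rfl | hx
    · have hnear : ∀ᶠ x : E in 𝓝 0, 2 * ‖x‖ ^ 2 - 1 < 0 :=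
        ContinuousAt.eventually_lt (by fun_prop) continuousAt_const (by simp)
      refine (contDiffAt_const (c := (0 : ℝ))).congr_of_eventuallyEq (hnear.mono fun x hx => ?_)
      simp only [smoothTransition.zero_of_nonpos hx.le, zero_mul]
    · have hcut : ContDiff ℝ (⊤ : ℕ∞) fun x : E => smoothTransition (2 * ‖x‖ ^ 2 - 1) :=
        smoothTransition.contDiff.comp
          ((contDiff_const.mul (contDiff_norm_sq ℝ)).sub contDiff_const)
      exact hcut.contDiffAt.mul (contDiffAt_radialExtension hf hx)
  · have hcut : smoothTransition (2 * ‖(x : E)‖ ^ 2 - 1) = 1 :=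
      smoothTransition.one_of_one_le (by norm_num)
    simp only [hcut, radialExtension_coe, one_mul]

end SphereExtension

lemma exists_isMeridianFactor {φ : E3 → ℝ} {ℓ : ℝ} (hφ : ContDiff ℝ 1 φ)
    (hpos : ∀ x, ‖x‖ = 1 → 0 < φ x) (hlen : ∀ u : Sph, lineInt (fun x => φ x) u = ℓ) :
    ∃ m L, IsMeridianFactor φ m L ℓ := by
  obtain ⟨m, hm, hle⟩ := (isCompact_sphere (0 : E3) 1).exists_forall_le' hφ.continuous.continuousOn
    fun x hx => hpos x (mem_sphere_zero_iff_norm.1 hx)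
  obtain ⟨L, hL⟩ := hφ.locallyLipschitz.locallyLipschitzOn.exists_lipschitzOnWith_of_compact
    (isCompact_sphere (0 : E3) 1)
  refine ⟨m, L, hm, fun x hx => hle x (mem_sphere_zero_iff_norm.2 hx), hL, fun r => ?_⟩
  obtain ⟨u, hu⟩ := integral_meridian_eq_lineInt hφ.continuous r
  rw [hu, hlen]

theorem exists_isClosedGeodesic_of_lineInt_eq {φ : E3 → ℝ} {ℓ : ℝ} (hφ : ContDiff ℝ 2 φ)
    (hpos : ∀ x, ‖x‖ = 1 → 0 < φ x) (hlen : ∀ u : Sph, lineInt (fun x => φ x) u = ℓ) :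
    ∃ c, ∃ l ≤ ℓ, IsClosedGeodesic (confMetric fun x => φ x ^ 2) c l := by
  obtain ⟨m, K, hF⟩ := exists_isConformalWeight (hφ.pow 2) fun x hx => pow_pos (hpos x hx) 2
  obtain ⟨m₀, L, hfactor⟩ := exists_isMeridianFactor (hφ.of_le one_le_two) hpos hlen
  exact exists_isClosedGeodesic_of_isMeridianFactor hF hfactor fun _ _ => rfl

/-- If `f` has mean zero, `g_t = (1+tf)²·g₀` is defined for `|t| < a`, and
`∫_{γ(u)} f dl = 0` for every `u`, then for every `|t| < a` all great circles have
`g_t`-length `2π`, there is a closed geodesic of `g_t` of length at most `2π`, and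
`sys(S², g_t) ≤ 2π`. -/
theorem systole_le_of_balanced_circles (f : Sph → ℝ) (hf : SmoothSph f)
    (hmean : ∫ x, f x ∂(μH[2] : Measure Sph) = 0)
    (a : ℝ) (ha : 0 < a)
    (hdef : ∀ t : ℝ, |t| < a → ∀ x, 0 < 1 + t * f x)
    (hcirc : ∀ u : Sph, lineInt f u = 0) :
    ∀ t : ℝ, |t| < a →
      (∀ u : Sph, circleLen (fun x => (1 + t * f x) ^ 2) u 0 = 2 * π) ∧
      (∃ (c : ℝ → Sph) (L : ℝ),
        IsClosedGeodesic (confMetric fun x => (1 + t * f x) ^ 2) c L ∧ L ≤ 2 * π) ∧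
      systole (confMetric fun x => (1 + t * f x) ^ 2) ≤ 2 * π := by
  intro t ht
  have hlen (u : Sph) : lineInt (fun x => 1 + t * f x) u = 2 * π := by
    rw [lineInt_one_add_const_mul hf.continuous, hcirc, mul_zero, add_zero]
  obtain ⟨k, hk, hkf⟩ := exists_contDiff_extension hf
  have hpos (x : E3) (hx : ‖x‖ = 1) : 0 < 1 + t * k x := by
    rw [hkf ⟨x, mem_sphere_zero_iff_norm.2 hx⟩]
    exact hdef t ht _
  obtain ⟨c, l, hl, hc⟩ := exists_isClosedGeodesic_of_lineInt_eq (φ := fun x => 1 + t * k x)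
    (contDiff_const.add (contDiff_const.mul (hk.of_le (by norm_cast)))) hpos
    (by simpa only [hkf] using hlen)
  simp only [hkf] at hc
  exact ⟨fun u => (circleLen_sq_zero (fun x => (hdef t ht x).le) u).trans (hlen u),
    ⟨c, l, hc, hl⟩, (systole_le_of_isClosedGeodesic hc).trans hl⟩

end
end

section
/- Let f : S² → ℝ be a smooth function with ∫_{S²} f dv_{g₀} = 0, let g_t = (1+tf)²·g₀ be defined for |t| < a, and suppose there exists u₀ ∈ S² with ∫_{γ(u₀)} f dl < 0. Then there exists α₀ ∈ (0,a) such that for every t ∈ (0,α₀) and every s ∈ [-1,1], the g_t-length of the circle γ(u₀,s) is strictly less than 2π. -/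
open scoped Manifold RealInnerProductSpace
open MeasureTheory Real

noncomputable section

/-!
Write `L ≤ 2π` for the length of the unit circle of `u₀ᗮ`. Mapping `v` to `√(1 - s²) v + s u₀` is a
similarity of ratio `√(1 - s²)` from this circle onto `γ(u₀, s)`, so the `g_t`-length of `γ(u₀, s)`
is at most `φ(s) + t ψ(s)`, where `φ(s) = √(1 - s²) L` and `ψ(s)` is `√(1 - s²)` times the integral
of `f(√(1 - s²) v + s u₀)` over `v`. Now `φ ≤ 2π`, and equality can hold only on the great circle
`s = 0`, where `ψ(0) = ∫_{γ(u₀)} f < 0`. By compactness of `[-1, 1]`, a first-order perturbation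
that is negative wherever the maximal value is attained pushes the whole function below that value.
-/

section Development

open Set Metric Filter Module
open scoped Topology NNReal ENNReal Pointwise

section Perturbation

theorem eventually_forall_add_mul_lt {X : Type*} [TopologicalSpace X] [CompactSpace X]
    {φ ψ : X → ℝ} {M : ℝ} (hφ : Continuous φ) (hψ : Continuous ψ) (hle : ∀ x, φ x ≤ M)
    (hneg : ∀ x, φ x = M → ψ x < 0) :
    ∀ᶠ t : ℝ in 𝓝[>] 0, ∀ x, φ x + t * ψ x < M := by
  suffices h : ∀ᶠ t : ℝ in 𝓝 0, ∀ x ∈ (univ : Set X), 0 < t → φ x + t * ψ x < M by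
    filter_upwards [nhdsWithin_le_nhds h, self_mem_nhdsWithin] with t ht ht₀ x
    exact ht x (mem_univ x) ht₀
  refine isCompact_univ.eventually_forall_of_forall_eventually fun x _ => ?_
  rcases (hle x).lt_or_eq with hlt | heq
  · have hcont : Continuous fun z : ℝ × X => φ z.2 + z.1 * ψ z.2 := by fun_prop
    have hlim := hcont.tendsto (0, x)
    simp only [zero_mul, add_zero] at hlim
    filter_upwards [hlim.eventually_lt_const hlt] with z hz _ using hz
  · have hψ_neg : ∀ᶠ z : ℝ × X in 𝓝 (0, x), ψ z.2 < 0 :=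
      (hψ.comp continuous_snd).tendsto (0, x) |>.eventually_lt_const (hneg x heq)
    filter_upwards [hψ_neg] with z hz ht
    linarith [hle z.2, mul_neg_of_pos_of_neg ht hz]

end Perturbation

section Hausdorff

variable {X Y : Type*} [EMetricSpace X] [MeasurableSpace X] [BorelSpace X]
  [EMetricSpace Y] [MeasurableSpace Y] [BorelSpace Y] {g : X → Y} {K : ℝ≥0} {A : Set Y} {d : ℝ}

theorem restrict_hausdorffMeasure_le_smul_map (hg : LipschitzWith K g) (hd : 0 ≤ d)
    (hA : A ⊆ range g) :
    (μH[d] : Measure Y).restrict A ≤ (K ^ d : ℝ≥0) • (μH[d] : Measure X).map g := by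
  refine Measure.le_iff.2 fun B hB => ?_
  have hBA : B ∩ A ⊆ g '' (g ⁻¹' B) := by
    rw [image_preimage_eq_inter_range]
    exact inter_subset_inter_right B hA
  calc (μH[d] : Measure Y).restrict A B
    _ ≤ μH[d] (g '' (g ⁻¹' B)) := by
      rw [Measure.restrict_apply hB]
      exact measure_mono hBA
    _ ≤ (K : ℝ≥0∞) ^ d * μH[d] (g ⁻¹' B) := hg.hausdorffMeasure_image_le hd _
    _ = ((K ^ d : ℝ≥0) • (μH[d] : Measure X).map g) B := by
      rw [Measure.smul_apply, Measure.map_apply hg.continuous.measurable hB,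
        ENNReal.smul_def, smul_eq_mul, ENNReal.coe_rpow_of_nonneg K hd]

theorem setIntegral_hausdorffMeasure_le_of_lipschitzWith {k : Y → ℝ} (hg : LipschitzWith K g)
    (hd : 0 ≤ d) (hA : A ⊆ range g) (hk : Measurable k) (hk₀ : 0 ≤ k)
    (hkg : Integrable (k ∘ g) (μH[d] : Measure X)) :
    ∫ y in A, k y ∂(μH[d] : Measure Y) ≤ (K : ℝ) ^ d * ∫ x, k (g x) ∂(μH[d] : Measure X) := by
  have hgm : AEMeasurable g (μH[d] : Measure X) := hg.continuous.aemeasurable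
  have hmap : Integrable k ((K ^ d : ℝ≥0) • (μH[d] : Measure X).map g) :=
    ((integrable_map_measure hk.aestronglyMeasurable hgm).2 hkg).smul_measure_nnreal
  calc ∫ y in A, k y ∂(μH[d] : Measure Y)
    _ ≤ ∫ y, k y ∂((K ^ d : ℝ≥0) • (μH[d] : Measure X).map g) :=
      integral_mono_measure (restrict_hausdorffMeasure_le_smul_map hg hd hA)
        (Eventually.of_forall hk₀) hmap
    _ = (K : ℝ) ^ d * ∫ x, k (g x) ∂(μH[d] : Measure X) := by
      rw [integral_smul_nnreal_measure, integral_map hgm hk.aestronglyMeasurable,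
        NNReal.smul_def, NNReal.coe_rpow, smul_eq_mul]

theorem hausdorffMeasure_sphere_complex_le (c : ℂ) (r : ℝ) :
    μH[1] (sphere c |r|) ≤ ENNReal.ofReal (2 * π * |r|) := by
  rw [← image_circleMap_Ioc]
  refine ((lipschitzWith_circleMap c r).hausdorffMeasure_image_le zero_le_one _).trans_eq ?_
  rw [hausdorffMeasure_real, Real.volume_Ioc, sub_zero, ENNReal.rpow_one, mul_comm,
    ENNReal.ofReal_mul Real.two_pi_pos.le]
  congr 1
  rw [← Real.coe_nnabs, ENNReal.ofReal_coe_nnreal]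

theorem hausdorffMeasure_univ_unitCircle_le {V : Type*} [NormedAddCommGroup V]
    [InnerProductSpace ℝ V] [MeasurableSpace V] [BorelSpace V] (hV : finrank ℝ V = 2) :
    (μH[1] : Measure (sphere (0 : V) 1)) univ ≤ ENNReal.ofReal (2 * π) := by
  have : FiniteDimensional ℝ V := .of_finrank_pos (by simp [hV])
  let e : ℂ ≃ₗᵢ[ℝ] V :=
    Complex.isometryOfOrthonormal ((stdOrthonormalBasis ℝ V).reindex (finCongr hV))
  have himage : e '' sphere 0 1 = sphere 0 1 := by rw [e.image_sphere, map_zero]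
  rw [← isometry_subtype_coe.hausdorffMeasure_image (Or.inl zero_le_one), image_univ,
    Subtype.range_coe, ← himage, e.isometry.hausdorffMeasure_image (Or.inl zero_le_one)]
  simpa using hausdorffMeasure_sphere_complex_le 0 1

end Hausdorff

section Parallel

variable {E : Type*} [NormedAddCommGroup E] [InnerProductSpace ℝ E]

theorem norm_add_smul_sq_of_mem_orthogonal (u : sphere (0 : E) 1) (y : (ℝ ∙ (u : E))ᗮ) (s : ℝ) :
    ‖(y : E) + s • (u : E)‖ ^ 2 = ‖y‖ ^ 2 + s ^ 2 := by
  have hyu : ⟪(u : E), (y : E)⟫ = 0 := Submodule.mem_orthogonal_singleton_iff_inner_right.1 y.2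
  rw [norm_add_sq_real, norm_smul, inner_smul_right, real_inner_comm, hyu, norm_eq_of_mem_sphere]
  simp

/-- The unit sphere of `uᗮ`; in `ℝ³`, a copy of the great circle `γ(u)`. -/
abbrev OrthogonalSphere (u : sphere (0 : E) 1) : Type _ := sphere (0 : (ℝ ∙ (u : E))ᗮ) 1

/-- The similarity `v ↦ √(1 - s²) v + s u` of the unit sphere of `uᗮ` onto the section of the unit
sphere at height `s` above `uᗮ`; in `ℝ³` this section is the circle `γ(u, s)`. -/
def parallel (u : sphere (0 : E) 1) (s : Icc (-1 : ℝ) 1) (v : OrthogonalSphere u) :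
    sphere (0 : E) 1 :=
  ⟨((√(1 - (s : ℝ) ^ 2) • (v : (ℝ ∙ (u : E))ᗮ) : (ℝ ∙ (u : E))ᗮ) : E) + (s : ℝ) • (u : E), by
    have hs : 0 ≤ 1 - (s : ℝ) ^ 2 := by nlinarith [s.2.1, s.2.2]
    rw [mem_sphere_zero_iff_norm, ← pow_eq_one_iff_of_nonneg (norm_nonneg _) two_ne_zero,
      norm_add_smul_sq_of_mem_orthogonal, norm_smul, norm_eq_of_mem_sphere v, mul_one,
      Real.norm_eq_abs, sq_abs, Real.sq_sqrt hs, sub_add_cancel]⟩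

variable (u : sphere (0 : E) 1) (s : Icc (-1 : ℝ) 1)

theorem continuous_uncurry_parallel : Continuous (Function.uncurry (parallel u)) := by
  unfold parallel Function.uncurry
  fun_prop

theorem dist_parallel (v w : OrthogonalSphere u) :
    dist (parallel u s v) (parallel u s w) = √(1 - (s : ℝ) ^ 2) * dist v w := by
  simp only [parallel, Subtype.dist_eq, dist_add_right, Submodule.coe_smul, dist_smul₀,
    Real.norm_of_nonneg (Real.sqrt_nonneg _)]

theorem lipschitzWith_parallel :
    LipschitzWith ⟨√(1 - (s : ℝ) ^ 2), Real.sqrt_nonneg _⟩ (parallel u s) :=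
  .of_dist_le_mul fun v w => (dist_parallel u s v w).le

theorem isometry_parallel_zero : Isometry (parallel u ⟨0, by norm_num⟩) :=
  Isometry.of_dist_eq fun v w => by simp [dist_parallel]

theorem range_parallel [Nontrivial (ℝ ∙ (u : E))ᗮ] :
    range (parallel u s) = {x : sphere (0 : E) 1 | ⟪(u : E), (x : E)⟫ = s} := by
  ext x
  constructor
  · rintro ⟨v, rfl⟩
    have hv : ⟪(u : E), ((v : (ℝ ∙ (u : E))ᗮ) : E)⟫ = 0 :=
      Submodule.mem_orthogonal_singleton_iff_inner_right.1 v.1.2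
    simp [parallel, inner_add_right, inner_smul_right, hv]
  · intro hx
    have hy : (x : E) - (s : ℝ) • (u : E) ∈ (ℝ ∙ (u : E))ᗮ := by
      rw [Submodule.mem_orthogonal_singleton_iff_inner_right, inner_sub_right, inner_smul_right, hx]
      simp
    let y : (ℝ ∙ (u : E))ᗮ := ⟨_, hy⟩
    have hy_norm : ‖y‖ = √(1 - (s : ℝ) ^ 2) := by
      have h := norm_add_smul_sq_of_mem_orthogonal u y s
      rw [sub_add_cancel, norm_eq_of_mem_sphere] at h
      rw [← Real.sqrt_sq (norm_nonneg y)]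
      congr 1
      linarith
    have hy_mem : y ∈ √(1 - (s : ℝ) ^ 2) • sphere (0 : (ℝ ∙ (u : E))ᗮ) 1 := by
      rw [_root_.smul_sphere _ _ zero_le_one, smul_zero, mul_one, mem_sphere_zero_iff_norm,
        Real.norm_of_nonneg (Real.sqrt_nonneg _), hy_norm]
    obtain ⟨v, hv, hvy⟩ := hy_mem
    refine ⟨⟨v, hv⟩, Subtype.ext ?_⟩
    change ((√(1 - (s : ℝ) ^ 2) • v : (ℝ ∙ (u : E))ᗮ) : E) + (s : ℝ) • (u : E) = x
    rw [show √(1 - (s : ℝ) ^ 2) • v = y from hvy, sub_add_cancel]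

end Parallel

section CircleLength

variable (u : Sph)

theorem finrank_orthogonal_span_sph : finrank ℝ (ℝ ∙ (u : E3))ᗮ = 2 :=
  Submodule.finrank_orthogonal_span_singleton (ne_zero_of_mem_unit_sphere u)

instance : Nontrivial (ℝ ∙ (u : E3))ᗮ :=
  nontrivial_of_finrank_pos (R := ℝ) (by simp [finrank_orthogonal_span_sph])

instance : IsFiniteMeasure (μH[1] : Measure (OrthogonalSphere u)) :=
  ⟨(hausdorffMeasure_univ_unitCircle_le (finrank_orthogonal_span_sph u)).trans_lt
    ENNReal.ofReal_lt_top⟩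

theorem hausdorffMeasure_real_univ_orthogonalSphere_le :
    (μH[1] : Measure (OrthogonalSphere u)).real univ ≤ 2 * π :=
  ENNReal.toReal_le_of_le_ofReal Real.two_pi_pos.le
    (hausdorffMeasure_univ_unitCircle_le (finrank_orthogonal_span_sph u))

variable {f : Sph → ℝ} (hf : Continuous f)

include hf

theorem lineInt_eq_integral_parallel_zero :
    lineInt f u = ∫ v, f (parallel u ⟨0, by norm_num⟩ v) ∂μH[1] := by
  have hiso := isometry_parallel_zero u
  rw [← integral_map hiso.continuous.aemeasurable hf.aestronglyMeasurable,
    hiso.map_hausdorffMeasure (Or.inl zero_le_one), range_parallel]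
  rfl

theorem integrable_comp_parallel (s : Icc (-1 : ℝ) 1) :
    Integrable (fun v => f (parallel u s v)) μH[1] :=
  (hf.comp (lipschitzWith_parallel u s).continuous).integrable_of_hasCompactSupport
    (.of_compactSpace _)

theorem continuous_integral_parallel :
    Continuous fun s : Icc (-1 : ℝ) 1 => ∫ v, f (parallel u s v) ∂μH[1] := by
  simpa only [Measure.restrict_univ] using
    continuous_parametric_integral_of_continuous (f := fun s v => f (parallel u s v))
      (μ := μH[1]) (hf.comp (continuous_uncurry_parallel u)) isCompact_univ

theorem circleLen_sq_le (hf₀ : 0 ≤ f) (s : Icc (-1 : ℝ) 1) :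
    circleLen (fun x => f x ^ 2) u s ≤
      √(1 - (s : ℝ) ^ 2) * ∫ v, f (parallel u s v) ∂μH[1] := by
  have h := setIntegral_hausdorffMeasure_le_of_lipschitzWith (lipschitzWith_parallel u s)
    zero_le_one (range_parallel u s).ge hf.measurable hf₀ (integrable_comp_parallel u hf s)
  rw [Real.rpow_one] at h
  simpa only [circleLen, Real.sqrt_sq (hf₀ _)] using! h

theorem circleLen_one_add_mul_sq_le {t : ℝ} (ht : ∀ x, 0 ≤ 1 + t * f x) (s : Icc (-1 : ℝ) 1) :
    circleLen (fun x => (1 + t * f x) ^ 2) u s ≤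
      √(1 - (s : ℝ) ^ 2) * (μH[1] : Measure (OrthogonalSphere u)).real univ +
        t * (√(1 - (s : ℝ) ^ 2) * ∫ v, f (parallel u s v) ∂μH[1]) := by
  refine (circleLen_sq_le u (by fun_prop) ht s).trans_eq ?_
  rw [integral_add (integrable_const 1) ((integrable_comp_parallel u hf s).const_mul t),
    integral_const, integral_const_mul, smul_eq_mul]
  ring

end CircleLength

theorem eq_zero_of_sqrt_one_sub_sq_mul_eq {s L C : ℝ} (hC : 0 < C) (hL : L ≤ C)
    (h : √(1 - s ^ 2) * L = C) : s = 0 := by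
  have hsqrt : 1 ≤ √(1 - s ^ 2) := by
    by_contra! hlt
    nlinarith [mul_le_mul_of_nonneg_left hL (Real.sqrt_nonneg (1 - s ^ 2))]
  have hsq : 1 ≤ 1 - s ^ 2 := Real.one_le_sqrt.1 hsqrt
  exact pow_eq_zero_iff two_ne_zero |>.1 (le_antisymm (by linarith) (sq_nonneg s))

theorem circles_short_for_positive_t_general {f : Sph → ℝ} (hf : Continuous f) (u₀ : Sph)
    (hneg : lineInt f u₀ < 0) :
    ∀ᶠ t : ℝ in 𝓝[>] 0, ∀ s ∈ Icc (-1 : ℝ) 1,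
      circleLen (fun x => (1 + t * f x) ^ 2) u₀ s < 2 * π := by
  have hL := hausdorffMeasure_real_univ_orthogonalSphere_le u₀
  have hI := continuous_integral_parallel u₀ hf
  rw [lineInt_eq_integral_parallel_zero u₀ hf] at hneg
  have hfactor_pos : ∀ᶠ t : ℝ in 𝓝[>] 0, ∀ x, -1 + t * -f x < 0 :=
    eventually_forall_add_mul_lt continuous_const hf.neg (by simp) (by simp)
  have hbound : ∀ᶠ t : ℝ in 𝓝[>] 0, ∀ s : Icc (-1 : ℝ) 1,
      √(1 - (s : ℝ) ^ 2) * (μH[1] : Measure (OrthogonalSphere u₀)).real univ +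
        t * (√(1 - (s : ℝ) ^ 2) * ∫ v, f (parallel u₀ s v) ∂μH[1]) < 2 * π := by
    refine eventually_forall_add_mul_lt (by fun_prop) (by fun_prop) (fun s => ?_) fun s hs => ?_
    · have hsqrt : √(1 - (s : ℝ) ^ 2) ≤ 1 := Real.sqrt_le_one.2 (by simp [sq_nonneg])
      exact (mul_le_of_le_one_left measureReal_nonneg hsqrt).trans hL
    · obtain rfl : s = ⟨0, by norm_num⟩ :=
        Subtype.ext (eq_zero_of_sqrt_one_sub_sq_mul_eq Real.two_pi_pos hL hs)
      simpa using hneg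
  filter_upwards [hfactor_pos, hbound] with t hpos hlt s hs
  exact (circleLen_one_add_mul_sq_le u₀ hf (fun x => by linarith [hpos x]) ⟨s, hs⟩).trans_lt
    (hlt ⟨s, hs⟩)

end Development

/-- If `f` has mean zero, `g_t = (1+tf)²·g₀` is defined for `|t| < a` and
`∫_{γ(u₀)} f dl < 0`, then there is `α₀ ∈ (0, a)` such that for all `t ∈ (0, α₀)` and all
`s ∈ [-1, 1]`, the `g_t`-length of `γ(u₀, s)` is `< 2π`. -/
theorem circles_short_for_positive_t (f : Sph → ℝ) (hf : SmoothSph f)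
    (hmean : ∫ x, f x ∂(μH[2] : Measure Sph) = 0)
    (a : ℝ) (ha : 0 < a)
    (hdef : ∀ t : ℝ, |t| < a → ∀ x, 0 < 1 + t * f x)
    (u₀ : Sph) (hneg : lineInt f u₀ < 0) :
    ∃ α₀ : ℝ, 0 < α₀ ∧ α₀ < a ∧ ∀ t : ℝ, 0 < t → t < α₀ →
      ∀ s ∈ Set.Icc (-1 : ℝ) 1,
        circleLen (fun x => (1 + t * f x) ^ 2) u₀ s < 2 * π := by
  obtain ⟨α₀, hα₀, hshort⟩ := (mem_nhdsGT_iff_exists_mem_Ioc_Ioo_subset (half_pos ha)).1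
    (circles_short_for_positive_t_general hf.continuous u₀ hneg)
  exact ⟨α₀, hα₀.1, hα₀.2.trans_lt (half_lt_self ha), fun t ht₀ ht => hshort ⟨ht₀, ht⟩⟩

end
end
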